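/- arXiv:1712.07338 — 7 statements merged into one kernel-verified Lean document; each statement's English description precedes it below -/
import Mathlib

section
/- Let m be an odd positive integer with m ≡ 4 (mod 15), and let n ≥ 3 be an odd integer. Then 3 divides the class number of the real quadratic field ℚ(√(3(2m^{3n} − 1))). -/
/-!
Put `q = m ^ n`. A root of `(X - q)² (X + 2q) = 2` generates a cyclic cubic extension `L` of
`K = ℚ(√(3 (2q³ - 1)))`, and `L / K` is unramified: an inertia element of order `3` permutes the
roots cyclically, so the three roots would be congruent modulo its prime, and so would the three
integers `θ² / 3`, with `θ` a root; the values of their symmetric functions exclude this.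

An unramified cyclic extension `L / K` of odd prime degree `p`, where `K` has no nontrivial `p`-th
root of unity, makes `p` divide the class number. If `σ` generates the Galois group, comparing unit
ranks gives a unit `η` of norm one that is not of the form `u / σ u` with `u` a unit. By Hilbert
90, `η = a / σ a` for some integer `a`, whose ideal is then Galois-invariant. Since `L / K` is
unramified, this ideal comes from an ideal of `K`, which is not principal but whose `p`-th power
is, by taking norms.
-/

open Polynomial Module NumberField

section InvariantIdeals

open TensorProduct Pointwise

variable {R S G : Type*} [CommRing R] [CommRing S] [Algebra R S] [Group G]
  [MulSemiringAction G S] [SMulCommClass G R S]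

theorem productMap_toAlgHom_elem_eq_zero [IsDomain S] [FaithfulSMul G S]
    [Algebra.FormallyUnramified R S] [Algebra.EssFiniteType R S] {g : G} (hg : g ≠ 1) :
    Algebra.TensorProduct.productMap (AlgHom.id R S) (MulSemiringAction.toAlgHom R S g)
      (Algebra.FormallyUnramified.elem R S) = 0 := by
  obtain ⟨s, hs⟩ : ∃ s : S, g • s ≠ s := by
    by_contra! h
    exact hg (FaithfulSMul.eq_of_smul_eq_smul fun s ↦ by rw [h, one_smul])
  have key := congrArg
    (Algebra.TensorProduct.productMap (AlgHom.id R S) (MulSemiringAction.toAlgHom R S g))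
    (Algebra.FormallyUnramified.one_tmul_mul_elem (R := R) s)
  simp only [map_mul, Algebra.TensorProduct.productMap_apply_tmul, map_one, one_mul, mul_one,
    AlgHom.id_apply, MulSemiringAction.toAlgHom_apply] at key
  exact (mul_eq_mul_right_iff.mp key).resolve_left hs

theorem productMap_toAlgHom_one_elem
    [Algebra.FormallyUnramified R S] [Algebra.EssFiniteType R S] :
    Algebra.TensorProduct.productMap (AlgHom.id R S) (MulSemiringAction.toAlgHom R S (1 : G))
      (Algebra.FormallyUnramified.elem R S) = 1 := by
  rw [← Algebra.FormallyUnramified.lmul_elem (R := R) (S := S), Algebra.TensorProduct.lmul',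
    show MulSemiringAction.toAlgHom R S (1 : G) = AlgHom.id R S from AlgHom.ext (one_smul G)]
  rfl

theorem sum_productMap_mul_smul_mem_map_comap [Fintype G] [Algebra.IsInvariant R S G]
    {I : Ideal S} (hI : ∀ g : G, g • I = I) {z : S} (hz : z ∈ I) (t : S ⊗[R] S) :
    ∑ g : G, Algebra.TensorProduct.productMap (AlgHom.id R S)
      (MulSemiringAction.toAlgHom R S g) t * g • z ∈
      (I.comap (algebraMap R S)).map (algebraMap R S) := by
  induction t with
  | zero => simp
  | add t₁ t₂ h₁ h₂ =>
    simpa only [map_add, add_mul, Finset.sum_add_distrib] using add_mem h₁ h₂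
  | tmul x y =>
    obtain ⟨r, hr⟩ := Algebra.IsInvariant.isInvariant (A := R) (G := G) (∑ g : G, g • (y * z))
      fun h ↦ by
        rw [Finset.smul_sum]
        simpa only [smul_smul] using
          Fintype.sum_equiv (Equiv.mulLeft h) (fun g ↦ (h * g) • (y * z)) _ fun _ ↦ rfl
    have hrI : r ∈ I.comap (algebraMap R S) := by
      rw [Ideal.mem_comap, hr]
      exact sum_mem fun g _ ↦ hI g ▸
        Ideal.smul_mem_pointwise_smul g _ I (I.mul_mem_left y hz)
    have hsum : ∑ g : G, Algebra.TensorProduct.productMap (AlgHom.id R S)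
        (MulSemiringAction.toAlgHom R S g) (x ⊗ₜ[R] y) * g • z = x * algebraMap R S r := by
      simp only [hr, Finset.mul_sum, Algebra.TensorProduct.productMap_apply_tmul, smul_mul',
        AlgHom.id_apply, MulSemiringAction.toAlgHom_apply, mul_assoc]
    rw [hsum]
    exact Ideal.mul_mem_left _ x (Ideal.mem_map_of_mem _ hrI)

-- If `∑ xᵢ ⊗ yᵢ` is the separability idempotent of `S ⊗[R] S`, then `z = ∑ xᵢ * Tr (yᵢ * z)` for
-- every `z`, and these traces lie in `I ∩ R` when `z ∈ I`.
theorem map_comap_eq_of_smul_eq [IsDomain S] [Finite G] [FaithfulSMul G S]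
    [Algebra.IsInvariant R S G] [Algebra.FormallyUnramified R S] [Algebra.EssFiniteType R S]
    {I : Ideal S} (hI : ∀ g : G, g • I = I) :
    (I.comap (algebraMap R S)).map (algebraMap R S) = I := by
  have := Fintype.ofFinite G
  refine le_antisymm Ideal.map_comap_le fun z hz ↦ ?_
  have hmem := sum_productMap_mul_smul_mem_map_comap (R := R) hI hz
    (Algebra.FormallyUnramified.elem R S)
  rwa [Fintype.sum_eq_single 1 fun g hg ↦ by
    rw [productMap_toAlgHom_elem_eq_zero hg, zero_mul], productMap_toAlgHom_one_elem,
    one_smul, one_mul] at hmem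

end InvariantIdeals

section Hilbert90

variable {S G : Type*} [CommRing S] [IsDomain S] [Group G] [MulSemiringAction G S]
  [FaithfulSMul G S]

theorem linearIndependent_pow_smul (σ : G) :
    LinearIndependent S fun (i : Fin (orderOf σ)) (x : S) ↦ σ ^ (i : ℕ) • x := by
  refine (linearIndependent_monoidHom S S).comp
    (fun i : Fin (orderOf σ) ↦ MulDistribMulAction.toMonoidHom S (σ ^ (i : ℕ))) fun i j hij ↦ ?_
  have hpow : σ ^ (i : ℕ) = σ ^ (j : ℕ) :=
    FaithfulSMul.eq_of_smul_eq_smul fun x ↦ DFunLike.congr_fun hij x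
  exact Fin.ext (pow_injOn_Iio_orderOf i.2 j.2 hpow)

open Finset in
theorem exists_mul_smul_eq_self_of_prod_eq_one {σ : G} (hσ : IsOfFinOrder σ) {η : S}
    (hη : ∏ i ∈ range (orderOf σ), σ ^ i • η = 1) : ∃ a : S, a ≠ 0 ∧ η * σ • a = a := by
  let c (i : ℕ) : S := ∏ j ∈ range i, σ ^ j • η
  have hc (i : ℕ) : η * σ • c i = c (i + 1) := by
    simp only [c, smul_prod', prod_range_succ', smul_smul, ← pow_succ', pow_zero, one_smul,
      mul_comm η]
  obtain ⟨x, hx⟩ : ∃ x : S, ∑ i ∈ range (orderOf σ), c i * σ ^ i • x ≠ 0 := by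
    by_contra! hzero
    have hcoeff := Fintype.linearIndependent_iff.mp (linearIndependent_pow_smul (S := S) σ)
      (fun i ↦ c i) (funext fun x ↦ by
        simpa [← sum_range fun i ↦ c i * σ ^ i • x] using hzero x) ⟨0, hσ.orderOf_pos⟩
    simp [c] at hcoeff
  refine ⟨_, hx, ?_⟩
  calc η * σ • ∑ i ∈ range (orderOf σ), c i * σ ^ i • x
      = ∑ i ∈ range (orderOf σ), c (i + 1) * σ ^ (i + 1) • x := by
        simp only [smul_sum, mul_sum, smul_mul', smul_smul, ← pow_succ', ← mul_assoc, hc]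
    _ = ∑ i ∈ range (orderOf σ), c i * σ ^ i • x := by
        rw [← add_right_cancel_iff (a := c 0 * σ ^ 0 • x),
          ← sum_range_succ' (fun i ↦ c i * σ ^ i • x), sum_range_succ]
        simp only [c, hη, prod_range_zero, pow_orderOf_eq_one, pow_zero]

end Hilbert90

section Capitulation

open Pointwise

variable {R S G : Type*} [CommRing R] [IsDedekindDomain R] [CommRing S] [IsDedekindDomain S]
  [Algebra R S] [Module.Finite R S] [Module.IsTorsionFree R S] [Algebra.FormallyUnramified R S]
  [Group G] [Finite G] [MulSemiringAction G S] [SMulCommClass G R S] [FaithfulSMul G S]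
  [Algebra.IsInvariant R S G]

theorem exists_not_isPrincipal_isPrincipal_pow_finrank {σ : G}
    (hσ : ∀ g : G, g ∈ Subgroup.zpowers σ) {η : Sˣ}
    (hη : ∏ i ∈ Finset.range (orderOf σ), σ ^ i • (η : S) = 1)
    (hη' : ∀ u : Sˣ, (η : S) * σ • (u : S) ≠ u) :
    ∃ I : Ideal R, I ≠ ⊥ ∧ ¬ I.IsPrincipal ∧ (I ^ Module.finrank R S).IsPrincipal := by
  obtain ⟨a, ha₀, ha⟩ := exists_mul_smul_eq_self_of_prod_eq_one (isOfFinOrder_of_finite σ) hη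
  have hσa : σ • Ideal.span {a} = Ideal.span {a} := by
    rw [Ideal.smul_closure, Set.smul_set_singleton, Ideal.span_singleton_eq_span_singleton]
    exact ⟨η, by rw [mul_comm, ha]⟩
  have hmap := map_comap_eq_of_smul_eq (R := R) (G := G) fun g ↦
    MulAction.mem_stabilizer_iff.mp <| Subgroup.zpowers_le_of_mem
      (MulAction.mem_stabilizer_iff.mpr hσa) (hσ g)
  set I := (Ideal.span {a}).comap (algebraMap R S)
  refine ⟨I, ?_, ?_, ?_⟩
  · rintro hI
    rw [hI, Ideal.map_bot, eq_comm, Ideal.span_singleton_eq_bot] at hmap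
    exact ha₀ hmap
  · rintro ⟨r, hr⟩
    rw [show I = Ideal.span {r} from hr, Ideal.map_span, Set.image_singleton,
      Ideal.span_singleton_eq_span_singleton] at hmap
    obtain ⟨u, hu⟩ := hmap
    refine hη' u (mul_left_cancel₀ (left_ne_zero_of_mul (hu ▸ ha₀)) ?_)
    rwa [← hu, smul_mul', smul_algebraMap, mul_left_comm] at ha
  · rw [← Ideal.relNorm_algebraMap S, hmap, Ideal.relNorm_singleton]
    exact ⟨_, rfl⟩

theorem prime_dvd_card_classGroup {R : Type*} [CommRing R] [IsDedekindDomain R]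
    {p : ℕ} [Fact p.Prime] {I : Ideal R} (hI₀ : I ≠ ⊥) (hI : ¬ I.IsPrincipal)
    (hIp : (I ^ p).IsPrincipal) : p ∣ Nat.card (ClassGroup R) := by
  have hI' : I ∈ nonZeroDivisors (Ideal R) := mem_nonZeroDivisors_iff_ne_zero.mpr hI₀
  have horder : orderOf (ClassGroup.mk0 ⟨I, hI'⟩) = p := by
    refine orderOf_eq_prime ?_ (mt (ClassGroup.mk0_eq_one_iff hI').mp hI)
    rw [← map_pow]
    exact (ClassGroup.mk0_eq_one_iff (pow_mem hI' p)).mpr hIp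
  exact horder ▸ orderOf_dvd_natCard _

end Capitulation

section UnitIndex

theorem index_range_pow_dvd {R M : Type*} [Ring R] [AddCommGroup M] [Module R M]
    (φ : Module.End R M) (k : ℕ) :
    (φ ^ k).toAddMonoidHom.range.index ∣ φ.toAddMonoidHom.range.index ^ k := by
  induction k with
  | zero => simpa using AddMonoidHom.range_eq_top.mpr fun x ↦ ⟨x, rfl⟩
  | succ k ih =>
    have hrange : (φ ^ (k + 1)).toAddMonoidHom.range =
        (φ ^ k).toAddMonoidHom.range.map φ.toAddMonoidHom := by
      rw [pow_succ', AddMonoidHom.map_range]; rfl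
    rw [hrange, AddSubgroup.index_map, pow_succ]
    exact mul_dvd_mul_right ((AddSubgroup.index_dvd_of_le le_sup_left).trans ih) _

theorem exists_X_sub_one_pow_eq_sum_add (p : ℕ) [hp : Fact p.Prime] :
    ∃ g : ℤ[X], (X - 1) ^ (p - 1) = ∑ i ∈ Finset.range p, X ^ i + (p : ℤ[X]) * g := by
  have hmod : ((X - 1) ^ (p - 1) : (ZMod p)[X]) = ∑ i ∈ Finset.range p, X ^ i := by
    apply mul_right_cancel₀ (X_sub_C_ne_zero (1 : ZMod p))
    rw [map_one, geom_sum_mul, ← pow_succ, Nat.sub_add_cancel hp.out.one_le, sub_pow_char, one_pow]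
  have hdvd : C (p : ℤ) ∣ (X - 1) ^ (p - 1) - ∑ i ∈ Finset.range p, X ^ i := by
    rw [C_dvd_iff_dvd_coeff]
    intro i
    rw [← ZMod.intCast_zmod_eq_zero_iff_dvd]
    have := congrArg (coeff · i) (sub_eq_zero.mpr hmod)
    rw [← eq_intCast (Int.castRingHom (ZMod p)), ← coeff_map]
    simpa [Polynomial.map_sum] using this
  obtain ⟨g, hg⟩ := hdvd
  exact ⟨g, by rw [← sub_eq_iff_eq_add', hg, C_eq_natCast]⟩

theorem map_range_nsmul_of_surjective {M N : Type*} [AddCommGroup M] [AddCommGroup N]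
    {π : M →+ N} (hπ : Function.Surjective π) (n : ℕ) :
    (nsmulAddMonoidHom (α := M) n).range.map π = (nsmulAddMonoidHom (α := N) n).range := by
  ext y
  simp only [AddSubgroup.mem_map, AddMonoidHom.mem_range, nsmulAddMonoidHom_apply,
    exists_exists_eq_and, map_nsmul, hπ.exists]

theorem pow_finrank_dvd_index_range_nsmul (M : Type*) [AddCommGroup M] [Module.Finite ℤ M]
    (n : ℕ) : n ^ finrank ℤ M ∣ (nsmulAddMonoidHom (α := M) n).range.index := by
  let π : M →+ M ⧸ Submodule.torsion ℤ M := (Submodule.torsion ℤ M).mkQ.toAddMonoidHom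
  have hπ : Function.Surjective π := Submodule.mkQ_surjective _
  rw [← finrank_quotient_eq_of_le_torsion le_rfl, ← AddSubgroup.index_range_nsmul,
    ← map_range_nsmul_of_surjective hπ]
  exact AddSubgroup.index_map_dvd _ hπ

theorem index_range_nsmul_of_torsion_le {M : Type*} [AddCommGroup M] [Module.Finite ℤ M] {n : ℕ}
    (h : (Submodule.torsion ℤ M).toAddSubgroup ≤ (nsmulAddMonoidHom (α := M) n).range) :
    (nsmulAddMonoidHom (α := M) n).range.index = n ^ finrank ℤ M := by
  let π : M →+ M ⧸ Submodule.torsion ℤ M := (Submodule.torsion ℤ M).mkQ.toAddMonoidHom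
  have hπ : Function.Surjective π := Submodule.mkQ_surjective _
  have hker : π.ker = (Submodule.torsion ℤ M).toAddSubgroup := by
    ext x
    exact Submodule.Quotient.mk_eq_zero _
  rw [← finrank_quotient_eq_of_le_torsion le_rfl, ← AddSubgroup.index_range_nsmul,
    ← map_range_nsmul_of_surjective hπ, AddSubgroup.index_map_eq _ hπ (hker.trans_le h)]

theorem pow_finrank_dvd_index_range_sub_one_pow {M : Type*} [AddCommGroup M] [Module.Finite ℤ M]
    {p : ℕ} [Fact p.Prime] {τ : Module.End ℤ M} (hτ : ∑ i ∈ Finset.range p, τ ^ i = 0) :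
    p ^ finrank ℤ M ∣ (τ - 1).toAddMonoidHom.range.index ^ (p - 1) := by
  obtain ⟨g, hg⟩ := exists_X_sub_one_pow_eq_sum_add p
  have hpow : (τ - 1) ^ (p - 1) = p * aeval τ g := by
    simpa [hτ] using congrArg (aeval τ) hg
  have hle : ((τ - 1) ^ (p - 1)).toAddMonoidHom.range ≤
      (nsmulAddMonoidHom (α := M) p).range := by
    rintro _ ⟨x, rfl⟩
    exact ⟨aeval τ g x, by simp [hpow]⟩
  exact ((pow_finrank_dvd_index_range_nsmul M p).trans (AddSubgroup.index_dvd_of_le hle)).trans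
    (index_range_pow_dvd _ _)

variable {A E : Type*} [AddCommGroup A] [AddCommGroup E]

theorem index_ker_sup_range_dvd {j : A →+ E} {ν : E →+ A} {n : ℕ} (hνj : ∀ a, ν (j a) = n • a) :
    (ν.ker ⊔ j.range).index ∣ (nsmulAddMonoidHom (α := A) n).range.index := by
  have hle : (nsmulAddMonoidHom (α := A) n).range.comap ν ≤ ν.ker ⊔ j.range := by
    rintro x ⟨a, ha⟩
    have hker : x - j a ∈ ν.ker := by
      rw [AddMonoidHom.mem_ker, map_sub, hνj, ← ha, nsmulAddMonoidHom_apply, sub_self]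
    exact AddSubgroup.mem_sup.mpr ⟨x - j a, hker, j a, ⟨a, rfl⟩, sub_add_cancel x (j a)⟩
  refine (AddSubgroup.index_dvd_of_le hle).trans ?_
  rw [AddSubgroup.index_comap]
  exact AddSubgroup.relIndex_dvd_index_of_normal _ _

theorem relIndex_map_range_eq_index_sup (φ : E →+ E) :
    (φ.range.map φ).relIndex φ.range = (φ.range ⊔ φ.ker).index := by
  conv_lhs => enter [2]; rw [AddMonoidHom.range_eq_map]
  rw [AddSubgroup.relIndex_map_map, top_sup_eq, AddSubgroup.relIndex_top_right]

theorem pow_finrank_ker_dvd_index_pow [Module.Finite ℤ E] {p : ℕ} [Fact p.Prime]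
    {σ : Module.End ℤ E} {j : A →ₗ[ℤ] E} {ν : E →ₗ[ℤ] A} (hσj : ∀ a, σ (j a) = j a)
    (hνσ : ∀ x, ν (σ x) = ν x) (hνj : ∀ a, ν (j a) = p • a)
    (hjν : ∀ x, j (ν x) = ∑ i ∈ Finset.range p, (σ ^ i) x)
    (hker : LinearMap.ker ν ≤ LinearMap.range (σ - 1)) :
    p ^ finrank ℤ (LinearMap.ker ν) ∣ (nsmulAddMonoidHom (α := A) p).range.index ^ (p - 1) := by
  let τ : Module.End ℤ (LinearMap.ker ν) := σ.restrict fun x hx ↦ by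
    rwa [LinearMap.mem_ker, hνσ]
  have hτ : ∑ i ∈ Finset.range p, τ ^ i = 0 := by
    ext x
    simpa only [τ, LinearMap.sum_apply, AddSubmonoidClass.coe_finsetSum, Module.End.pow_restrict _,
      LinearMap.coe_restrict_apply, LinearMap.mem_ker.mp x.2, map_zero, LinearMap.zero_apply,
      ZeroMemClass.coe_zero] using (hjν x).symm
  have hrange : (σ - 1).toAddMonoidHom.range = ν.toAddMonoidHom.ker := by
    refine le_antisymm ?_ hker
    rintro _ ⟨x, rfl⟩
    simp [hνσ]
  have hindex : (τ - 1).toAddMonoidHom.range.index =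
      (ν.toAddMonoidHom.ker ⊔ (σ - 1).toAddMonoidHom.ker).index := by
    rw [← hrange, ← relIndex_map_range_eq_index_sup, hrange, AddSubgroup.relIndex]
    congr 1
    ext x
    exact ⟨fun ⟨y, hy⟩ ↦ ⟨y, y.2, congrArg Subtype.val hy⟩,
      fun ⟨y, hy, hyx⟩ ↦ ⟨⟨y, hy⟩, Subtype.ext hyx⟩⟩
  refine (pow_finrank_dvd_index_range_sub_one_pow hτ).trans (pow_dvd_pow_of_dvd ?_ _)
  rw [hindex]
  refine .trans (AddSubgroup.index_dvd_of_le (sup_le_sup_left ?_ _))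
    (index_ker_sup_range_dvd (j := j.toAddMonoidHom) (ν := ν.toAddMonoidHom) hνj)
  rintro _ ⟨a, rfl⟩
  simp [hσj]

end UnitIndex

section UnitMaps

variable (K L : Type*) [Field K] [Field L] [Algebra K L]

/-- The inclusion of unit groups `(𝓞 K)ˣ → (𝓞 L)ˣ`, written additively so that ranks
and indices can be computed with `ℤ`-linear algebra. -/
noncomputable def unitsIncl : Additive (𝓞 K)ˣ →ₗ[ℤ] Additive (𝓞 L)ˣ :=
  (Units.map (algebraMap (𝓞 K) (𝓞 L)).toMonoidHom).toAdditive.toIntLinearMap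

/-- The relative norm of unit groups `(𝓞 L)ˣ → (𝓞 K)ˣ`, written additively. -/
noncomputable def unitsNorm : Additive (𝓞 L)ˣ →ₗ[ℤ] Additive (𝓞 K)ˣ :=
  (Units.map (RingOfIntegers.norm K)).toAdditive.toIntLinearMap

theorem unitsNorm_unitsIncl (a : Additive (𝓞 K)ˣ) :
    unitsNorm K L (unitsIncl K L a) = finrank K L • a :=
  Additive.toMul.injective <| Units.ext <| RingOfIntegers.norm_algebraMap K (a.toMul : 𝓞 K)

variable {K L}

/-- The action of a Galois automorphism on the unit group `(𝓞 L)ˣ`, written additively. -/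
noncomputable def unitsConj (σ : Gal(L/K)) : Module.End ℤ (Additive (𝓞 L)ˣ) :=
  (Units.map (MulDistribMulAction.toMonoidHom (𝓞 L) σ)).toAdditive.toIntLinearMap

theorem coe_unitsConj_pow (σ : Gal(L/K)) (i : ℕ) (u : Additive (𝓞 L)ˣ) :
    (((unitsConj σ ^ i) u).toMul : 𝓞 L) = σ ^ i • (u.toMul : 𝓞 L) := by
  induction i with
  | zero => simp
  | succ i ih =>
    rw [pow_succ', pow_succ', mul_smul, ← ih]
    rfl

theorem unitsConj_unitsIncl (σ : Gal(L/K)) (a : Additive (𝓞 K)ˣ) :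
    unitsConj σ (unitsIncl K L a) = unitsIncl K L a :=
  Additive.toMul.injective <| Units.ext <| RingOfIntegers.ext <|
    σ.commutes ((a.toMul : 𝓞 K) : K)

theorem unitsNorm_unitsConj (σ : Gal(L/K)) (x : Additive (𝓞 L)ˣ) :
    unitsNorm K L (unitsConj σ x) = unitsNorm K L x :=
  Additive.toMul.injective <| Units.ext <| RingOfIntegers.ext <|
    Algebra.norm_eq_of_algEquiv σ ((x.toMul : 𝓞 L) : L)

end UnitMaps

section Units

variable (K L : Type*) [Field K] [NumberField K] [Field L] [NumberField L] [Algebra K L]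

theorem index_range_nsmul_units {n : ℕ} (hn : (Units.torsionOrder K).Coprime n) :
    (nsmulAddMonoidHom (α := Additive (𝓞 K)ˣ) n).range.index = n ^ Units.rank K := by
  rw [index_range_nsmul_of_torsion_le, Units.finrank_eq]
  rintro ζ ⟨⟨k, hk⟩, hkζ⟩
  have hζ : ζ.toMul ∈ Units.torsion K :=
    isOfFinOrder_iff_zpow_eq_one.mpr ⟨k, nonZeroDivisors.ne_zero hk, hkζ⟩
  obtain ⟨ξ, hξ⟩ := (powCoprime hn).surjective ⟨ζ.toMul, hζ⟩
  exact ⟨.ofMul ξ.val, congrArg (fun x ↦ Additive.ofMul x.val) hξ⟩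

theorem rank_add_one_eq_of_isUnramifiedAtInfinitePlaces [IsGalois K L]
    [IsUnramifiedAtInfinitePlaces K L] :
    Units.rank L + 1 = (Units.rank K + 1) * finrank K L := by
  rw [Units.rank, Units.rank, Nat.sub_add_cancel Fintype.card_pos,
    Nat.sub_add_cancel Fintype.card_pos, IsUnramifiedAtInfinitePlaces.card_infinitePlace K L]

theorem rank_sub_rank_le_finrank_ker_unitsNorm :
    Units.rank L - Units.rank K ≤ finrank ℤ (LinearMap.ker (unitsNorm K L)) := by
  have hadd := Submodule.finrank_quotient_add_finrank (LinearMap.ker (unitsNorm K L))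
  have hle := Submodule.finrank_le (LinearMap.range (unitsNorm K L))
  rw [(unitsNorm K L).quotKerEquivRange.finrank_eq, Units.finrank_eq] at hadd
  rw [Units.finrank_eq] at hle
  lia

variable {K L}

theorem algebraMap_norm_eq_prod_pow_smul [IsGalois K L] {σ : Gal(L/K)}
    (hσ : ∀ g, g ∈ Subgroup.zpowers σ) (x : 𝓞 L) :
    algebraMap (𝓞 K) (𝓞 L) (RingOfIntegers.norm K x) =
      ∏ i ∈ Finset.range (orderOf σ), σ ^ i • x := by
  classical
  apply RingOfIntegers.ext
  rw [RingOfIntegers.coe_algebraMap_norm, Algebra.norm_eq_prod_automorphisms,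
    ← IsCyclic.image_range_orderOf hσ,
    Finset.prod_image (by simpa [← Nat.Iio_eq_range] using pow_injOn_Iio_orderOf),
    RingOfIntegers.coe_eq_algebraMap, RingOfIntegers.coe_eq_algebraMap, map_prod]
  rfl

theorem unitsIncl_unitsNorm [IsGalois K L] {σ : Gal(L/K)} (hσ : ∀ g, g ∈ Subgroup.zpowers σ)
    (x : Additive (𝓞 L)ˣ) :
    unitsIncl K L (unitsNorm K L x) = ∑ i ∈ Finset.range (orderOf σ), (unitsConj σ ^ i) x := by
  apply Additive.toMul.injective
  ext1
  rw [toMul_sum, Units.coe_prod]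
  simp only [coe_unitsConj_pow]
  exact algebraMap_norm_eq_prod_pow_smul hσ (x.toMul : 𝓞 L)

theorem exists_norm_eq_one_forall_mul_smul_ne [IsGalois K L] {p : ℕ} [hp : Fact p.Prime]
    (hp2 : p ≠ 2) (hdeg : finrank K L = p) (htors : ¬ p ∣ Units.torsionOrder K) {σ : Gal(L/K)}
    (hσ : ∀ g, g ∈ Subgroup.zpowers σ) :
    ∃ η : (𝓞 L)ˣ, RingOfIntegers.norm K (η : 𝓞 L) = 1 ∧
      ∀ u : (𝓞 L)ˣ, (η : 𝓞 L) * σ • (u : 𝓞 L) ≠ u := by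
  by_contra! hcon
  have horder : orderOf σ = p := by
    rw [orderOf_eq_card_of_forall_mem_zpowers hσ, IsGalois.card_aut_eq_finrank, hdeg]
  have := IsUnramifiedAtInfinitePlaces_of_odd_finrank (hdeg ▸ hp.out.odd_of_ne_two hp2)
  have hker : LinearMap.ker (unitsNorm K L) ≤ LinearMap.range (unitsConj σ - 1) := by
    intro η hη
    obtain ⟨u, hu⟩ := hcon η.toMul (congrArg Units.val hη)
    refine ⟨-.ofMul u, ?_⟩
    rw [LinearMap.sub_apply, map_neg, Module.End.one_apply, sub_neg_eq_add, neg_add_eq_iff_eq_add,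
      add_comm]
    exact Additive.toMul.injective (Units.ext hu.symm)
  have hdvd := pow_finrank_ker_dvd_index_pow (unitsConj_unitsIncl σ) (unitsNorm_unitsConj σ)
    (hdeg ▸ unitsNorm_unitsIncl K L) (horder ▸ unitsIncl_unitsNorm hσ) hker
  rw [index_range_nsmul_units K ((Nat.Prime.coprime_iff_not_dvd hp.out).mpr htors).symm, ← pow_mul,
    Nat.pow_dvd_pow_iff_le_right hp.out.one_lt] at hdvd
  have hrank := rank_add_one_eq_of_isUnramifiedAtInfinitePlaces K L
  have hsub := rank_sub_rank_le_finrank_ker_unitsNorm K L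
  obtain ⟨k, rfl⟩ : ∃ k, p = k + 1 := ⟨p - 1, by have := hp.out.pos; lia⟩
  have := hp.out.one_lt
  rw [hdeg] at hrank
  simp only [Nat.add_sub_cancel] at hdvd
  nlinarith [Nat.le_add_of_sub_le hsub]

theorem prime_dvd_classNumber_of_formallyUnramified [IsGalois K L] {p : ℕ} [hp : Fact p.Prime]
    (hp2 : p ≠ 2) (hdeg : finrank K L = p) (htors : ¬ p ∣ Units.torsionOrder K)
    [Algebra.FormallyUnramified (𝓞 K) (𝓞 L)] : p ∣ classNumber K := by
  have : IsCyclic Gal(L/K) :=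
    isCyclic_of_prime_card ((IsGalois.card_aut_eq_finrank K L).trans hdeg)
  have : FaithfulSMul Gal(L/K) (𝓞 L) := ⟨fun {g₁ g₂} h ↦ by
    refine AlgEquiv.ext fun x ↦ ?_
    obtain ⟨y, z, -, rfl⟩ := IsFractionRing.div_surjective (A := 𝓞 L) x
    rw [map_div₀, map_div₀]
    exact congrArg₂ (· / ·) (congrArg RingOfIntegers.val (h y)) (congrArg RingOfIntegers.val (h z))⟩
  obtain ⟨σ, hσ⟩ := IsCyclic.exists_generator (α := Gal(L/K))
  obtain ⟨η, hη, hη'⟩ := exists_norm_eq_one_forall_mul_smul_ne hp2 hdeg htors hσ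
  obtain ⟨I, hI₀, hI, hIp⟩ := exists_not_isPrincipal_isPrincipal_pow_finrank (R := 𝓞 K) hσ
    (by rw [← algebraMap_norm_eq_prod_pow_smul hσ, hη, map_one]) hη'
  rw [← IsFractionRing.finrank_eq (𝓞 K) K (𝓞 L) L, hdeg] at hIp
  rw [classNumber, ← Nat.card_eq_fintype_card]
  exact prime_dvd_card_classGroup hI₀ hI hIp

end Units

section Unramified

theorem formallyUnramified_of_forall_inertia_eq_bot {K L : Type*} [Field K] [NumberField K]
    [Field L] [NumberField L] [Algebra K L] [IsGalois K L]
    (h : ∀ P : Ideal (𝓞 L), P.IsPrime → P.inertia Gal(L/K) = ⊥) :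
    Algebra.FormallyUnramified (𝓞 K) (𝓞 L) := by
  have := IsGaloisGroup.of_isFractionRing Gal(L/K) (𝓞 K) (𝓞 L) K L
  refine Algebra.formallyUnramified_iff_forall.mpr fun ⟨P, hP⟩ ↦ ?_
  rw [← Ideal.ramificationIdx_eq_one_iff,
    ← Ideal.ramificationIdxIn_eq_ramificationIdx (P.under (𝓞 K)) P Gal(L/K),
    ← Ideal.card_inertia_eq_ramificationIdxIn (G := Gal(L/K)) _ P, h P hP, Subgroup.card_bot]

end Unramified

section FieldExtension

variable {F K : Type*} [Field F] [Field K] [Algebra F K]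

theorem isSquare_or_isSquare_or_isSquare_mul_of_finrank_eq_two [NeZero (2 : F)]
    (hdeg : finrank F K = 2) {r s : F} {α β : K} (hα : α ^ 2 = algebraMap F K r)
    (hβ : β ^ 2 = algebraMap F K s) : IsSquare r ∨ IsSquare s ∨ IsSquare (r * s) := by
  by_cases hs : IsSquare s
  · exact .inr (.inl hs)
  have hβ' : ∀ c : F, algebraMap F K c ≠ β := by
    rintro c rfl
    exact hs ⟨c, FaithfulSMul.algebraMap_injective F K (by rw [← hβ, map_mul, sq])⟩
  have hli : LinearIndependent F ![1, β] := by
    rw [LinearIndependent.pair_iff' one_ne_zero]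
    simpa [Algebra.smul_def] using hβ'
  have hα' : α ∈ Submodule.span F {1, β} := by
    rw [← Matrix.range_cons_cons_empty, hli.span_eq_top_of_card_eq_finrank (by simp [hdeg])]
    exact Submodule.mem_top
  obtain ⟨a, b, hab⟩ := Submodule.mem_span_pair.mp hα'
  have hsq : algebraMap F K (a ^ 2 + b ^ 2 * s - r) + algebraMap F K (2 * a * b) * β = 0 := by
    rw [← hab, Algebra.smul_def, Algebra.smul_def] at hα
    simp only [map_sub, map_add, map_mul, map_pow, map_ofNat]
    linear_combination hα - algebraMap F K b ^ 2 * hβ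
  obtain ⟨hr, hab0⟩ := LinearIndependent.pair_iff.mp hli (a ^ 2 + b ^ 2 * s - r) (2 * a * b)
    (by rwa [Algebra.smul_def, Algebra.smul_def, mul_one])
  rcases mul_eq_zero.mp hab0 with ha | rfl
  · rw [(mul_eq_zero_iff_left two_ne_zero).mp ha] at hr
    exact .inr (.inr ⟨b * s, by linear_combination -s * hr⟩)
  · exact .inl ⟨a, by linear_combination -hr⟩

theorem irreducible_map_of_coprime_finrank {f : F[X]} (hf : Irreducible f)
    (h : f.natDegree.Coprime (finrank F K)) : Irreducible (f.map (algebraMap F K)) := by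
  have hunit : ¬ IsUnit (f.map (algebraMap F K)) := by
    rw [isUnit_map]
    exact hf.not_isUnit
  obtain ⟨g, hg, hgf⟩ := WfDvdMonoid.exists_irreducible_factor hunit (map_ne_zero hf.ne_zero)
  have : Fact (Irreducible g) := ⟨hg⟩
  have hroot : aeval (AdjoinRoot.root g) f = 0 := by
    rw [← aeval_map_algebraMap K]
    exact (AdjoinRoot.aeval_eq _).trans <| AdjoinRoot.mk_eq_zero.mpr hgf
  have hminpoly : (minpoly F (AdjoinRoot.root g)).natDegree = f.natDegree := by
    rw [← minpoly.eq_of_irreducible hf hroot,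
      natDegree_mul_C (inv_ne_zero (leadingCoeff_ne_zero.mpr hf.ne_zero))]
  have hdvd : f.natDegree ∣ g.natDegree := by
    have halg : IsAlgebraic F (AdjoinRoot.root g) := ⟨f, hf.ne_zero, hroot⟩
    have hdvd := minpoly.degree_dvd halg.isIntegral
    rw [hminpoly, ← finrank_mul_finrank F K, (AdjoinRoot.powerBasis hg.ne_zero).finrank,
      AdjoinRoot.powerBasis_dim] at hdvd
    exact h.dvd_of_dvd_mul_left hdvd
  refine (associated_of_dvd_of_natDegree_le hgf (map_ne_zero hf.ne_zero) ?_).irreducible hg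
  exact natDegree_map_le.trans (Nat.le_of_dvd hg.natDegree_pos hdvd)

end FieldExtension

theorem exists_sq_eq_neg_three_of_three_dvd_torsionOrder {K : Type*} [Field K] [NumberField K]
    (h : 3 ∣ Units.torsionOrder K) : ∃ β : K, β ^ 2 = -3 := by
  obtain ⟨ζ, hζ⟩ := exists_prime_orderOf_dvd_card' (G := Units.torsion K) 3 h
  have hprim : IsPrimitiveRoot (((ζ : (𝓞 K)ˣ) : 𝓞 K) : K) 3 :=
    (IsPrimitiveRoot.coe_units_iff.mpr <| IsPrimitiveRoot.coe_submonoidClass_iff.mpr <|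
      hζ ▸ IsPrimitiveRoot.orderOf ζ).map_of_injective RingOfIntegers.coe_injective
  have hgeom := hprim.geom_sum_eq_zero (by norm_num)
  simp only [Finset.sum_range_succ, Finset.sum_range_zero] at hgeom
  exact ⟨2 * (((ζ : (𝓞 K)ˣ) : 𝓞 K) : K) + 1, by linear_combination 4 * hgeom⟩

section DepressedCubic

/-- The cubic polynomial `X³ - aX - b`, of discriminant `4a³ - 27b²`; if this is a nonzero
square, one root of the cubic generates its splitting field. -/
noncomputable def depressedCubic {R : Type*} [CommRing R] (a b : R) : R[X] :=
  X ^ 3 - C a * X - C b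

variable {R : Type*} [CommRing R]

theorem eval_depressedCubic (a b x : R) : (depressedCubic a b).eval x = x ^ 3 - a * x - b := by
  simp [depressedCubic]

theorem map_depressedCubic {S : Type*} [CommRing S] (φ : R →+* S) (a b : R) :
    (depressedCubic a b).map φ = depressedCubic (φ a) (φ b) := by
  simp [depressedCubic]

theorem monic_depressedCubic (a b : R) : (depressedCubic a b).Monic := by
  rw [depressedCubic]
  monicity!

theorem natDegree_depressedCubic [Nontrivial R] (a b : R) : (depressedCubic a b).natDegree = 3 := by
  rw [depressedCubic]
  compute_degree!

theorem sq_add_mul_add_sq_eq_of_isRoot [IsDomain R] {a b x y : R}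
    (hx : (depressedCubic a b).IsRoot x) (hy : (depressedCubic a b).IsRoot y) (hxy : x ≠ y) :
    x ^ 2 + x * y + y ^ 2 = a := by
  rw [IsRoot.def, eval_depressedCubic] at hx hy
  apply mul_left_cancel₀ (sub_ne_zero.mpr hxy)
  linear_combination hx - hy

theorem add_add_eq_zero_of_isRoot [IsDomain R] {a b x y z : R}
    (hx : (depressedCubic a b).IsRoot x) (hy : (depressedCubic a b).IsRoot y)
    (hz : (depressedCubic a b).IsRoot z) (hxy : x ≠ y) (hxz : x ≠ z) (hyz : y ≠ z) :
    x + y + z = 0 := by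
  apply mul_left_cancel₀ (sub_ne_zero.mpr hyz)
  linear_combination sq_add_mul_add_sq_eq_of_isRoot hx hy hxy -
    sq_add_mul_add_sq_eq_of_isRoot hx hz hxz

variable {F : Type*} [Field F]

theorem splits_depressedCubic_of_isRoot [NeZero (2 : F)] {a b x δ : F}
    (hx : (depressedCubic a b).IsRoot x) (hδ : δ ^ 2 = 4 * a ^ 3 - 27 * b ^ 2) (hδ₀ : δ ≠ 0) :
    (depressedCubic a b).Splits := by
  rw [IsRoot.def, eval_depressedCubic] at hx
  have hdiscr : (3 * x ^ 2 - a) ^ 2 * (4 * a - 3 * x ^ 2) = δ ^ 2 := by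
    rw [hδ]
    linear_combination (-27 * (x ^ 3 - a * x) - 27 * b) * hx
  have hderiv : 3 * x ^ 2 - a ≠ 0 := by
    intro h
    rw [h] at hdiscr
    exact pow_ne_zero 2 hδ₀ (by linear_combination -hdiscr)
  have hquad : (δ / (3 * x ^ 2 - a)) ^ 2 = 4 * a - 3 * x ^ 2 := by
    rw [div_pow, div_eq_iff (pow_ne_zero 2 hderiv)]
    linear_combination -hdiscr
  set ε := δ / (3 * x ^ 2 - a)
  obtain ⟨y, z, hsum, hprod⟩ : ∃ y z, y + z = -x ∧ y * z = x ^ 2 - a := by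
    have : (2 : F) ≠ 0 := two_ne_zero
    refine ⟨(-x + ε) / 2, (-x - ε) / 2, by field, ?_⟩
    field_simp
    linear_combination -hquad
  have hfactor : depressedCubic a b = (X - C x) * (X - C y) * (X - C z) := by
    have hb : b = x * (x ^ 2 - a) := by linear_combination -hx
    have hsum' : C y + C z = -C x := by rw [← C_add, hsum, C_neg]
    have hprod' : C y * C z = C x ^ 2 - C a := by rw [← C_mul, hprod, C_sub, C_pow]
    rw [depressedCubic, hb, C_mul, C_sub, C_pow]
    linear_combination X * (X - C x) * hsum' - (X - C x) * hprod'
  rw [hfactor]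
  exact ((Splits.X_sub_C x).mul (Splits.X_sub_C y)).mul (Splits.X_sub_C z)

theorem isGalois_of_aeval_depressedCubic_eq_zero {L : Type*} [Field L] [Algebra F L] [CharZero F]
    {a b δ : F} (hδ : δ ^ 2 = 4 * a ^ 3 - 27 * b ^ 2) (hδ₀ : δ ≠ 0) {θ : L}
    (hθ : aeval θ (depressedCubic a b) = 0) (hadjoin : Algebra.adjoin F {θ} = ⊤) :
    IsGalois F L := by
  have : CharZero L := charZero_of_injective_algebraMap (algebraMap F L).injective
  have hsplits : ((depressedCubic a b).map (algebraMap F L)).Splits := by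
    rw [← eval_map_algebraMap, map_depressedCubic] at hθ
    rw [map_depressedCubic]
    refine splits_depressedCubic_of_isRoot hθ (δ := algebraMap F L δ) ?_ (by simpa using hδ₀)
    rw [← map_pow, hδ]
    simp [map_ofNat]
  have hmem : θ ∈ (depressedCubic a b).rootSet L :=
    (mem_rootSet_of_ne (monic_depressedCubic a b).ne_zero).mpr hθ
  have : (depressedCubic a b).IsSplittingField F L :=
    ⟨hsplits, top_unique (hadjoin ▸ Algebra.adjoin_mono (Set.singleton_subset_iff.mpr hmem))⟩
  have := Normal.of_isSplittingField (F := F) (E := L) (depressedCubic a b)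
  exact ⟨⟩

theorem finrank_adjoinRoot_depressedCubic (a b : F) :
    finrank F (AdjoinRoot (depressedCubic a b)) = 3 := by
  rw [(AdjoinRoot.powerBasis' (monic_depressedCubic a b)).finrank, AdjoinRoot.powerBasis'_dim,
    natDegree_depressedCubic]

end DepressedCubic

section UnramifiedCubic

/-- The cubic `X³ - 3q²X - 2(1 - q³) = (X - q)²(X + 2q) - 2`, of discriminant `6²·3(2q³ - 1)`.
For an integer `q ≡ 1 (mod 6)`, a root generates an unramified extension of
`ℚ(√(3(2q³ - 1)))`. -/
noncomputable def unramifiedCubic {R : Type*} [CommRing R] (q : R) : R[X] :=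
  depressedCubic (3 * q ^ 2) (2 * (1 - q ^ 3))

theorem map_unramifiedCubic {R S : Type*} [CommRing R] [CommRing S] (φ : R →+* S) (q : R) :
    (unramifiedCubic q).map φ = unramifiedCubic (φ q) := by
  simp [unramifiedCubic, map_depressedCubic, map_ofNat]

theorem not_isRoot_unramifiedCubic {q : ℤ} (hq : q ≠ 1) (z : ℤ) :
    ¬ (unramifiedCubic q).IsRoot z := by
  rw [unramifiedCubic, IsRoot.def, eval_depressedCubic]
  intro hz
  have hfactor : (z - q) ^ 2 * (z + 2 * q) = 2 := by linear_combination hz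
  have hunit : IsUnit (z - q) :=
    Int.prime_two.irreducible.squarefree _ ⟨z + 2 * q, by rw [← sq, hfactor]⟩
  rcases Int.isUnit_iff.mp hunit with h | h <;> rw [h] at hfactor <;> lia

theorem irreducible_unramifiedCubic_rat {q : ℤ} (hq : q ≠ 1) :
    Irreducible (unramifiedCubic (q : ℚ)) := by
  have hmonic : (unramifiedCubic q).Monic := monic_depressedCubic _ _
  have hdeg : (unramifiedCubic q).natDegree = 3 := natDegree_depressedCubic _ _
  rw [← eq_intCast (algebraMap ℤ ℚ), ← map_unramifiedCubic,
    ← hmonic.irreducible_iff_irreducible_map_fraction_map,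
    hmonic.irreducible_iff_roots_eq_zero_of_degree_le_three (by lia) (by lia)]
  exact Multiset.eq_zero_of_forall_notMem fun z hz ↦
    not_isRoot_unramifiedCubic hq z (isRoot_of_mem_roots hz)

theorem irreducible_unramifiedCubic {F : Type*} [Field F] [Algebra ℚ F]
    (hF : Nat.Coprime 3 (finrank ℚ F)) {q : ℤ} (hq : q ≠ 1) :
    Irreducible (unramifiedCubic (q : F)) := by
  have hirr := irreducible_map_of_coprime_finrank (K := F) (irreducible_unramifiedCubic_rat hq)
    (by rwa [unramifiedCubic, natDegree_depressedCubic])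
  rwa [map_unramifiedCubic, map_intCast] at hirr

theorem isIntegral_sq_div_three {F : Type*} [Field F] [CharZero F] {q : ℤ}
    (hq : q ≡ 1 [ZMOD 3]) {θ : F} (hθ : (unramifiedCubic (q : F)).IsRoot θ) :
    IsIntegral ℤ (θ ^ 2 / 3) := by
  rw [unramifiedCubic, IsRoot.def, eval_depressedCubic] at hθ
  obtain ⟨j, hj⟩ := hq.symm.dvd
  obtain rfl : q = 1 + 3 * j := by lia
  -- For `y = θ² / 3`, squaring `θ (θ² - 3q²) = 2 (1 - q³)` gives `27 y (y - q²)² = 4 (1 - q³)²`,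
  -- and `9` divides `1 - q³`.
  refine ⟨X * (X - C ((1 + 3 * j) ^ 2)) ^ 2 - C (12 * (j + 3 * j ^ 2 + 3 * j ^ 3) ^ 2), ?_, ?_⟩
  · monicity!
  · push_cast at hθ
    simp only [eval₂_sub, eval₂_mul, eval₂_pow, eval₂_X, eval₂_C]
    simp only [eq_intCast]
    push_cast
    field_simp
    linear_combination
      (θ ^ 3 - 3 * (1 + 3 * (j : F)) ^ 2 * θ + 2 * (1 - (1 + 3 * (j : F)) ^ 3)) * hθ

theorem one_eq_zero_of_isRoot_unramifiedCubic {R : Type*} [CommRing R] {q : ℤ}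
    (hq : q ≡ 1 [ZMOD 6]) {t y : R} (ht : (unramifiedCubic (q : R)).IsRoot t) (hsum : 3 * t = 0)
    (hquad : 3 * t ^ 2 = 3 * (q : R) ^ 2) (hysum : 3 * y = 2 * (q : R) ^ 2) : (1 : R) = 0 := by
  rw [unramifiedCubic, IsRoot.def, eval_depressedCubic] at ht
  have hthree_sq : 3 * (q : R) ^ 2 = 0 := by linear_combination t * hsum - hquad
  have hsix : (6 : R) = 0 := by
    linear_combination t ^ 2 * hsum - 3 * ht + (2 * (q : R) - 3 * t) * hthree_sq
  have hq' : (q : R) = 1 := by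
    obtain ⟨j, hj⟩ := hq.symm.dvd
    obtain rfl : q = 1 + 6 * j := by lia
    push_cast
    linear_combination j * hsix
  rw [hq'] at hthree_sq hysum
  linear_combination (1 - y) * hthree_sq + hysum

theorem eq_top_of_isRoot_unramifiedCubic_of_mem_inertia {S G : Type*} [CommRing S] [IsDomain S]
    [CharZero S] [Group G] [MulSemiringAction G S] {q : ℤ} (hq : q ≡ 1 [ZMOD 6]) {t y : S}
    (ht : (unramifiedCubic (q : S)).IsRoot t) (hy : 3 * y = t ^ 2) {g : G} (hg : g ^ 3 = 1)
    (hgt : g • t ≠ t) {P : Ideal S} (hgP : g ∈ P.inertia G) : P = ⊤ := by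
  have hroot : ∀ x : S, (unramifiedCubic (q : S)).IsRoot x →
      (unramifiedCubic (q : S)).IsRoot (g • x) := fun x hx ↦ by
    simpa [map_unramifiedCubic] using hx.map (f := MulSemiringAction.toRingHom G S g)
  have hne : g • g • t ≠ t := fun h ↦ hgt <| by
    calc g • t = g • g • g • t := by rw [h]
      _ = t := by rw [← mul_smul, ← mul_smul, ← pow_three', hg, one_smul]
  have hne' : g • g • t ≠ g • t := fun h ↦ hgt (smul_left_cancel g h)
  have hsum : t + g • t + g • g • t = 0 := add_add_eq_zero_of_isRoot ht (hroot _ ht)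
    (hroot _ (hroot _ ht)) hgt.symm hne.symm hne'.symm
  have hquad : t ^ 2 + t * g • t + (g • t) ^ 2 = 3 * (q : S) ^ 2 :=
    sq_add_mul_add_sq_eq_of_isRoot ht (hroot _ ht) hgt.symm
  have hysum : y + g • y + g • g • y = 2 * (q : S) ^ 2 := by
    have hthree {u v : S} (h : 3 * u = v ^ 2) : 3 * g • u = (g • v) ^ 2 := by
      have := congrArg (MulSemiringAction.toRingHom G S g) h
      rwa [map_mul, map_ofNat, map_pow] at this
    have hgy : 3 * g • y = (g • t) ^ 2 := hthree hy
    have hggy : 3 * g • g • y = (g • g • t) ^ 2 := hthree hgy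
    apply mul_left_cancel₀ (OfNat.ofNat_ne_zero 3 : (3 : S) ≠ 0)
    linear_combination hy + hgy + hggy + (g • g • t - t - g • t) * hsum + 2 * hquad
  have hmod : ∀ x, Ideal.Quotient.mk P (g • x) = Ideal.Quotient.mk P x := fun x ↦
    Ideal.Quotient.eq.mpr (hgP x)
  have hsum' := congrArg (Ideal.Quotient.mk P) hsum
  have hquad' := congrArg (Ideal.Quotient.mk P) hquad
  have hysum' := congrArg (Ideal.Quotient.mk P) hysum
  simp only [map_add, map_mul, map_pow, map_zero, map_ofNat, map_intCast, hmod]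
    at hsum' hquad' hysum'
  rw [Ideal.eq_top_iff_one, ← Ideal.Quotient.eq_zero_iff_mem, map_one]
  have ht' := ht.map (f := Ideal.Quotient.mk P)
  rw [map_unramifiedCubic, map_intCast] at ht'
  refine one_eq_zero_of_isRoot_unramifiedCubic hq ht' (y := Ideal.Quotient.mk P y) ?_ ?_ ?_
  · linear_combination hsum'
  · linear_combination hquad'
  · linear_combination hysum'

end UnramifiedCubic

section ClassNumber

variable {K : Type*} [Field K] [NumberField K]

theorem formallyUnramified_of_isRoot_unramifiedCubic {L : Type*} [Field L] [NumberField L]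
    [Algebra K L] [IsGalois K L] (hdeg : finrank K L = 3) {q : ℤ} (hq : q ≡ 1 [ZMOD 6]) {θ : L}
    (hθ : (unramifiedCubic (q : L)).IsRoot θ) (hadjoin : Algebra.adjoin K {θ} = ⊤) :
    Algebra.FormallyUnramified (𝓞 K) (𝓞 L) := by
  have hθint : IsIntegral ℤ θ := by
    refine ⟨unramifiedCubic q, monic_depressedCubic _ _, ?_⟩
    rwa [← eval_map, map_unramifiedCubic, eq_intCast]
  let t : 𝓞 L := ⟨θ, hθint⟩
  let y : 𝓞 L := ⟨θ ^ 2 / 3, isIntegral_sq_div_three (hq.of_dvd (by norm_num)) hθ⟩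
  have ht : (unramifiedCubic (q : 𝓞 L)).IsRoot t := by
    refine .of_map (f := algebraMap (𝓞 L) L) ?_ RingOfIntegers.coe_injective
    rwa [map_unramifiedCubic, map_intCast]
  have hy : 3 * y = t ^ 2 := RingOfIntegers.ext (mul_div_cancel₀ (θ ^ 2) three_ne_zero)
  refine formallyUnramified_of_forall_inertia_eq_bot fun P hP ↦ (Subgroup.eq_bot_iff_forall _).mpr
    fun g hg ↦ by_contra fun hg1 ↦ hP.ne_top ?_
  have hgcard : g ^ 3 = 1 := by rw [← hdeg, ← IsGalois.card_aut_eq_finrank, pow_card_eq_one']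
  refine eq_top_of_isRoot_unramifiedCubic_of_mem_inertia hq ht hy hgcard (fun hgt ↦ hg1 ?_) hg
  have hgθ : g θ = θ := congrArg RingOfIntegers.val hgt
  have hgid : (g : L →ₐ[K] L) = AlgHom.id K L := AlgHom.ext_of_adjoin_eq_top hadjoin (by simpa)
  exact AlgEquiv.ext fun x ↦ DFunLike.congr_fun hgid x

theorem not_isSquare_of_modEq_three_mod_four {a : ℤ} (ha : a ≡ 3 [ZMOD 4]) : ¬ IsSquare a := by
  rintro ⟨b, rfl⟩
  have hsq : (b * b : ZMod 4) = 3 := by exact_mod_cast (ZMod.intCast_eq_intCast_iff _ _ 4).mpr ha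
  revert hsq
  generalize (b : ZMod 4) = c
  decide +revert

theorem not_three_dvd_torsionOrder (hdeg : finrank ℚ K = 2) {q : ℤ} (hq : Odd q) {α : K}
    (hα : α ^ 2 = 3 * (2 * (q : K) ^ 3 - 1)) : ¬ 3 ∣ Units.torsionOrder K := by
  intro h
  obtain ⟨β, hβ⟩ := exists_sq_eq_neg_three_of_three_dvd_torsionOrder h
  have hsquare := isSquare_or_isSquare_or_isSquare_mul_of_finrank_eq_two hdeg
    (r := ((3 * (2 * q ^ 3 - 1) : ℤ) : ℚ)) (s := ((-3 : ℤ) : ℚ)) (by simpa using hα)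
    (by simpa using hβ)
  rw [← Int.cast_mul] at hsquare
  simp only [Rat.isSquare_intCast_iff] at hsquare
  obtain ⟨k, hk⟩ := hq.pow (n := 3)
  rw [hk] at hsquare
  rcases hsquare with h | h | h
  · exact not_isSquare_of_modEq_three_mod_four (Int.modEq_iff_dvd.mpr ⟨-3 * k, by ring⟩) h
  · exact absurd h.nonneg (by norm_num)
  · exact not_isSquare_of_modEq_three_mod_four (Int.modEq_iff_dvd.mpr ⟨9 * k + 3, by ring⟩) h

theorem ne_zero_of_sq_eq_three_mul {R : Type*} [CommRing R] [CharZero R] {q : ℤ} {α : R}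
    (hα : α ^ 2 = 3 * (2 * (q : R) ^ 3 - 1)) : α ≠ 0 := by
  rintro rfl
  rw [zero_pow two_ne_zero] at hα
  norm_cast at hα
  lia

end ClassNumber

theorem class_number_div_three_of_sqrt_three_mul_two_pow_sub_one_general
    (q : ℤ) (hq : q ≠ 1) (hq6 : q ≡ 1 [ZMOD 6])
    (K : Type*) [Field K] [NumberField K] (hdeg : Module.finrank ℚ K = 2)
    (hsqrt : ∃ α : K, α ^ 2 = 3 * (2 * (q : K) ^ 3 - 1)) :
    3 ∣ NumberField.classNumber K := by
  obtain ⟨α, hα⟩ := hsqrt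
  have hqodd : Odd q := Int.odd_iff.mpr (hq6.of_dvd (by norm_num : (2 : ℤ) ∣ 6))
  let f : K[X] := unramifiedCubic (q : K)
  have : Fact (Irreducible f) := ⟨irreducible_unramifiedCubic (by norm_num [hdeg]) hq⟩
  have hfinrank : finrank K (AdjoinRoot f) = 3 := finrank_adjoinRoot_depressedCubic _ _
  have hroot : aeval (AdjoinRoot.root f) f = 0 := (AdjoinRoot.aeval_eq f).trans AdjoinRoot.mk_self
  have hadjoin : Algebra.adjoin K {AdjoinRoot.root f} = ⊤ := AdjoinRoot.adjoinRoot_eq_top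
  have hα₀ : 6 * α ≠ 0 := mul_ne_zero (by norm_num) (ne_zero_of_sq_eq_three_mul hα)
  have hdiscr : (6 * α) ^ 2 = 4 * (3 * (q : K) ^ 2) ^ 3 - 27 * (2 * (1 - (q : K) ^ 3)) ^ 2 := by
    linear_combination 36 * hα
  have : IsGalois K (AdjoinRoot f) :=
    isGalois_of_aeval_depressedCubic_eq_zero hdiscr hα₀ hroot hadjoin
  have : FiniteDimensional K (AdjoinRoot f) := .of_finrank_eq_succ hfinrank
  have : NumberField (AdjoinRoot f) := .of_module_finite K _
  have : Algebra.FormallyUnramified (𝓞 K) (𝓞 (AdjoinRoot f)) :=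
    formallyUnramified_of_isRoot_unramifiedCubic hfinrank hq6
      (by rwa [← eval_map_algebraMap, map_unramifiedCubic, map_intCast] at hroot) hadjoin
  exact prime_dvd_classNumber_of_formallyUnramified (by norm_num) hfinrank
    (not_three_dvd_torsionOrder hdeg hqodd hα)

/-- Let `m` be an odd positive integer with `m ≡ 4 (mod 15)` and let `n ≥ 3` be an odd
integer.  Then `3` divides the class number of the real quadratic field
`ℚ(√(3 * (2 * m ^ (3 * n) - 1)))`. -/
theorem class_number_div_three_of_sqrt_three_mul_two_pow_sub_one
    (m : ℤ) (hm : 0 < m) (hmodd : Odd m) (hm15 : m ≡ 4 [ZMOD 15])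
    (n : ℕ) (hn : 3 ≤ n) (hnodd : Odd n)
    (K : Type*) [Field K] [NumberField K] (hdeg : Module.finrank ℚ K = 2)
    (hsqrt : ∃ α : K, α ^ 2 = 3 * (2 * (m : K) ^ (3 * n) - 1)) :
    3 ∣ NumberField.classNumber K := by
  rw [Int.odd_iff] at hmodd
  rw [Int.ModEq] at hm15
  have hm1 : 1 < m := by lia
  have hm6 : m ≡ 1 [ZMOD 6] := by rw [Int.ModEq]; lia
  refine class_number_div_three_of_sqrt_three_mul_two_pow_sub_one_general (m ^ n)
    (one_lt_pow₀ hm1 (by lia)).ne' (by simpa using hm6.pow n) K hdeg ?_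
  simpa [← pow_mul, mul_comm n 3] using hsqrt
end

section
/- Let m > 1 be an odd integer. Then 3 divides the class number of the imaginary quadratic field ℚ(√(1 − 2m³)). -/
/-!
Write `A = √(1 - 2m³)` and `β = 1 - m³ + A`. Then `β` and its conjugate `1 - m³ - A` are coprime
with product `(m²)³`, so the ideal `(β)` is the cube of an ideal. If `3` did not divide the class
number, that ideal would be principal and `β` would be a unit times a cube. The field is imaginary
quadratic and does not contain `√-3`, because `1 - 2m³ ≡ 3 (mod 4)`; so its units have finite order
prime to `3` and are themselves cubes, whence `β = γ³`. Now `γ` has norm `m²`, and comparing the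
traces of `γ³` and `β` shows that the trace `t` of `γ` satisfies `(t + 2m)(t - m)² = 2`, which is
impossible for `m > 1`.
-/

open NumberField

section QuadraticExtension

variable {R S : Type*} [CommRing R] [Nontrivial R] [CommRing S] [Algebra R S]
  [Algebra.IsQuadraticExtension R S]

variable (R S) in
theorem algebraMap_injective_of_isQuadraticExtension :
    Function.Injective (algebraMap R S) := by
  have : Nontrivial S :=
    Module.nontrivial_of_finrank_eq_succ (Algebra.IsQuadraticExtension.finrank_eq_two R S)
  exact FaithfulSMul.algebraMap_injective R S

variable (S) in
theorem trace_algebraMap_of_isQuadraticExtension (r : R) :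
    Algebra.trace R S (algebraMap R S r) = 2 * r := by
  rw [Algebra.trace_algebraMap, Algebra.IsQuadraticExtension.finrank_eq_two, nsmul_eq_mul,
    Nat.cast_ofNat]

variable (R) in
theorem sq_eq_trace_mul_sub_norm (x : S) :
    x ^ 2 = algebraMap R S (Algebra.trace R S x) * x - algebraMap R S (Algebra.norm R x) := by
  let b := Module.finBasisOfFinrankEq R S (Algebra.IsQuadraticExtension.finrank_eq_two R S)
  have cayley_hamilton := LinearMap.aeval_self_charpoly (Algebra.lmul R S x)
  rw [← LinearMap.charpoly_toMatrix _ b, Matrix.charpoly_fin_two, LinearMap.det_toMatrix,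
    ← LinearMap.trace_eq_matrix_trace, ← Algebra.trace_apply, ← Algebra.norm_apply,
    Polynomial.aeval_algHom_apply] at cayley_hamilton
  have root := Algebra.lmul_injective (cayley_hamilton.trans (map_zero _).symm)
  simp only [map_add, map_sub, map_mul, map_pow, Polynomial.aeval_X, Polynomial.aeval_C] at root
  linear_combination root

theorem trace_cube (x : S) :
    Algebra.trace R S (x ^ 3) =
      Algebra.trace R S x ^ 3 - 3 * Algebra.norm R x * Algebra.trace R S x := by
  set t := Algebra.trace R S x with ht
  set n := Algebra.norm R x
  have cube_eq : x ^ 3 = (t ^ 2 - n) • x - algebraMap R S (t * n) := by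
    rw [Algebra.smul_def, map_sub, map_mul, map_pow]
    linear_combination (x + algebraMap R S t) * sq_eq_trace_mul_sub_norm R x
  rw [cube_eq, map_sub, map_smul, trace_algebraMap_of_isQuadraticExtension, smul_eq_mul, ← ht]
  ring

theorem norm_algebraMap_add_of_trace_eq_zero {x : S} {d : R} (hx : x ^ 2 = algebraMap R S d)
    (htx : Algebra.trace R S x = 0) (a : R) :
    Algebra.norm R (algebraMap R S a + x) = a ^ 2 - d := by
  have trace_eq : Algebra.trace R S (algebraMap R S a + x) = 2 * a := by
    rw [map_add, htx, add_zero, trace_algebraMap_of_isQuadraticExtension]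
  have sq_eq := sq_eq_trace_mul_sub_norm R (algebraMap R S a + x)
  rw [trace_eq] at sq_eq
  apply algebraMap_injective_of_isQuadraticExtension R S
  simp only [map_mul, map_sub, map_pow, map_ofNat] at sq_eq ⊢
  linear_combination sq_eq - hx

/- Trace-zero elements square into `R`; applied to `x`, `y` and `x + y`, this puts `2xy` in `R`. -/
theorem isSquare_four_mul_mul_of_trace_eq_zero {x y : S} {d e : R}
    (hx : x ^ 2 = algebraMap R S d) (hy : y ^ 2 = algebraMap R S e)
    (htx : Algebra.trace R S x = 0) (hty : Algebra.trace R S y = 0) :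
    IsSquare (4 * d * e) := by
  have add_sq_eq := sq_eq_trace_mul_sub_norm R (x + y)
  rw [map_add, htx, hty, add_zero, map_zero, zero_mul, zero_sub] at add_sq_eq
  have two_mul_eq : 2 * (x * y) = algebraMap R S (-Algebra.norm R (x + y) - d - e) := by
    simp only [map_sub, map_neg, ← add_sq_eq, ← hx, ← hy]
    ring
  refine ⟨-Algebra.norm R (x + y) - d - e, algebraMap_injective_of_isQuadraticExtension R S ?_⟩
  rw [map_mul _ (_ - _), ← two_mul_eq]
  simp only [map_mul, map_ofNat, ← hx, ← hy]
  ring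

end QuadraticExtension

theorem trace_eq_zero_of_sq_eq_algebraMap {R S : Type*} [CommRing R] [IsDomain R]
    [IsIntegrallyClosed R] [CommRing S] [Algebra R S] [Algebra.IsQuadraticExtension R S]
    {x : S} {d : R} (hd : ¬IsSquare d) (hx : x ^ 2 = algebraMap R S d) :
    Algebra.trace R S x = 0 := by
  set t := Algebra.trace R S x
  by_contra ht
  have trace_mul_eq : algebraMap R S t * x = algebraMap R S (d + Algebra.norm R x) := by
    rw [map_add]
    linear_combination hx - sq_eq_trace_mul_sub_norm R x
  have sq_eq : t ^ 2 * d = (d + Algebra.norm R x) ^ 2 := by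
    apply algebraMap_injective_of_isQuadraticExtension R S
    rw [map_mul, map_pow, map_pow, ← trace_mul_eq, ← hx, mul_pow]
  obtain ⟨s, hs⟩ : t ∣ d + Algebra.norm R x :=
    (IsIntegrallyClosed.pow_dvd_pow_iff two_ne_zero).1 ⟨d, sq_eq.symm⟩
  refine hd ⟨s, mul_left_cancel₀ (pow_ne_zero 2 ht) ?_⟩
  rw [sq_eq, hs, mul_pow, ← sq s]

theorem exists_associated_pow_of_mul_eq_pow_of_coprime_card_classGroup {R : Type*} [CommRing R]
    [IsDedekindDomain R] [Fintype (ClassGroup R)] {n : ℕ}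
    (hn : n.Coprime (Fintype.card (ClassGroup R))) {a b c : R} (hab : IsCoprime a b)
    (h : a * b = c ^ n) : ∃ d : R, Associated (d ^ n) a := by
  obtain ⟨J, hJ⟩ : ∃ J : Ideal R, Ideal.span {a} = J ^ n := by
    refine exists_eq_pow_of_mul_eq_pow_of_coprime (b := Ideal.span {b}) (c := Ideal.span {c})
      ((Ideal.isCoprime_span_singleton_iff a b).2 hab) ?_
    rw [Ideal.span_singleton_mul_span_singleton, Ideal.span_singleton_pow, h]
  obtain ⟨d, rfl⟩ : J.IsPrincipal :=
    Ideal.IsPrincipal.of_isPrincipal_pow_of_coprime hn ⟨a, hJ.symm⟩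
  rw [Ideal.submodule_span_eq, Ideal.span_singleton_pow] at hJ
  exact ⟨d, (Ideal.span_singleton_eq_span_singleton.1 hJ).symm⟩

theorem exists_ringOfIntegers_sq_eq_intCast {K : Type*} [Field K] {x : K} {d : ℤ}
    (hx : x ^ 2 = d) : ∃ A : 𝓞 K, A ^ 2 = d := by
  have integral_sq : IsIntegral ℤ (x ^ 2) := hx ▸ isIntegral_algebraMap (R := ℤ) (x := d)
  obtain ⟨A, rfl⟩ : ∃ A : 𝓞 K, (A : K) = x :=
    IsIntegralClosure.isIntegral_iff.1 (integral_sq.of_pow two_pos)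
  exact ⟨A, RingOfIntegers.coe_injective (by rw [map_pow, hx, map_intCast])⟩

section Units

theorem exists_pow_eq_of_isOfFinOrder {G : Type*} [Group G] {p : ℕ} (hp : p.Prime)
    (hG : ∀ g : G, orderOf g ≠ p) {g : G} (hg : IsOfFinOrder g) : ∃ h : G, h ^ p = g := by
  have not_dvd : ¬p ∣ orderOf g := fun hdvd =>
    hG _ (orderOf_pow_orderOf_div hg.orderOf_pos.ne' hdvd)
  obtain ⟨k, hk⟩ := exists_pow_eq_self_of_coprime (hp.coprime_iff_not_dvd.2 not_dvd)
  exact ⟨g ^ k, by rw [pow_right_comm, hk]⟩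

theorem sq_two_mul_add_one_of_orderOf_eq_three {R : Type*} [CommRing R] [IsDomain R] {u : Rˣ}
    (hu : orderOf u = 3) : (2 * (u : R) + 1) ^ 2 = -3 := by
  have primitive : IsPrimitiveRoot (u : R) 3 :=
    IsPrimitiveRoot.coe_units_iff.2 (hu ▸ IsPrimitiveRoot.orderOf u)
  have geom_sum_eq_zero := primitive.geom_sum_eq_zero (by norm_num)
  simp only [Finset.sum_range_succ, Finset.sum_range_zero] at geom_sum_eq_zero
  linear_combination 4 * geom_sum_eq_zero

theorem isTotallyComplex_of_sq_eq_intCast {K : Type*} [Field K] {x : K} {d : ℤ} (hd : d < 0)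
    (hx : x ^ 2 = d) : IsTotallyComplex K where
  isComplex v := by
    rw [← InfinitePlace.not_isReal_iff_isComplex]
    intro hv
    have real_sq_eq : InfinitePlace.embedding_of_isReal hv x ^ 2 = (d : ℝ) := by
      rw [← map_pow, hx, map_intCast]
    have : (d : ℝ) < 0 := Int.cast_lt_zero.2 hd
    linarith [sq_nonneg (InfinitePlace.embedding_of_isReal hv x)]

theorem not_isSquare_of_emod_four_eq_three {d : ℤ} (hd : d % 4 = 3) : ¬IsSquare d := by
  rintro ⟨s, rfl⟩
  obtain ⟨k, rfl | rfl⟩ := s.even_or_odd' <;> ring_nf at hd <;> lia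

theorem not_isSquare_four_mul_mul_neg_three {d : ℤ} (hd : d % 4 = 3) :
    ¬IsSquare (4 * d * -3) := by
  rintro ⟨s, hs⟩
  have even_s : Even (s * s) := hs ▸ ⟨2 * d * -3, by ring⟩
  obtain ⟨k, rfl⟩ := (Int.even_mul.1 even_s).elim id id
  exact not_isSquare_of_emod_four_eq_three (d := d * -3) (by lia) ⟨k, by linarith⟩

theorem orderOf_unit_ne_three {S : Type*} [CommRing S] [IsDomain S]
    [Algebra.IsQuadraticExtension ℤ S] {A : S} {d : ℤ} (hd : d % 4 = 3) (hA : A ^ 2 = d)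
    (u : Sˣ) : orderOf u ≠ 3 := by
  intro hu
  have hA_sq : A ^ 2 = algebraMap ℤ S d := by simpa using hA
  have hB : (2 * (u : S) + 1) ^ 2 = algebraMap ℤ S (-3) := by
    rw [sq_two_mul_add_one_of_orderOf_eq_three hu, map_neg, map_ofNat]
  exact not_isSquare_four_mul_mul_neg_three hd <| isSquare_four_mul_mul_of_trace_eq_zero hA_sq hB
    (trace_eq_zero_of_sq_eq_algebraMap (not_isSquare_of_emod_four_eq_three hd) hA_sq)
    (trace_eq_zero_of_sq_eq_algebraMap (fun h => absurd h.nonneg (by norm_num)) hB)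

variable {K : Type*} [Field K] [NumberField K] [Algebra.IsQuadraticExtension ℚ K]

instance isQuadraticExtension_ringOfIntegers : Algebra.IsQuadraticExtension ℤ (𝓞 K) where
  finrank_eq_two' := by
    rw [RingOfIntegers.rank, Algebra.IsQuadraticExtension.finrank_eq_two]

theorem isOfFinOrder_unit_of_isTotallyComplex [IsTotallyComplex K] (u : (𝓞 K)ˣ) :
    IsOfFinOrder u := by
  have rank_eq_zero : Units.rank K = 0 := by
    have two_eq : 2 = 2 * InfinitePlace.nrComplexPlaces K := by
      rw [← IsTotallyComplex.finrank, Algebra.IsQuadraticExtension.finrank_eq_two]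
    rw [Units.rank, InfinitePlace.card_eq_nrRealPlaces_add_nrComplexPlaces,
      IsTotallyComplex.nrRealPlaces_eq_zero]
    lia
  have : IsEmpty (Fin (Units.rank K)) := by rw [rank_eq_zero]; infer_instance
  have torsion_eq_top := Units.closure_fundSystem_sup_torsion_eq_top K
  rw [Set.range_eq_empty, Subgroup.closure_empty, bot_sup_eq] at torsion_eq_top
  have mem_torsion : u ∈ Units.torsion K := torsion_eq_top ▸ Subgroup.mem_top u
  exact (CommGroup.mem_torsion _).1 mem_torsion

theorem exists_unit_cube_eq {A : 𝓞 K} {d : ℤ} (hd : d < 0) (hd4 : d % 4 = 3) (hA : A ^ 2 = d)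
    (u : (𝓞 K)ˣ) : ∃ v : (𝓞 K)ˣ, v ^ 3 = u := by
  have sq_eq : (A : K) ^ 2 = d := by
    rw [← map_pow, hA, map_intCast]
  have := isTotallyComplex_of_sq_eq_intCast hd sq_eq
  exact exists_pow_eq_of_isOfFinOrder Nat.prime_three (orderOf_unit_ne_three hd4 hA)
    (isOfFinOrder_unit_of_isTotallyComplex u)

end Units

section OneSubTwoMulCube

theorem add_two_mul_mul_sub_sq_ne_two {m : ℤ} (hm : 1 < m) (t : ℤ) :
    (t + 2 * m) * (t - m) ^ 2 ≠ 2 := by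
  intro h
  have sq_le_two : (t - m) ^ 2 ≤ 2 := Int.le_of_dvd two_pos (Dvd.intro_left _ h)
  obtain ⟨s, rfl⟩ : ∃ s, t = m + s := ⟨t - m, by ring⟩
  rw [add_sub_cancel_left] at h sq_le_two
  have : s ≤ 1 := by nlinarith
  have : -1 ≤ s := by nlinarith
  interval_cases s <;> lia

variable {S : Type*} [CommRing S] {m : ℤ} {A : S}

theorem one_sub_cube_add_mul_one_sub_cube_sub (hA : A ^ 2 = 1 - 2 * (m : S) ^ 3) :
    (1 - (m : S) ^ 3 + A) * (1 - (m : S) ^ 3 - A) = ((m : S) ^ 2) ^ 3 := by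
  linear_combination -hA

theorem isCoprime_one_sub_cube_add_one_sub_cube_sub (hm : Odd m)
    (hA : A ^ 2 = 1 - 2 * (m : S) ^ 3) :
    IsCoprime (1 - (m : S) ^ 3 + A) (1 - (m : S) ^ 3 - A) := by
  have coprime_product_sum : IsCoprime (m ^ 6) (2 * (1 - m ^ 3)) :=
    ((Int.isCoprime_two_right.2 hm).mul_right ⟨m ^ 2, 1, by ring⟩).pow_left
  obtain ⟨a, b, hab⟩ := coprime_product_sum
  have bezout : (a : S) * m ^ 6 + b * (2 * (1 - m ^ 3)) = 1 := by
    exact_mod_cast congrArg (Int.cast : ℤ → S) hab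
  refine ⟨a * (1 - (m : S) ^ 3 - A) + b, b, ?_⟩
  linear_combination a * one_sub_cube_add_mul_one_sub_cube_sub hA + bezout

theorem cube_ne_one_sub_cube_add [Algebra.IsQuadraticExtension ℤ S] (hm : 1 < m)
    (hA : A ^ 2 = 1 - 2 * (m : S) ^ 3) (γ : S) : γ ^ 3 ≠ 1 - (m : S) ^ 3 + A := by
  intro hγ
  have sq_eq : A ^ 2 = algebraMap ℤ S (1 - 2 * m ^ 3) := by simpa using hA
  have cube_eq : γ ^ 3 = algebraMap ℤ S (1 - m ^ 3) + A := by simpa using hγ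
  have not_isSquare : ¬IsSquare (1 - 2 * m ^ 3) := fun h => by
    have : 1 < m ^ 3 := one_lt_pow₀ hm three_ne_zero
    linarith [h.nonneg]
  have trace_A := trace_eq_zero_of_sq_eq_algebraMap not_isSquare sq_eq
  have norm_γ : Algebra.norm ℤ γ = m ^ 2 := by
    apply (Odd.strictMono_pow (by decide : Odd 3)).injective
    calc Algebra.norm ℤ γ ^ 3 = Algebra.norm ℤ (algebraMap ℤ S (1 - m ^ 3) + A) := by
          rw [← map_pow, cube_eq]
      _ = (1 - m ^ 3) ^ 2 - (1 - 2 * m ^ 3) :=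
          norm_algebraMap_add_of_trace_eq_zero sq_eq trace_A _
      _ = (m ^ 2) ^ 3 := by ring
  have trace_eq := trace_cube (R := ℤ) γ
  rw [cube_eq, map_add, trace_A, trace_algebraMap_of_isQuadraticExtension, norm_γ] at trace_eq
  exact add_two_mul_mul_sub_sq_ne_two hm (Algebra.trace ℤ S γ) (by linear_combination -trace_eq)

end OneSubTwoMulCube

/-- Let `m > 1` be an odd integer.  Then `3` divides the class number of the imaginary
quadratic field `ℚ(√(1 - 2 * m ^ 3))`. -/
theorem class_number_div_three_of_sqrt_one_sub_two_cube
    (m : ℤ) (hm : 1 < m) (hmodd : Odd m)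
    (K : Type*) [Field K] [NumberField K] (hdeg : Module.finrank ℚ K = 2)
    (hsqrt : ∃ α : K, α ^ 2 = 1 - 2 * (m : K) ^ 3) :
    3 ∣ NumberField.classNumber K := by
  have : Algebra.IsQuadraticExtension ℚ K := ⟨hdeg⟩
  obtain ⟨α, hα⟩ := hsqrt
  obtain ⟨A, hA_int⟩ := exists_ringOfIntegers_sq_eq_intCast (x := α) (d := 1 - 2 * m ^ 3)
    (by exact_mod_cast hα)
  have hA : A ^ 2 = 1 - 2 * (m : 𝓞 K) ^ 3 := by exact_mod_cast hA_int
  have neg : 1 - 2 * m ^ 3 < 0 := by linarith [one_lt_pow₀ hm three_ne_zero]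
  have mod_four : (1 - 2 * m ^ 3) % 4 = 3 := by
    obtain ⟨k, hk⟩ := hmodd.pow (n := 3)
    lia
  by_contra h
  obtain ⟨γ, u, hγ⟩ := exists_associated_pow_of_mul_eq_pow_of_coprime_card_classGroup
    (Nat.prime_three.coprime_iff_not_dvd.2 h)
    (isCoprime_one_sub_cube_add_one_sub_cube_sub hmodd hA)
    (one_sub_cube_add_mul_one_sub_cube_sub hA)
  obtain ⟨v, rfl⟩ := exists_unit_cube_eq neg mod_four hA_int u
  rw [Units.val_pow_eq_pow_val, ← mul_pow] at hγ
  exact cube_ne_one_sub_cube_add hm hA _ hγ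
end

section
/- Let n > 1 be an odd integer, and let a and b be integers satisfying a ≡ 19 (mod 30) and b ≡ 6 (mod 15). Then the cubic polynomial X³ − 3aⁿX − 2bⁿ is irreducible over ℚ. -/
open Polynomial

/-! A monic cubic over an integrally closed domain is irreducible over the fraction field as soon as
it has no root in the domain, and a root in the domain would survive every change of rings. For odd
`n`, the cubic over `ℤ` becomes `X ^ 3 + 3 * X - 2` modulo `5`, which has no root in `ZMod 5`. -/

section ChangeOfRings

variable {R : Type*} (K : Type*) [CommRing R] [IsDomain R] [IsIntegrallyClosed R] [Field K]
  [Algebra R K] [IsFractionRing R K]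

theorem irreducible_map_algebraMap_of_degree_le_three_of_forall_eval₂_ne_zero
    {S : Type*} [Semiring S] (φ : R →+* S) {f : R[X]} (hf : f.Monic)
    (two_le : 2 ≤ f.natDegree) (le_three : f.natDegree ≤ 3)
    (no_root : ∀ x : S, f.eval₂ φ x ≠ 0) : Irreducible (f.map (algebraMap R K)) := by
  rw [← hf.irreducible_iff_irreducible_map_fraction_map,
    hf.irreducible_iff_roots_eq_zero_of_degree_le_three two_le le_three]
  refine Multiset.eq_zero_of_forall_notMem fun r hr ↦ no_root (φ r) ?_
  rw [eval₂_at_apply, (isRoot_of_mem_roots hr).eq_zero, map_zero]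

theorem irreducible_depressed_cubic_of_forall_ne_zero
    {S : Type*} [Ring S] (φ : R →+* S) {p q : R}
    (no_root : ∀ x : S, x ^ 3 - φ p * x - φ q ≠ 0) :
    Irreducible (X ^ 3 - C (algebraMap R K p) * X - C (algebraMap R K q)) := by
  have hdeg : (X ^ 3 - C p * X - C q).natDegree = 3 := by compute_degree!
  have hmonic : (X ^ 3 - C p * X - C q).Monic := by monicity!
  simpa using irreducible_map_algebraMap_of_degree_le_three_of_forall_eval₂_ne_zero K φ hmonic
    (by lia) hdeg.le (by simpa [eval₂_sub, eval₂_mul_X] using no_root)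

end ChangeOfRings

theorem irreducible_kishi_cubic_of_mod_thirty_mod_fifteen_general
    {n : ℕ} (hn : Odd n) {a b : ℤ} (ha : a ≡ -1 [ZMOD 5]) (hb : b ≡ 1 [ZMOD 5]) :
    Irreducible (X ^ 3 - C (3 * (a : ℚ) ^ n) * X - C (2 * (b : ℚ) ^ n)) := by
  have ha' : (a : ZMod 5) = -1 := by exact_mod_cast (ZMod.intCast_eq_intCast_iff a (-1) 5).2 ha
  have hb' : (b : ZMod 5) = 1 := by exact_mod_cast (ZMod.intCast_eq_intCast_iff b 1 5).2 hb
  have no_root : ∀ x : ZMod 5, x ^ 3 - 3 * (-1) * x - 2 ≠ 0 := by decide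
  simpa using irreducible_depressed_cubic_of_forall_ne_zero ℚ (Int.castRingHom (ZMod 5))
    (p := 3 * a ^ n) (q := 2 * b ^ n) (by simpa [ha', hb', hn.neg_one_pow] using no_root)

/-- Let `n > 1` be an odd integer, and `a`, `b` integers with `a ≡ 19 (mod 30)` and
`b ≡ 6 (mod 15)`.  Then `X ^ 3 - 3 * a ^ n * X - 2 * b ^ n` is irreducible over `ℚ`. -/
theorem irreducible_kishi_cubic_of_mod_thirty_mod_fifteen
    (n : ℕ) (hn : 1 < n) (hnodd : Odd n)
    (a b : ℤ) (ha : a ≡ 19 [ZMOD 30]) (hb : b ≡ 6 [ZMOD 15]) :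
    Irreducible (X ^ 3 - C (3 * (a : ℚ) ^ n) * X - C (2 * (b : ℚ) ^ n)) :=
  irreducible_kishi_cubic_of_mod_thirty_mod_fifteen_general hnodd
    ((ha.of_dvd (by norm_num)).trans (by decide)) ((hb.of_dvd (by norm_num)).trans (by decide))
end

section
/- Let m be a positive integer with m ≡ 4 (mod 15) and let n be an odd positive integer. Then the cubic polynomial X³ − 6mⁿX − 4 is irreducible over ℚ. -/
open Polynomial

theorem irreducible_X_pow_three_sub_C_mul_X_sub_C {F : Type*} [Field F] {a b : F}
    (hroot : ∀ x : F, x ^ 3 - a * x - b ≠ 0) : Irreducible (X ^ 3 - C a * X - C b) := by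
  have hdeg : (X ^ 3 - C a * X - C b).natDegree = 3 := by compute_degree!
  refine irreducible_of_degree_le_three_of_not_isRoot (by simp [hdeg]) fun x hx ↦ hroot x ?_
  simpa [IsRoot] using hx

section Reduction

variable {R K : Type*} [CommRing R] [IsDomain R] [IsIntegrallyClosed R]
  [Field K] [Algebra R K] [IsFractionRing R K]

theorem irreducible_map_algebraMap_of_monic_of_irreducible_map {S : Type*} [CommRing S]
    [IsDomain S] (φ : R →+* S) {f : R[X]} (hf : f.Monic) (hirr : Irreducible (f.map φ)) :
    Irreducible (f.map (algebraMap R K)) :=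
  hf.irreducible_iff_irreducible_map_fraction_map.mp (hf.irreducible_of_irreducible_map φ f hirr)

theorem irreducible_X_pow_three_sub_C_algebraMap_mul_X_sub_C_algebraMap {F : Type*} [Field F]
    (φ : R →+* F) {a b : R} (hroot : ∀ x : F, x ^ 3 - φ a * x - φ b ≠ 0) :
    Irreducible (X ^ 3 - C (algebraMap R K a) * X - C (algebraMap R K b)) := by
  have hmonic : (X ^ 3 - C a * X - C b).Monic := by monicity!
  have hirr : Irreducible ((X ^ 3 - C a * X - C b).map φ) := by
    simpa using irreducible_X_pow_three_sub_C_mul_X_sub_C hroot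
  simpa using irreducible_map_algebraMap_of_monic_of_irreducible_map (K := K) φ hmonic hirr

end Reduction

theorem irreducible_cubic_of_four_mod_fifteen_general
    (m : ℤ) (hm5 : m ≡ 4 [ZMOD 5]) (n : ℕ) (hnodd : Odd n) :
    Irreducible (X ^ 3 - C (6 * (m : ℚ) ^ n) * X - C (4 : ℚ)) := by
  have hm : (m : ZMod 5) = -1 := (ZMod.intCast_eq_intCast_iff m 4 5).mpr hm5
  have hcoeff : (6 : ZMod 5) * m ^ n = -1 := by
    rw [hm, hnodd.neg_one_pow]
    decide
  -- Modulo 5 the cubic is `X ^ 3 + X + 1`.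
  have hroot : ∀ x : ZMod 5, x ^ 3 - 6 * m ^ n * x - 4 ≠ 0 := by
    rw [hcoeff]
    decide
  have : Fact (Nat.Prime 5) := ⟨Nat.prime_five⟩
  simpa using irreducible_X_pow_three_sub_C_algebraMap_mul_X_sub_C_algebraMap (K := ℚ)
    (Int.castRingHom (ZMod 5)) (a := 6 * m ^ n) (b := 4) (by simpa using hroot)

/-- Let `m` be a positive integer with `m ≡ 4 (mod 15)` and `n` an odd positive integer.
Then `X ^ 3 - 6 * m ^ n * X - 4` is irreducible over `ℚ`. -/
theorem irreducible_cubic_of_four_mod_fifteen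
    (m : ℤ) (hm : 0 < m) (hm15 : m ≡ 4 [ZMOD 15]) (n : ℕ) (hn : 0 < n) (hnodd : Odd n) :
    Irreducible (X ^ 3 - C (6 * (m : ℚ) ^ n) * X - C (4 : ℚ)) :=
  irreducible_cubic_of_four_mod_fifteen_general m (hm15.of_dvd (by norm_num)) n hnodd
end

section
/- Let m > 1 be an odd integer and write 1 − 2m³ = t²d' where d' is the squarefree part of 1 − 2m³ and t is a positive integer. Then there is no element z of the ring ℤ[√d'] with z³ = 2 + 2t√d'; equivalently, there are no integers a and b satisfying both a³ + 3ab²d' = 2 and 3a²b + b³d' = 2t. -/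
/-!
If `z ^ 3 = 2 + 2t√d`, taking norms gives `(norm z) ^ 3 = 4(1 - t²d) = (2m) ^ 3`, so
`norm z = 2m`. Substituting this into `re (z ^ 3) = re z * (4 (re z)² - 3 norm z)` gives
`a(2a² - 3m) = 1` for the integer `a = re z`. Hence `a = ±1`: the value `a = 1` would give
`3m = 1`, and `a = -1` gives `m = 1`.
-/

section Zsqrtd

variable {d : ℤ}

theorem zsqrtd_mk_pow_three (a b : ℤ) :
    (⟨a, b⟩ : ℤ√d) ^ 3 = ⟨a ^ 3 + 3 * a * b ^ 2 * d, 3 * a ^ 2 * b + b ^ 3 * d⟩ := by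
  ext <;> simp only [pow_succ, pow_zero, one_mul, Zsqrtd.re_mul, Zsqrtd.im_mul] <;> ring

theorem zsqrtd_re_pow_three (z : ℤ√d) :
    (z ^ 3).re = z.re * (4 * z.re ^ 2 - 3 * z.norm) := by
  obtain ⟨a, b⟩ := z
  rw [zsqrtd_mk_pow_three, Zsqrtd.norm_def]
  ring

theorem zsqrtd_norm_eq_of_norm_pow_eq_pow {z : ℤ√d} {n : ℤ} {k : ℕ} (hk : Odd k)
    (h : (z ^ k).norm = n ^ k) : z.norm = n :=
  hk.pow_injective ((map_pow Zsqrtd.normMonoidHom z k).symm.trans h)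

end Zsqrtd

theorem eq_one_of_mul_two_mul_sq_sub_three_mul_eq_one {a m : ℤ}
    (h : a * (2 * a ^ 2 - 3 * m) = 1) : m = 1 := by
  rcases Int.eq_one_or_neg_one_of_mul_eq_one h with rfl | rfl <;> lia

theorem eq_one_of_zsqrtd_pow_three_eq_mk {m d t : ℤ} (hpart : 1 - 2 * m ^ 3 = t ^ 2 * d)
    {z : ℤ√d} (hz : z ^ 3 = ⟨2, 2 * t⟩) : m = 1 := by
  have norm_cube : (z ^ 3).norm = (2 * m) ^ 3 := by
    rw [hz, Zsqrtd.norm_def]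
    linear_combination 4 * hpart
  have norm_z : z.norm = 2 * m := zsqrtd_norm_eq_of_norm_pow_eq_pow (by decide) norm_cube
  have re_cube : z.re * (4 * z.re ^ 2 - 3 * (2 * m)) = 2 := by
    rw [← norm_z, ← zsqrtd_re_pow_three, hz]
  exact eq_one_of_mul_two_mul_sq_sub_three_mul_eq_one (a := z.re) (by linarith)

theorem not_cube_two_add_two_mul_sqrtd_general
    (m : ℤ) (hm : m ≠ 1) (d t : ℤ) (hpart : 1 - 2 * m ^ 3 = t ^ 2 * d) :
    (¬ ∃ z : ℤ√d, z ^ 3 = 2 + 2 * (t : ℤ√d) * Zsqrtd.sqrtd) ∧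
      ¬ ∃ a b : ℤ, a ^ 3 + 3 * a * b ^ 2 * d = 2 ∧ 3 * a ^ 2 * b + b ^ 3 * d = 2 * t := by
  constructor
  · rintro ⟨z, hz⟩
    have coords : (2 + 2 * (t : ℤ√d) * Zsqrtd.sqrtd : ℤ√d) = ⟨2, 2 * t⟩ := by
      ext <;> simp
    exact hm (eq_one_of_zsqrtd_pow_three_eq_mk hpart (hz.trans coords))
  · rintro ⟨a, b, hre, him⟩
    have cube : (⟨a, b⟩ : ℤ√d) ^ 3 = ⟨2, 2 * t⟩ := by
      rw [zsqrtd_mk_pow_three, hre, him]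
    exact hm (eq_one_of_zsqrtd_pow_three_eq_mk hpart cube)

/-- Let `m > 1` be an odd integer and write `1 - 2 * m ^ 3 = t ^ 2 * d'` with `d'` the
squarefree part of `1 - 2 * m ^ 3` and `t > 0`.  Then no element `z` of `ℤ[√d']` satisfies
`z ^ 3 = 2 + 2 * t * √d'`; equivalently, no integers `a`, `b` satisfy both
`a ^ 3 + 3 * a * b ^ 2 * d' = 2` and `3 * a ^ 2 * b + b ^ 3 * d' = 2 * t`. -/
theorem not_cube_two_add_two_mul_sqrtd
    (m : ℤ) (hm : 1 < m) (hmodd : Odd m)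
    (d' t : ℤ) (hsf : Squarefree d') (ht : 0 < t) (hpart : 1 - 2 * m ^ 3 = t ^ 2 * d') :
    (¬ ∃ z : ℤ√d', z ^ 3 = 2 + 2 * (t : ℤ√d') * Zsqrtd.sqrtd) ∧
      ¬ ∃ a b : ℤ, a ^ 3 + 3 * a * b ^ 2 * d' = 2 ∧ 3 * a ^ 2 * b + b ^ 3 * d' = 2 * t :=
  not_cube_two_add_two_mul_sqrtd_general m (ne_of_gt hm) d' t hpart
end

section
/- Let u and v be integers and let f_{u,v}(X) = X³ − uvX − u², whose discriminant is D = u³(4v³ − 27u). Suppose that (KM-1) gcd(u, v) = 1; (KM-2) f_{u,v} is irreducible over ℚ; (KM-3) D is not a perfect square in ℤ; and (KM-4) one of the following holds: (a) 3 ∤ v, or (b) 3 ∣ v, uv ≢ 3 (mod 9), and u ≡ v + 1 (mod 9) or u ≡ v − 1 (mod 9), or (c) 3 ∣ v, uv ≡ 3 (mod 9), and u ≡ v + 1 (mod 27) or u ≡ v − 1 (mod 27). Then 3 divides the class number of the quadratic field ℚ(√D). -/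
open Polynomial

/-!
Let `θ` be a root of `f = X³ - uvX - u²` and `L = K(θ)`, where `K` contains a square root of the
discriminant of `f`, so that `L / K` is cyclic of degree `3`. It is unramified everywhere. At a
ramified prime `P` inertia is the whole Galois group, so the conjugates of every integer `w` of `L`
coincide modulo `P` and its cubic polynomial reduces to `(X - w)³`. For `η = u / θ`, a root of
`X³ + vX² - u` with `u` and `v` coprime, this forces `3 ∈ P`; then every integer of `L` outside `K`
with cubic polynomial over `ℤ` has trace divisible by `3`, whereas (KM-4) produces one whose trace
is not.

An unramified cyclic extension `L / K` of prime degree `p` forces `p` to divide the class number of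
`K` (Hilbert's Theorem 94). Let `σ` generate the Galois group. The unit ranks determine the Herbrand
quotient of the units of `L`, and its value yields a unit `e` of norm one that is not of the form
`y / σ y` with `y` a unit. By Hilbert 90 there is an integer `a ≠ 0` of `L` with `e = a / σ a`. The
ideal `(a)` is Galois-invariant, hence, as `L / K` is unramified, extended from an ideal `J` of
`K`. If `J = (b)`, then `a = b y` for a unit `y` and `e = y / σ y`, a contradiction; but `Jᵖ` is
the relative norm of `(a)`, which is principal.
-/

section IndexQuotient

variable {A B C : Type*} [AddCommGroup A] [AddCommGroup B] [AddCommGroup C]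

/-- The quotient `|coker f| / |ker f|` attached to a homomorphism `f` of abelian groups. It is
meaningful when kernel and cokernel are finite, and takes the junk value `0` otherwise. -/
noncomputable def indexQuotient (f : A →+ B) : ℚ :=
  f.range.index / Nat.card f.ker

lemma card_ker_comp (g : B →+ C) (f : A →+ B) :
    Nat.card (g.comp f).ker = Nat.card f.ker * Nat.card ↥(f.range ⊓ g.ker) := by
  have ker_le : f.ker ≤ (g.comp f).ker := fun x hx ↦ by
    simp [AddMonoidHom.mem_ker, AddMonoidHom.mem_ker.mp hx]
  have map_ker : (g.comp f).ker.map f = f.range ⊓ g.ker := by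
    rw [← AddMonoidHom.comap_ker, AddSubgroup.map_comap_eq]
  rw [← map_ker, ← AddSubgroup.relIndex_ker, ← AddSubgroup.relIndex_bot_left,
    ← AddSubgroup.relIndex_bot_left, AddSubgroup.relIndex_mul_relIndex _ _ _ bot_le ker_le]

lemma indexQuotient_comp (g : B →+ C) (f : A →+ B) [Finite g.ker] :
    indexQuotient (g.comp f) = indexQuotient g * indexQuotient f := by
  have index_comp : (g.comp f).range.index = (f.range ⊔ g.ker).index * g.range.index := by
    rw [← AddSubgroup.index_map, AddMonoidHom.range_comp]
  have index_range : f.range.index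
      = (f.range ⊓ g.ker).relIndex g.ker * (f.range ⊔ g.ker).index := by
    rw [AddSubgroup.inf_relIndex_right, ← AddSubgroup.relIndex_sup_left,
      AddSubgroup.relIndex_mul_index le_sup_left]
  have card_ker :
      Nat.card g.ker = Nat.card ↥(f.range ⊓ g.ker) * (f.range ⊓ g.ker).relIndex g.ker := by
    rw [← AddSubgroup.relIndex_bot_left, ← AddSubgroup.relIndex_bot_left,
      AddSubgroup.relIndex_mul_relIndex _ _ _ bot_le inf_le_right]
  have relIndex_ne_zero : ((f.range ⊓ g.ker).relIndex g.ker : ℚ) ≠ 0 := by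
    have := card_ker ▸ Nat.card_pos (α := g.ker)
    exact_mod_cast (Nat.pos_of_mul_pos_left this).ne'
  simp only [indexQuotient, index_comp, card_ker_comp, index_range, card_ker]
  push_cast
  rw [div_mul_div_comm, ← mul_div_mul_right _ _ relIndex_ne_zero]
  ring

lemma indexQuotient_of_injective {f : A →+ B} (hf : Function.Injective f) :
    indexQuotient f = f.range.index := by
  simp [indexQuotient, f.ker_eq_bot_iff.mpr hf]

lemma indexQuotient_of_bijective {f : A →+ B} (hf : Function.Bijective f) :
    indexQuotient f = 1 := by
  rw [indexQuotient_of_injective hf.1, AddMonoidHom.range_eq_top.mpr hf.2, AddSubgroup.index_top,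
    Nat.cast_one]

lemma indexQuotient_mul (f g : AddMonoid.End A) [Finite (AddMonoidHom.ker f)] :
    indexQuotient (f * g) = indexQuotient f * indexQuotient g :=
  indexQuotient_comp f g

lemma indexQuotient_one : indexQuotient (1 : AddMonoid.End A) = 1 :=
  indexQuotient_of_bijective (f := AddMonoidHom.id A) Function.bijective_id

lemma indexQuotient_pow (f : AddMonoid.End A) [Finite (AddMonoidHom.ker f)] (n : ℕ) :
    indexQuotient (f ^ n) = indexQuotient f ^ n := by
  induction n with
  | zero => rw [pow_zero, pow_zero, indexQuotient_one]
  | succ n ih => rw [pow_succ' f, pow_succ', ← ih, indexQuotient_mul]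

lemma indexQuotient_unit (f : (AddMonoid.End A)ˣ) : indexQuotient (f : AddMonoid.End A) = 1 :=
  indexQuotient_of_bijective <| Function.bijective_iff_has_inverse.mpr ⟨(↑f⁻¹ : AddMonoid.End A),
    DFunLike.congr_fun f.inv_mul, DFunLike.congr_fun f.mul_inv⟩

lemma indexQuotient_eq_of_comp_eq {f : A →+ A} {f' : B →+ B} {g : A →+ B}
    (h : g.comp f = f'.comp g) (hg : indexQuotient g ≠ 0) [Finite f'.ker] :
    indexQuotient f = indexQuotient f' := by
  have : Finite g.ker := Nat.finite_of_card_ne_zero fun h0 ↦ hg (by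
    rw [indexQuotient, h0, Nat.cast_zero, div_zero])
  apply mul_left_cancel₀ hg
  rw [← indexQuotient_comp, h, indexQuotient_comp, mul_comm]

lemma indexQuotient_codRestrict_comp_subtype (f : A →+ A) {H : AddSubgroup A}
    (hf : ∀ x, f x ∈ H) :
    indexQuotient ((f.codRestrict H hf).comp H.subtype) =
      f.range.relIndex H * ((H ⊔ f.ker).index / Nat.card ↥(H ⊓ f.ker)) := by
  have range_eq : (f.codRestrict H hf).range = f.range.addSubgroupOf H := by
    ext y; simp [AddSubgroup.mem_addSubgroupOf, Subtype.ext_iff]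
  rw [indexQuotient, card_ker_comp, AddMonoidHom.range_comp, AddSubgroup.range_subtype,
    AddSubgroup.index_map, f.ker_codRestrict, range_eq, AddSubgroup.ker_subtype,
    AddSubgroup.card_bot, one_mul, AddSubgroup.relIndex]
  push_cast
  ring

lemma indexQuotient_restrict_ker_mul_relIndex {f g : A →+ A} (hgf : ∀ x, f x ∈ g.ker)
    (hfg : ∀ x, g x ∈ f.ker) :
    indexQuotient ((f.codRestrict g.ker hgf).comp g.ker.subtype) * g.range.relIndex f.ker =
      indexQuotient ((g.codRestrict f.ker hfg).comp f.ker.subtype) * f.range.relIndex g.ker := by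
  rw [indexQuotient_codRestrict_comp_subtype, indexQuotient_codRestrict_comp_subtype,
    sup_comm g.ker, inf_comm g.ker]
  ring

lemma finite_ker_natCast [Module.Finite ℤ A] {n : ℕ} (hn : n ≠ 0) :
    Finite (AddMonoidHom.ker (n : AddMonoid.End A)) := by
  let H : AddSubgroup A := AddMonoidHom.ker (n : AddMonoid.End A)
  have : Module.Finite ℤ H := inferInstanceAs (Module.Finite ℤ H.toIntSubmodule)
  refine Module.finite_of_fg_torsion H fun x ↦
    ⟨⟨n, mem_nonZeroDivisors_of_ne_zero (mod_cast hn)⟩, Subtype.ext ?_⟩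
  rw [Submonoid.mk_smul, natCast_zsmul, AddSubgroup.coe_nsmul]
  exact x.2

lemma indexQuotient_natCast [Module.Finite ℤ A] {n : ℕ} (hn : n ≠ 0) :
    indexQuotient (n : AddMonoid.End A) = n ^ Module.finrank ℤ A := by
  let T := Submodule.torsion ℤ A
  let π : A →+ A ⧸ T := T.mkQ.toAddMonoidHom
  have : Finite T := Module.finite_of_fg_torsion _ (Submodule.torsion_isTorsion ..)
  have ker_eq : π.ker = T.toAddSubgroup := by
    ext; exact Submodule.Quotient.mk_eq_zero T
  have indexQuotient_ne_zero : indexQuotient π ≠ 0 := by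
    rw [indexQuotient, AddMonoidHom.range_eq_top.mpr T.mkQ_surjective, ker_eq,
      AddSubgroup.index_top, Nat.cast_one]
    exact one_div_ne_zero (Nat.cast_ne_zero.mpr (Nat.card_pos (α := T)).ne')
  have : Finite (nsmulAddMonoidHom (α := A ⧸ T) n).ker := finite_ker_natCast hn
  calc indexQuotient (n : AddMonoid.End A)
    _ = indexQuotient (nsmulAddMonoidHom (α := A ⧸ T) n) :=
      indexQuotient_eq_of_comp_eq (g := π) (by ext x; exact map_nsmul π n x) indexQuotient_ne_zero
    _ = n ^ Module.finrank ℤ A := by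
      rw [indexQuotient_of_injective
          (AddSubgroup.nsmulAddMonoidHom_injective_of_isTorsionFree hn),
        AddSubgroup.index_range_nsmul, finrank_quotient_eq_of_le_torsion le_rfl, Nat.cast_pow]

end IndexQuotient

section PrimitiveRoot

variable {p : ℕ} [Fact p.Prime]

lemma associated_one_sub_pow_of_isPrimitiveRoot {R : Type*} [CommRing R] [IsDomain R] {ζ : R}
    (hζ : IsPrimitiveRoot ζ p) : Associated ((1 - ζ) ^ (p - 1)) (p : R) := by
  have hp : p.Prime := Fact.out
  have hp_succ : p - 1 + 1 = p := Nat.sub_add_cancel hp.one_le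
  have prod_eq : ∏ k ∈ Finset.range (p - 1), (1 - ζ ^ (k + 1)) = (p : R) := by
    rw [IsPrimitiveRoot.prod_one_sub_pow_eq_order (hp_succ.symm ▸ hζ), ← Nat.cast_add_one, hp_succ]
  rw [← prod_eq, ← Finset.card_range (p - 1), ← Finset.prod_const, Finset.card_range]
  refine Associated.prod _ _ _ fun k hk ↦ ?_
  have hcop : (k + 1).Coprime p :=
    (Nat.coprime_of_lt_prime k.succ_ne_zero (by have := Finset.mem_range.mp hk; lia) hp).symm
  rw [← neg_sub ζ, ← neg_sub (ζ ^ _)]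
  exact (hζ.associated_sub_one_pow_sub_one_of_coprime hcop).neg_left.neg_right

lemma exists_unit_one_sub_pow_eq {A : Type*} [Ring A] {t : A}
    (ht : ∑ i ∈ Finset.range p, t ^ i = 0) : ∃ u : Aˣ, (1 - t) ^ (p - 1) = p * u := by
  have hp : p.Prime := Fact.out
  -- The universal case is the domain `ℤ[X] / (Φ_p)`, where `X` is a primitive `p`-th root of unity.
  let I := Ideal.span {cyclotomic p ℤ}
  have : I.IsPrime := (Ideal.span_singleton_prime (cyclotomic_ne_zero p ℤ)).mpr
    (cyclotomic.irreducible hp.pos).prime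
  let φ : ℤ[X] ⧸ I →+* A := Ideal.Quotient.lift I (aeval t).toRingHom fun q hq ↦ by
    obtain ⟨r, rfl⟩ := Ideal.mem_span_singleton'.mp hq
    simp [cyclotomic_prime, ht]
  let ζ := Ideal.Quotient.mk I X
  have : NeZero (p : ℤ[X] ⧸ I) := ⟨fun h ↦ by
    have hdvd : cyclotomic p ℤ ∣ C (p : ℤ) :=
      Ideal.mem_span_singleton.mp (Ideal.Quotient.eq_zero_iff_mem.mp (by simpa using h))
    have hdeg := natDegree_le_of_dvd hdvd (C_ne_zero.mpr (mod_cast hp.ne_zero))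
    rw [natDegree_C, natDegree_cyclotomic] at hdeg
    exact (Nat.totient_pos.mpr hp.pos).not_ge hdeg⟩
  have hζ : IsPrimitiveRoot ζ p := by
    rw [← isRoot_cyclotomic_iff, IsRoot.def, cyclotomic_prime, eval_geom_sum]
    simp only [ζ, ← map_pow, ← map_sum]
    rw [← cyclotomic_prime ℤ p, Ideal.Quotient.eq_zero_iff_mem]
    exact Ideal.mem_span_singleton_self _
  obtain ⟨u, hu⟩ := (associated_one_sub_pow_of_isPrimitiveRoot hζ).symm
  refine ⟨u.map φ, ?_⟩
  simpa [φ, ζ] using congrArg φ hu.symm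

end PrimitiveRoot

section Herbrand

variable {A : Type*} [AddCommGroup A]

/-- The map `x ↦ x - s x` attached to an endomorphism `s` of an abelian group. -/
def oneSubHom (s : AddMonoid.End A) : A →+ A := (1 - s : AddMonoid.End A)

/-- The map `x ↦ x + s x + ⋯ + s^(n-1) x`: the norm map when `s` generates an action of a cyclic
group of order `n`. -/
def orbitSumHom (s : AddMonoid.End A) (n : ℕ) : A →+ A := ∑ i ∈ Finset.range n, s ^ i

@[simp]
lemma oneSubHom_apply (s : AddMonoid.End A) (x : A) : oneSubHom s x = x - s x := rfl

lemma orbitSumHom_apply (s : AddMonoid.End A) (n : ℕ) (x : A) :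
    orbitSumHom s n x = ∑ i ∈ Finset.range n, s^[i] x := by
  simp_rw [← AddMonoid.End.coe_pow]
  exact AddMonoidHom.finsetSum_apply ..

lemma mem_ker_oneSubHom {s : AddMonoid.End A} {x : A} :
    x ∈ (oneSubHom s).ker ↔ Function.IsFixedPt s x := by
  rw [AddMonoidHom.mem_ker, oneSubHom_apply, sub_eq_zero, eq_comm, Function.IsFixedPt]

lemma orbitSumHom_apply_of_isFixedPt {s : AddMonoid.End A} {x : A} (hx : Function.IsFixedPt s x)
    (n : ℕ) : orbitSumHom s n x = n • x := by
  simp [orbitSumHom_apply, (hx.iterate _).eq]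

lemma oneSubHom_apply_mem_ker_orbitSumHom {s : AddMonoid.End A} {n : ℕ} (hs : s ^ n = 1) (x : A) :
    oneSubHom s x ∈ (orbitSumHom s n).ker := by
  have h : (∑ i ∈ Finset.range n, s ^ i) * (1 - s) = 0 := by rw [geom_sum_mul_neg, hs, sub_self]
  exact DFunLike.congr_fun h x

lemma orbitSumHom_apply_mem_ker_oneSubHom {s : AddMonoid.End A} {n : ℕ} (hs : s ^ n = 1) (x : A) :
    orbitSumHom s n x ∈ (oneSubHom s).ker := by
  have h : (1 - s) * ∑ i ∈ Finset.range n, s ^ i = 0 := by rw [mul_neg_geom_sum, hs, sub_self]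
  exact DFunLike.congr_fun h x

variable [Module.Finite ℤ A] {p : ℕ} [Fact p.Prime]

lemma indexQuotient_oneSubHom_pow {s : AddMonoid.End A} (hs : orbitSumHom s p = 0) :
    indexQuotient (oneSubHom s) ^ (p - 1) = p ^ Module.finrank ℤ A := by
  have hp : p ≠ 0 := (Fact.out : p.Prime).ne_zero
  have := finite_ker_natCast (A := A) hp
  have ker_le : (oneSubHom s).ker ≤ AddMonoidHom.ker (p : AddMonoid.End A) := fun x hx ↦ by
    calc p • x = orbitSumHom s p x :=
          (orbitSumHom_apply_of_isFixedPt (mem_ker_oneSubHom.mp hx) p).symm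
      _ = 0 := by rw [hs, AddMonoidHom.zero_apply]
  have : Finite (AddMonoidHom.ker (1 - s : AddMonoid.End A)) := Finite.Set.subset
    (AddMonoidHom.ker (p : AddMonoid.End A) : Set A) ker_le
  obtain ⟨u, hu⟩ := exists_unit_one_sub_pow_eq (p := p) (t := s) hs
  change indexQuotient (1 - s : AddMonoid.End A) ^ (p - 1) = _
  rw [← indexQuotient_pow, hu, indexQuotient_mul, indexQuotient_unit, mul_one,
    indexQuotient_natCast hp]

lemma indexQuotient_oneSubHom_restrict_pow {s : AddMonoid.End A} (hs : s ^ p = 1) :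
    indexQuotient (((oneSubHom s).codRestrict (orbitSumHom s p).ker
        (oneSubHom_apply_mem_ker_orbitSumHom hs)).comp (orbitSumHom s p).ker.subtype) ^ (p - 1) =
      p ^ Module.finrank ℤ (orbitSumHom s p).ker := by
  let M := (orbitSumHom s p).ker
  have : Module.Finite ℤ M := inferInstanceAs (Module.Finite ℤ M.toIntSubmodule)
  have mapsTo (x : M) : s x ∈ M := by
    rw [← sub_sub_cancel (x : A) (s x)]
    exact M.sub_mem x.2 (oneSubHom_apply_mem_ker_orbitSumHom hs (x : A))
  let t : AddMonoid.End M := (AddMonoidHom.comp s M.subtype).codRestrict M mapsTo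
  have coe_iterate (i : ℕ) (x : M) : (t^[i] x : A) = s^[i] x :=
    Function.Semiconj.iterate_right (f := ((↑) : M → A)) (fun _ ↦ rfl) i x
  have ht : orbitSumHom t p = 0 := by
    ext x
    have hx : orbitSumHom s p x = 0 := x.2
    simpa [orbitSumHom_apply, coe_iterate] using hx
  rw [← indexQuotient_oneSubHom_pow ht]
  congr 1

lemma indexQuotient_orbitSumHom_restrict {s : AddMonoid.End A} (hs : s ^ p = 1) :
    indexQuotient (((orbitSumHom s p).codRestrict (oneSubHom s).ker
        (orbitSumHom_apply_mem_ker_oneSubHom hs)).comp (oneSubHom s).ker.subtype) =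
      p ^ Module.finrank ℤ (oneSubHom s).ker := by
  have : Module.Finite ℤ (oneSubHom s).ker :=
    inferInstanceAs (Module.Finite ℤ (oneSubHom s).ker.toIntSubmodule)
  rw [← indexQuotient_natCast (Fact.out : p.Prime).ne_zero]
  congr 1
  ext x
  exact orbitSumHom_apply_of_isFixedPt (mem_ker_oneSubHom.mp x.2) p

theorem relIndex_range_ker_pow_mul {s : AddMonoid.End A} (hs : s ^ p = 1) :
    (oneSubHom s).range.relIndex (orbitSumHom s p).ker ^ (p - 1)
        * p ^ (Module.finrank ℤ (oneSubHom s).ker * (p - 1)) =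
      (orbitSumHom s p).range.relIndex (oneSubHom s).ker ^ (p - 1)
        * p ^ Module.finrank ℤ (orbitSumHom s p).ker := by
  have h := congrArg (· ^ (p - 1)) (indexQuotient_restrict_ker_mul_relIndex
    (oneSubHom_apply_mem_ker_orbitSumHom hs) (orbitSumHom_apply_mem_ker_oneSubHom hs))
  simp only [mul_pow] at h
  rw [indexQuotient_oneSubHom_restrict_pow hs, indexQuotient_orbitSumHom_restrict hs,
    ← pow_mul] at h
  rw [mul_comm, mul_comm (_ ^ (p - 1))]
  exact_mod_cast h.symm

lemma finrank_ker_oneSubHom_add_le {s : AddMonoid.End A} {n : ℕ} (hs : s ^ n = 1) :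
    Module.finrank ℤ A ≤
      Module.finrank ℤ (oneSubHom s).ker + Module.finrank ℤ (orbitSumHom s n).ker := by
  let N := (orbitSumHom s n).toIntLinearMap
  let F := (oneSubHom s).toIntLinearMap
  have range_le : LinearMap.range N ≤ LinearMap.ker F := by
    rintro _ ⟨x, rfl⟩
    exact orbitSumHom_apply_mem_ker_oneSubHom hs x
  have rank_nullity : Module.finrank ℤ (LinearMap.range N) + Module.finrank ℤ (LinearMap.ker N) =
      Module.finrank ℤ A := by
    rw [← N.quotKerEquivRange.finrank_eq, Submodule.finrank_quotient_add_finrank]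
  rw [← rank_nullity]
  exact Nat.add_le_add_right (Submodule.finrank_mono range_le) _

theorem exists_orbitSumHom_eq_zero_notMem_range {s : AddMonoid.End A} (hs : s ^ p = 1)
    (hrank : p * Module.finrank ℤ (oneSubHom s).ker < Module.finrank ℤ A) :
    ∃ x, orbitSumHom s p x = 0 ∧ x ∉ (oneSubHom s).range := by
  by_contra! h
  have herbrand := relIndex_range_ker_pow_mul hs
  rw [AddSubgroup.relIndex_eq_one.mpr h, one_pow, one_mul] at herbrand
  have hp : p.Prime := Fact.out
  have relIndex_ne_zero :
      (orbitSumHom s p).range.relIndex (oneSubHom s).ker ^ (p - 1) ≠ 0 := fun h0 ↦ by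
    rw [h0, zero_mul] at herbrand
    exact pow_ne_zero _ hp.ne_zero herbrand
  have finrank_ker_le : Module.finrank ℤ (orbitSumHom s p).ker ≤
      Module.finrank ℤ (oneSubHom s).ker * (p - 1) :=
    (Nat.pow_le_pow_iff_right hp.one_lt).mp
      (herbrand ▸ Nat.le_mul_of_pos_left _ (Nat.pos_of_ne_zero relIndex_ne_zero))
  refine hrank.not_ge ((finrank_ker_oneSubHom_add_le hs).trans ?_)
  calc _ ≤ Module.finrank ℤ (oneSubHom s).ker * (p - 1 + 1) := by
        rw [mul_add, mul_one, add_comm]; exact Nat.add_le_add_right finrank_ker_le _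
    _ = p * Module.finrank ℤ (oneSubHom s).ker := by
        rw [Nat.sub_add_cancel hp.one_le, mul_comm]

end Herbrand

section GaloisDescent

variable {A B G : Type*} [CommRing A] [CommRing B] [Algebra A B] [Group G]
  [MulSemiringAction G B]

lemma sum_smul_mem_map_comap [Fintype G] [Algebra.IsInvariant A B G] {I : Ideal B}
    (hI : ∀ (g : G), ∀ a ∈ I, g • a ∈ I) {a : B} (ha : a ∈ I) :
    ∑ g : G, g • a ∈ (I.comap (algebraMap A B)).map (algebraMap A B) := by
  obtain ⟨r, hr⟩ := Algebra.IsInvariant.isInvariant (A := A) (G := G) (∑ g : G, g • a) fun h ↦ by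
    simp_rw [Finset.smul_sum, smul_smul]
    exact Fintype.sum_equiv (Equiv.mulLeft h) _ _ fun _ ↦ rfl
  rw [← hr]
  refine Ideal.mem_map_of_mem _ (Ideal.mem_comap.mpr ?_)
  rw [hr]
  exact sum_mem fun g _ ↦ hI g a ha

lemma sum_prod_smul_sub_smul_mul_smul_mem [Fintype G] {I J : Ideal B}
    (hIJ : ∀ a ∈ I, ∑ g : G, g • a ∈ J) (w : G → B) (T : Finset G) :
    ∀ a ∈ I, ∑ g : G, (∏ τ ∈ T, (g • w τ - τ • w τ)) * g • a ∈ J := by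
  classical
  induction T using Finset.induction_on with
  | empty => simpa using hIJ
  | insert τ T hτ ih =>
    intro a ha
    have h := J.sub_mem (ih (w τ * a) (I.mul_mem_left _ ha)) (J.mul_mem_left (τ • w τ) (ih a ha))
    rw [Finset.mul_sum, ← Finset.sum_sub_distrib] at h
    convert h using 2 with g
    rw [Finset.prod_insert hτ, smul_mul']
    ring

theorem map_comap_eq_of_inertia_eq_bot [Finite G] [Algebra.IsInvariant A B G]
    (hG : ∀ P : Ideal B, P.IsMaximal → P.inertia G = ⊥) {I : Ideal B}
    (hI : ∀ (g : G), ∀ a ∈ I, g • a ∈ I) :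
    (I.comap (algebraMap A B)).map (algebraMap A B) = I := by
  classical
  have := Fintype.ofFinite G
  refine le_antisymm Ideal.map_comap_le fun a ha ↦ ?_
  set J := (I.comap (algebraMap A B)).map (algebraMap A B)
  by_contra haJ
  have colon_ne_top : J.colon {a} ≠ ⊤ := fun h ↦ haJ <| by
    simpa using Submodule.mem_colon_singleton.mp ((Ideal.eq_top_iff_one _).mp h)
  obtain ⟨P, hP, hcolon⟩ := Ideal.exists_le_maximal _ colon_ne_top
  have exists_notMem (τ : G) : ∃ w : B, τ ≠ 1 → w - τ • w ∉ P := by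
    by_contra! h
    have hτ : τ ∈ P.inertia G := fun w ↦ neg_sub w (τ • w) ▸ P.neg_mem (h w).2
    rw [hG P hP, Subgroup.mem_bot] at hτ
    exact (h 0).1 hτ
  choose w hw using exists_notMem
  -- Every summand with `g ≠ 1` contains the vanishing factor `g • w g - g • w g`.
  have prod_mul_mem : (∏ τ ∈ Finset.univ.erase 1, (w τ - τ • w τ)) * a ∈ J := by
    have h := sum_prod_smul_sub_smul_mul_smul_mem
      (fun a ha ↦ sum_smul_mem_map_comap (A := A) hI ha) w (Finset.univ.erase 1) a ha
    rw [Finset.sum_eq_single 1 _ (by simp)] at h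
    · simpa only [one_smul] using h
    · intro g _ hg
      rw [Finset.prod_eq_zero (Finset.mem_erase.mpr ⟨hg, Finset.mem_univ g⟩) (sub_self _),
        zero_mul]
  obtain ⟨τ, hτ, hmem⟩ := (hP.isPrime.prod_mem_iff).mp
    (hcolon (Submodule.mem_colon_singleton.mpr prod_mul_mem))
  exact hw τ (Finset.ne_of_mem_erase hτ) hmem

end GaloisDescent

section UnitAction

variable {A B G : Type*} [CommRing A] [CommRing B] [Algebra A B] [Group G] [MulSemiringAction G B]

variable (G B) in
/-- The action of `G` on the units of `B`, written additively so that `oneSubHom` and `orbitSumHom`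
apply to it. -/
def unitsEnd : G →* AddMonoid.End (Additive Bˣ) where
  toFun g := (Units.map (MulSemiringAction.toRingHom G B g : B →* B)).toAdditive
  map_one' := by
    ext x
    exact one_smul G ((x.toMul : Bˣ) : B)
  map_mul' g h := by
    ext x
    exact mul_smul g h ((x.toMul : Bˣ) : B)

lemma coe_toMul_unitsEnd (g : G) (x : Additive Bˣ) :
    ((unitsEnd B G g x).toMul : B) = g • (x.toMul : B) := rfl

lemma coe_toMul_orbitSumHom_unitsEnd (g : G) (n : ℕ) (x : Additive Bˣ) :
    ((orbitSumHom (unitsEnd B G g) n x).toMul : B) =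
      ∏ i ∈ Finset.range n, g ^ i • (x.toMul : B) := by
  rw [orbitSumHom_apply, toMul_sum, Units.coe_prod]
  refine Finset.prod_congr rfl fun i _ ↦ ?_
  rw [← coe_toMul_unitsEnd, map_pow, AddMonoid.End.coe_pow]

lemma exists_units_map_eq_of_smul_eq [Algebra.IsInvariant A B G] [FaithfulSMul A B] {x : Bˣ}
    (hx : ∀ g : G, g • (x : B) = x) : ∃ y : Aˣ, Units.map (algebraMap A B : A →* B) y = x := by
  have hx_inv (g : G) : g • (↑x⁻¹ : B) = ↑x⁻¹ := by
    refine eq_comm.mp (Units.inv_eq_of_mul_eq_one_right ?_)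
    calc (x : B) * g • (↑x⁻¹ : B) = g • (x * ↑x⁻¹ : B) := by rw [smul_mul', hx g]
      _ = 1 := by rw [x.mul_inv, smul_one]
  obtain ⟨a, ha⟩ := Algebra.IsInvariant.isInvariant (A := A) (G := G) (x : B) hx
  obtain ⟨b, hb⟩ := Algebra.IsInvariant.isInvariant (A := A) (G := G) (↑x⁻¹ : B) hx_inv
  have hab : a * b = 1 := FaithfulSMul.algebraMap_injective A B <| by simp [ha, hb]
  exact ⟨⟨a, b, hab, mul_comm a b ▸ hab⟩, Units.ext ha⟩

lemma smul_eq_of_zpowers_eq_top {X : Type*} [MulAction G X] {g : G}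
    (hg : Subgroup.zpowers g = ⊤) {x : X} (hx : g • x = x) (h : G) : h • x = x := by
  have hle : Subgroup.zpowers g ≤ MulAction.stabilizer G x := by
    rwa [Subgroup.zpowers_le, MulAction.mem_stabilizer_iff]
  exact hle (hg ▸ Subgroup.mem_top h)

lemma finrank_ker_oneSubHom_unitsEnd_le [Algebra.IsInvariant A B G] [FaithfulSMul A B]
    [Module.Finite ℤ (Additive Aˣ)] {g : G} (hg : Subgroup.zpowers g = ⊤) :
    Module.finrank ℤ (oneSubHom (unitsEnd B G g)).ker ≤ Module.finrank ℤ (Additive Aˣ) := by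
  let ι := (Units.map (algebraMap A B : A →* B)).toAdditive.toIntLinearMap
  have ker_le : (oneSubHom (unitsEnd B G g)).ker.toIntSubmodule ≤ LinearMap.range ι := by
    intro x hx
    obtain ⟨y, hy⟩ := exists_units_map_eq_of_smul_eq (A := A) (x := x.toMul) <|
      smul_eq_of_zpowers_eq_top hg <|
        congrArg (fun z : Additive Bˣ ↦ (z.toMul : B)) (mem_ker_oneSubHom.mp hx)
    exact ⟨Additive.ofMul y, congrArg Additive.ofMul hy⟩
  exact (Submodule.finrank_mono ker_le).trans (LinearMap.finrank_range_le ι)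

theorem exists_unit_prod_smul_eq_one_mul_smul_ne [Module.Finite ℤ (Additive Bˣ)]
    [Module.Finite ℤ (Additive Aˣ)] [Algebra.IsInvariant A B G] [FaithfulSMul A B] {p : ℕ}
    [Fact p.Prime] (hrank : p * Module.finrank ℤ (Additive Aˣ) < Module.finrank ℤ (Additive Bˣ))
    {g : G} (hg : Subgroup.zpowers g = ⊤) (hgp : g ^ p = 1) :
    ∃ e : Bˣ, ∏ i ∈ Finset.range p, g ^ i • (e : B) = 1 ∧ ∀ y : Bˣ, (e : B) * g • (y : B) ≠ y := by
  obtain ⟨x, hx, hx_range⟩ := exists_orbitSumHom_eq_zero_notMem_range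
    (s := unitsEnd B G g) (p := p) (by rw [← map_pow, hgp, map_one])
    ((Nat.mul_le_mul_left p (finrank_ker_oneSubHom_unitsEnd_le (A := A) hg)).trans_lt hrank)
  refine ⟨x.toMul, ?_, fun y hy ↦ hx_range ⟨Additive.ofMul y, ?_⟩⟩
  · rw [← coe_toMul_orbitSumHom_unitsEnd, hx, toMul_zero, Units.val_one]
  · rw [oneSubHom_apply, sub_eq_iff_eq_add]
    exact congrArg Additive.ofMul (Units.ext hy.symm)

end UnitAction

section HilbertNinetyFour

variable {A B G : Type*} [CommRing A] [CommRing B] [Algebra A B] [Group G] [MulSemiringAction G B]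

lemma exists_ne_zero_mul_smul_eq_of_prod_eq_one [IsDomain B] [FaithfulSMul G B] {g : G}
    (hg : IsOfFinOrder g) {e : B} (he : ∏ i ∈ Finset.range (orderOf g), g ^ i • e = 1) :
    ∃ a : B, a ≠ 0 ∧ e * g • a = a := by
  set n := orderOf g with hn
  let c (i : ℕ) : B := ∏ j ∈ Finset.range i, g ^ j • e
  have mul_smul_c (i : ℕ) : e * g • c i = c (i + 1) := by
    simp only [c, Finset.prod_range_succ', Finset.smul_prod', smul_smul, ← pow_succ', pow_zero,
      one_smul, mul_comm e]
  have independent : LinearIndependent B fun (i : Fin n) (z : B) ↦ g ^ (i : ℕ) • z :=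
    (linearIndependent_monoidHom B B).comp
      (fun i : Fin n ↦ (MulSemiringAction.toRingHom G B (g ^ (i : ℕ)) : B →* B)) fun i j hij ↦
        Fin.ext <| pow_injOn_Iio_orderOf i.isLt j.isLt <|
          eq_of_smul_eq_smul fun z : B ↦ DFunLike.congr_fun hij z
  obtain ⟨z, hz⟩ : ∃ z, ∑ i ∈ Finset.range n, c i * g ^ i • z ≠ 0 := by
    by_contra! h
    have hc := Fintype.linearIndependent_iff.mp independent (fun i ↦ c i) <| funext fun z ↦ by
      simpa [Finset.sum_apply, Finset.sum_range] using h z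
    simpa [c] using hc ⟨0, hg.orderOf_pos⟩
  refine ⟨_, hz, ?_⟩
  have mul_smul_term (i : ℕ) : e * g • (c i * g ^ i • z) = c (i + 1) * g ^ (i + 1) • z := by
    rw [smul_mul', ← mul_assoc, mul_smul_c, smul_smul, ← pow_succ']
  have last_eq_first : c n * g ^ n • z = c 0 * g ^ 0 • z := by
    rw [show c n = c 0 from he, hn, pow_orderOf_eq_one, pow_zero]
  rw [Finset.smul_sum, Finset.mul_sum, Finset.sum_congr rfl fun i _ ↦ mul_smul_term i]
  have shift := (Finset.sum_range_succ' (fun i ↦ c i * g ^ i • z) n).symm.trans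
    (Finset.sum_range_succ (fun i ↦ c i * g ^ i • z) n)
  rwa [last_eq_first, add_right_cancel_iff] at shift

lemma faithfulSMul_of_inertia_eq_bot [Nontrivial B]
    (hG : ∀ P : Ideal B, P.IsMaximal → P.inertia G = ⊥) : FaithfulSMul G B := by
  obtain ⟨P, hP⟩ := Ideal.exists_maximal B
  refine ⟨fun {g h} hgh ↦ ?_⟩
  have hmem : g⁻¹ * h ∈ P.inertia G := fun x ↦ by
    simp [mul_smul, ← hgh]
  rw [hG P hP, Subgroup.mem_bot] at hmem
  exact inv_mul_eq_one.mp hmem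

open scoped Pointwise in
lemma smul_mem_span_singleton_of_mul_smul_eq {g : G} (hg : Subgroup.zpowers g = ⊤) {e : Bˣ} {a : B}
    (ha : e * g • a = a) (h : G) {x : B} (hx : x ∈ Ideal.span {a}) :
    h • x ∈ Ideal.span {a} := by
  have hspan : g • Ideal.span {a} = Ideal.span {a} := by
    rw [Ideal.pointwise_smul_def, Ideal.map_span, Set.image_singleton]
    nth_rw 2 [← ha]
    exact (Ideal.span_singleton_mul_left_unit e.isUnit _).symm
  rw [← smul_eq_of_zpowers_eq_top hg hspan h]
  exact Ideal.smul_mem_pointwise_smul h x _ hx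

lemma not_isPrincipal_of_map_eq_span_singleton [IsDomain B] [SMulCommClass G A B]
    {g : G} {e a : B} (ha0 : a ≠ 0) (ha : e * g • a = a)
    (he : ∀ y : Bˣ, e * g • (y : B) ≠ y) {J : Ideal A}
    (hJ : J.map (algebraMap A B) = Ideal.span {a}) : ¬ Submodule.IsPrincipal J := by
  rintro ⟨b, rfl⟩
  rw [Ideal.submodule_span_eq, Ideal.map_span, Set.image_singleton,
    Ideal.span_singleton_eq_span_singleton] at hJ
  obtain ⟨y, rfl⟩ := hJ
  refine he y (mul_left_cancel₀ (left_ne_zero_of_mul ha0) ?_)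
  rwa [smul_mul', smul_algebraMap, mul_left_comm] at ha

theorem exists_not_isPrincipal_map_eq_span_singleton [IsDomain B] [Finite G]
    [Algebra.IsInvariant A B G] [SMulCommClass G A B]
    (hG : ∀ P : Ideal B, P.IsMaximal → P.inertia G = ⊥) {g : G} (hg : Subgroup.zpowers g = ⊤)
    {e : Bˣ} (he : ∏ i ∈ Finset.range (orderOf g), g ^ i • (e : B) = 1)
    (hne : ∀ y : Bˣ, (e : B) * g • (y : B) ≠ y) :
    ∃ J : Ideal A, ¬ Submodule.IsPrincipal J ∧
      ∃ a : B, J.map (algebraMap A B) = Ideal.span {a} := by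
  have := faithfulSMul_of_inertia_eq_bot hG
  obtain ⟨a, ha0, ha⟩ := exists_ne_zero_mul_smul_eq_of_prod_eq_one (isOfFinOrder_of_finite g) he
  have hJ := map_comap_eq_of_inertia_eq_bot (A := A) hG
    fun h _ ↦ smul_mem_span_singleton_of_mul_smul_eq hg ha h
  exact ⟨_, not_isPrincipal_of_map_eq_span_singleton ha0 ha hne hJ, a, hJ⟩

lemma isPrincipal_pow_finrank_of_map_eq_span_singleton [IsDedekindDomain A] [IsDedekindDomain B]
    [Module.Finite A B] [Module.IsTorsionFree A B] {J : Ideal A} {a : B}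
    (hJ : J.map (algebraMap A B) = Ideal.span {a}) :
    Submodule.IsPrincipal (J ^ Module.finrank A B) := by
  rw [← Ideal.relNorm_algebraMap B J, hJ, Ideal.relNorm_singleton]
  exact ⟨_, rfl⟩

lemma prime_dvd_card_classGroup_of_isPrincipal_pow [IsDedekindDomain A] {p : ℕ} [Fact p.Prime]
    {J : Ideal A} (hJ : ¬ Submodule.IsPrincipal J) (hJp : Submodule.IsPrincipal (J ^ p)) :
    p ∣ Nat.card (ClassGroup A) := by
  have hJ0 : J ∈ nonZeroDivisors (Ideal A) :=
    mem_nonZeroDivisors_of_ne_zero fun h ↦ hJ (h ▸ inferInstanceAs (Submodule.IsPrincipal ⊥))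
  have horder : orderOf (ClassGroup.mk0 ⟨J, hJ0⟩) = p := by
    refine orderOf_eq_prime ?_ (by rwa [Ne, ClassGroup.mk0_eq_one_iff])
    rw [← map_pow, SubmonoidClass.mk_pow, ClassGroup.mk0_eq_one_iff]
    exact hJp
  exact horder ▸ orderOf_dvd_natCard _

open NumberField

variable {K L : Type*} [Field K] [Field L] [NumberField K] [NumberField L] [Algebra K L]
  [IsGalois K L] [IsUnramifiedAtInfinitePlaces K L]

variable (K L) in
lemma finrank_mul_rank_lt_rank (h : 1 < Module.finrank K L) :
    Module.finrank K L * Units.rank K < Units.rank L := by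
  obtain ⟨r, hr⟩ := Nat.exists_eq_add_of_lt (Fintype.card_pos (α := InfinitePlace K))
  rw [Units.rank, Units.rank, IsUnramifiedAtInfinitePlaces.card_infinitePlace K L, hr, mul_comm]
  simp only [zero_add, Nat.add_sub_cancel, add_mul, one_mul]
  omega

theorem prime_dvd_classNumber_of_inertia_eq_bot {p : ℕ} [Fact p.Prime]
    (hp : Module.finrank K L = p)
    (hG : ∀ P : Ideal (𝓞 L), P.IsMaximal → P.inertia Gal(L/K) = ⊥) :
    p ∣ classNumber K := by
  have hcard : Nat.card Gal(L/K) = p := (IsGalois.card_aut_eq_finrank K L).trans hp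
  have : Nontrivial Gal(L/K) := Finite.one_lt_card_iff_nontrivial.mp
    (hcard ▸ (Fact.out : p.Prime).one_lt)
  obtain ⟨σ, hσ⟩ := exists_ne (1 : Gal(L/K))
  have zpowers_eq_top : Subgroup.zpowers σ = ⊤ := zpowers_eq_top_of_prime_card hcard hσ
  have orderOf_eq : orderOf σ = p := by
    rw [← Nat.card_zpowers, zpowers_eq_top, Subgroup.card_top, hcard]
  have hrank : p * Module.finrank ℤ (Additive (𝓞 K)ˣ) < Module.finrank ℤ (Additive (𝓞 L)ˣ) := by
    rw [Units.finrank_eq, Units.finrank_eq, ← hp]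
    exact finrank_mul_rank_lt_rank K L (hp ▸ (Fact.out : p.Prime).one_lt)
  obtain ⟨e, he, hne⟩ := exists_unit_prod_smul_eq_one_mul_smul_ne hrank zpowers_eq_top
    (orderOf_eq ▸ pow_orderOf_eq_one σ)
  obtain ⟨J, hJ, a, hJa⟩ := exists_not_isPrincipal_map_eq_span_singleton (A := 𝓞 K) hG
    zpowers_eq_top (orderOf_eq.symm ▸ he) hne
  have hJp := isPrincipal_pow_finrank_of_map_eq_span_singleton hJa
  rw [← IsFractionRing.finrank_eq (𝓞 K) K (𝓞 L) L, hp] at hJp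
  rw [classNumber, ← Nat.card_eq_fintype_card]
  exact prime_dvd_card_classGroup_of_isPrincipal_pow hJ hJp

end HilbertNinetyFour

section TotalInertia

variable {A B G : Type*} [CommRing A] [CommRing B] [Algebra A B] [Group G] [MulSemiringAction G B]

lemma map_algebraMap_eq_charpoly_of_stabilizer_eq_bot [IsDomain B] [Fintype G]
    [SMulCommClass G A B] {f : A[X]} (hf : f.Monic) (hdeg : f.natDegree = Nat.card G) {w : B}
    (hw : aeval w f = 0) (hstab : MulAction.stabilizer G w = ⊥) :
    f.map (algebraMap A B) = MulSemiringAction.charpoly G w := by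
  have hfB := hf.map (algebraMap A B)
  have smul_injective : Function.Injective fun g : G ↦ g • w := fun g h hgh ↦ by
    have hmem : g⁻¹ * h ∈ MulAction.stabilizer G w := by
      rw [MulAction.mem_stabilizer_iff, mul_smul, inv_smul_eq_iff]
      exact hgh.symm
    rw [hstab, Subgroup.mem_bot] at hmem
    exact inv_mul_eq_one.mp hmem
  have conjugates_le_roots : Finset.univ.val.map (fun g : G ↦ g • w) ≤
      (f.map (algebraMap A B)).roots := by
    rw [Multiset.le_iff_subset (Finset.univ.nodup.map smul_injective)]
    intro x hx
    obtain ⟨g, -, rfl⟩ := Multiset.mem_map.mp hx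
    rw [mem_roots hfB.ne_zero, IsRoot.def, eval_map_algebraMap, aeval_smul, hw, smul_zero]
  refine eq_of_monic_of_dvd_of_natDegree_le (MulSemiringAction.monic_charpoly G w) hfB ?_ ?_
  · rw [← Multiset.prod_X_sub_C_dvd_iff_le_roots hfB.ne_zero,
      Multiset.map_map] at conjugates_le_roots
    exact conjugates_le_roots
  · rw [hf.natDegree_map, hdeg, MulSemiringAction.charpoly_eq,
      natDegree_finsetProd_X_sub_C_eq_card, Finset.card_univ, Nat.card_eq_fintype_card]

lemma map_charpoly_mk_eq_X_sub_C_pow_of_inertia_eq_top [Fintype G] {P : Ideal B}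
    (hP : P.inertia G = ⊤) (w : B) :
    (MulSemiringAction.charpoly G w).map (Ideal.Quotient.mk P) =
      (X - C (Ideal.Quotient.mk P w)) ^ Nat.card G := by
  have mk_smul (g : G) : Ideal.Quotient.mk P (g • w) = Ideal.Quotient.mk P w :=
    Ideal.Quotient.eq.mpr ((hP ▸ Subgroup.mem_top g : g ∈ P.inertia G) w)
  rw [MulSemiringAction.charpoly_eq, Polynomial.map_prod, Nat.card_eq_fintype_card,
    ← Finset.card_univ]
  refine Finset.prod_eq_pow_card fun g _ ↦ ?_
  rw [Polynomial.map_sub, map_X, map_C, mk_smul]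

lemma mk_algebraMap_coeff_cubic_of_inertia_eq_top [IsDomain B] [SMulCommClass G A B]
    (hcard : Nat.card G = 3) {P : Ideal B} (hP : P.inertia G = ⊤) {a b c : A} {w : B}
    (hw : aeval w (Cubic.toPoly ⟨1, a, b, c⟩) = 0) {g : G} (hg : g • w ≠ w) :
    Ideal.Quotient.mk P (algebraMap A B a) = -3 * Ideal.Quotient.mk P w ∧
    Ideal.Quotient.mk P (algebraMap A B b) = 3 * Ideal.Quotient.mk P w ^ 2 ∧
    Ideal.Quotient.mk P (algebraMap A B c) = -Ideal.Quotient.mk P w ^ 3 := by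
  have : Finite G := Nat.finite_of_card_ne_zero (by omega)
  have := Fintype.ofFinite G
  have : Fact (Nat.card G).Prime := ⟨hcard ▸ Nat.prime_three⟩
  have : Nontrivial A := (algebraMap A B).domain_nontrivial
  have hstab : MulAction.stabilizer G w = ⊥ :=
    (Subgroup.eq_bot_or_eq_top_of_prime_card _).resolve_right fun h ↦
      hg (h ▸ Subgroup.mem_top g : g ∈ MulAction.stabilizer G w)
  have hmap := congrArg (Polynomial.map (Ideal.Quotient.mk P)) <|
    map_algebraMap_eq_charpoly_of_stabilizer_eq_bot Cubic.monic_of_a_eq_one'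
    ((Cubic.natDegree_of_a_ne_zero' one_ne_zero).trans hcard.symm) hw hstab
  set z := Ideal.Quotient.mk P w
  rw [map_charpoly_mk_eq_X_sub_C_pow_of_inertia_eq_top hP, ← Cubic.map_toPoly, ← Cubic.map_toPoly,
    hcard, show (X - C z) ^ 3 = (X - C z) * (X - C z) * (X - C z) by ring,
    Cubic.prod_X_sub_C_eq] at hmap
  refine ⟨(Cubic.b_of_eq hmap).trans ?_, (Cubic.c_of_eq hmap).trans ?_,
    (Cubic.d_of_eq hmap).trans ?_⟩ <;> ring

end TotalInertia

section KishiMiyake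

/-- Condition (KM-4) of Kishi and Miyake, which rules out ramification above `3`. -/
def KishiMiyakeCongruences (u v : ℤ) : Prop :=
  ¬ (3 ∣ v) ∨
    (3 ∣ v ∧ ¬ u * v ≡ 3 [ZMOD 9] ∧ (u ≡ v + 1 [ZMOD 9] ∨ u ≡ v - 1 [ZMOD 9])) ∨
    (3 ∣ v ∧ u * v ≡ 3 [ZMOD 9] ∧ (u ≡ v + 1 [ZMOD 27] ∨ u ≡ v - 1 [ZMOD 27]))

section CubicIntegers

variable {K L : Type*} [Field K] [Field L] [Algebra K L] [CharZero L] {η : L}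

-- The prime `3` divides the traces of `η` and `η - 1`; a reciprocal or a rescaling of `η - 1` is
-- still integral, with trace prime to `3`.
lemma exists_cubic_three_mul_div_sub_one (hη : η ∉ (algebraMap K L).range) {k m : ℤ} (hm : m ≠ 0)
    (hroot : η ^ 3 + 3 * k * η ^ 2 - (3 * k + 1 - 9 * m) = 0) :
    ∃ w ∉ (algebraMap K L).range,
      w ^ 3 + (1 + 2 * k) * w ^ 2 + 3 * m * (1 + k) * w + 3 * m ^ 2 = 0 := by
  have hη1 : η - 1 ≠ 0 := fun h ↦ hη ⟨1, by rw [map_one, sub_eq_zero.mp h]⟩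
  have hm' : (m : L) ≠ 0 := Int.cast_ne_zero.mpr hm
  refine ⟨3 * m / (η - 1), fun ⟨x, hx⟩ ↦ hη ⟨1 + 3 * m / x, ?_⟩, ?_⟩
  · simp only [map_add, map_one, map_div₀, map_mul, map_ofNat, map_intCast, hx]
    field_simp
    ring
  · field_simp
    linear_combination 3 * m ^ 2 * hroot

lemma exists_cubic_sub_one_div_three (hη : η ∉ (algebraMap K L).range) {j m : ℤ}
    (hroot : η ^ 3 + 3 * (1 + 3 * j) * η ^ 2 - (3 * (1 + 3 * j) + 1 - 27 * m) = 0) :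
    ∃ w ∉ (algebraMap K L).range, w ^ 3 + (2 + 3 * j) * w ^ 2 + (1 + 2 * j) * w + m = 0 := by
  refine ⟨(η - 1) / 3, fun ⟨x, hx⟩ ↦ hη ⟨1 + 3 * x, ?_⟩, ?_⟩
  · rw [map_add, map_one, map_mul, map_ofNat, hx]
    ring
  · linear_combination hroot / 27

lemma exists_cubic_not_three_dvd_of_modEq_add_one {u v : ℤ} (hη : η ∉ (algebraMap K L).range)
    (hroot : η ^ 3 + v * η ^ 2 - u = 0) (hne : u ≠ v + 1) (hv : 3 ∣ v)
    (h : ¬ u * v ≡ 3 [ZMOD 9] ∧ u ≡ v + 1 [ZMOD 9] ∨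
      u * v ≡ 3 [ZMOD 9] ∧ u ≡ v + 1 [ZMOD 27]) :
    ∃ w ∉ (algebraMap K L).range, ∃ a b c : ℤ,
      ¬ 3 ∣ a ∧ w ^ 3 + a * w ^ 2 + b * w + c = 0 := by
  obtain ⟨k, rfl⟩ := hv
  have mul_modEq (n : ℤ) : (3 * k + 1 - 9 * n) * (3 * k) ≡ 3 * k [ZMOD 9] :=
    (Int.modEq_iff_dvd.mpr ⟨3 * n * k - k ^ 2, by ring⟩)
  rcases h with ⟨huv, hu⟩ | ⟨huv, hu⟩
  · obtain ⟨m, hm⟩ := hu.dvd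
    obtain rfl : u = 3 * k + 1 - 9 * m := by omega
    obtain ⟨w, hw, hw_root⟩ := exists_cubic_three_mul_div_sub_one hη (k := k) (m := m)
      (by rintro rfl; simp at hne) (by exact_mod_cast hroot)
    refine ⟨w, hw, 1 + 2 * k, 3 * m * (1 + k), 3 * m ^ 2, fun h ↦ huv ?_, by exact_mod_cast hw_root⟩
    exact (mul_modEq m).trans (Int.modEq_iff_dvd.mpr (by omega))
  · obtain ⟨m, hm⟩ := hu.dvd
    obtain rfl : u = 3 * k + 1 - 9 * (3 * m) := by omega
    obtain ⟨j, rfl⟩ : ∃ j, k = 1 + 3 * j := by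
      have := ((mul_modEq _).symm.trans huv).dvd
      exact ⟨(k - 1) / 3, by omega⟩
    obtain ⟨w, hw, hw_root⟩ := exists_cubic_sub_one_div_three hη (j := j) (m := m)
      (by push_cast at hroot; linear_combination hroot)
    exact ⟨w, hw, 2 + 3 * j, 1 + 2 * j, m, by omega, by exact_mod_cast hw_root⟩

theorem exists_cubic_not_three_dvd {u v : ℤ} (hη : η ∉ (algebraMap K L).range)
    (hroot : η ^ 3 + v * η ^ 2 - u = 0) (hnr : ∀ n : ℤ, n ^ 3 + v * n ^ 2 - u ≠ 0)
    (hKM4 : KishiMiyakeCongruences u v) :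
    ∃ w ∉ (algebraMap K L).range, ∃ a b c : ℤ,
      ¬ 3 ∣ a ∧ w ^ 3 + a * w ^ 2 + b * w + c = 0 := by
  by_cases hv : 3 ∣ v
  · obtain h | h : (¬ u * v ≡ 3 [ZMOD 9] ∧ u ≡ v + 1 [ZMOD 9] ∨
          u * v ≡ 3 [ZMOD 9] ∧ u ≡ v + 1 [ZMOD 27]) ∨
        (¬ u * v ≡ 3 [ZMOD 9] ∧ u ≡ v - 1 [ZMOD 9] ∨
          u * v ≡ 3 [ZMOD 9] ∧ u ≡ v - 1 [ZMOD 27]) := by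
      unfold KishiMiyakeCongruences at hKM4; tauto
    · refine exists_cubic_not_three_dvd_of_modEq_add_one hη hroot (fun h ↦ hnr 1 ?_) hv h
      rw [h]; ring
    · have neg_modEq {n : ℤ} (hn : u ≡ v - 1 [ZMOD n]) : -u ≡ -v + 1 [ZMOD n] := by
        simpa only [neg_sub, neg_add_eq_sub] using hn.neg
      refine exists_cubic_not_three_dvd_of_modEq_add_one (η := -η) (u := -u) (v := -v)
        (by rwa [neg_mem_iff]) ?_ (fun h ↦ hnr (-1) ?_) (dvd_neg.mpr hv) ?_
      · push_cast
        linear_combination -hroot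
      · linear_combination h
      · rw [neg_mul_neg]
        exact h.imp (And.imp_right neg_modEq) (And.imp_right neg_modEq)
  · exact ⟨η, hη, v, 0, -u, hv, by push_cast; linear_combination hroot⟩

end CubicIntegers

section Ramification

open NumberField

variable {K L : Type*} [Field K] [Field L] [Algebra K L]

lemma exists_ringOfIntegers_aeval_cubic_eq_zero {a b c : ℤ} {w : L}
    (hw : w ^ 3 + a * w ^ 2 + b * w + c = 0) :
    ∃ x : 𝓞 L, (x : L) = w ∧ aeval x (Cubic.toPoly ⟨1, a, b, c⟩) = 0 := by
  have haeval : aeval w (Cubic.toPoly ⟨1, a, b, c⟩) = 0 := by simpa [Cubic.toPoly] using hw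
  refine ⟨⟨w, _, Cubic.monic_of_a_eq_one', haeval⟩, rfl, RingOfIntegers.ext ?_⟩
  exact (aeval_algebraMap_apply L _ _).symm.trans (haeval.trans (map_zero _).symm)

variable [IsGalois K L]

lemma mk_coeff_cubic_of_inertia_eq_top (hdeg : Module.finrank K L = 3) {P : Ideal (𝓞 L)}
    (hP : P.inertia Gal(L/K) = ⊤) {w : L} (hw : w ∉ (algebraMap K L).range) {a b c : ℤ}
    (hroot : w ^ 3 + a * w ^ 2 + b * w + c = 0) :
    ∃ z : 𝓞 L ⧸ P, (a : 𝓞 L ⧸ P) = -3 * z ∧ (b : 𝓞 L ⧸ P) = 3 * z ^ 2 ∧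
      (c : 𝓞 L ⧸ P) = -z ^ 3 := by
  have : FiniteDimensional K L := Module.finite_of_finrank_pos (by omega)
  obtain ⟨x, rfl, hx⟩ := exists_ringOfIntegers_aeval_cubic_eq_zero hroot
  obtain ⟨σ, hσ⟩ : ∃ σ : Gal(L/K), σ • x ≠ x := by
    by_contra! h
    exact hw ((IsGalois.mem_range_algebraMap_iff_fixed (F := K) (x : L)).mpr fun σ ↦
      congrArg (algebraMap (𝓞 L) L) (h σ))
  have hcard : Nat.card Gal(L/K) = 3 := (IsGalois.card_aut_eq_finrank K L).trans hdeg
  exact ⟨_, by simpa using mk_algebraMap_coeff_cubic_of_inertia_eq_top hcard hP hx hσ⟩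

lemma three_mem_of_inertia_eq_top (hdeg : Module.finrank K L = 3) {P : Ideal (𝓞 L)} [P.IsPrime]
    (hP : P.inertia Gal(L/K) = ⊤) {η : L} (hη : η ∉ (algebraMap K L).range) {u v : ℤ}
    (huv : IsCoprime u v) (hroot : η ^ 3 + v * η ^ 2 - u = 0) : (3 : 𝓞 L) ∈ P := by
  obtain ⟨z, hv, hz, hu⟩ := mk_coeff_cubic_of_inertia_eq_top (a := v) (b := 0) (c := -u) hdeg hP hη
    (by push_cast; linear_combination hroot)
  rw [← Ideal.Quotient.eq_zero_iff_mem, map_ofNat]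
  by_contra h3
  obtain rfl : z = 0 := by simpa [h3] using hz
  obtain ⟨r, s, hrs⟩ := huv
  have hu0 : (u : 𝓞 L ⧸ P) = 0 := by simpa using hu
  have hrs_mod := congrArg (Int.cast : ℤ → 𝓞 L ⧸ P) hrs
  simp [hu0, hv] at hrs_mod

lemma three_dvd_of_inertia_eq_top (hdeg : Module.finrank K L = 3) {P : Ideal (𝓞 L)} [P.IsPrime]
    (hP : P.inertia Gal(L/K) = ⊤) (h3 : (3 : 𝓞 L) ∈ P) {w : L} (hw : w ∉ (algebraMap K L).range)
    {a b c : ℤ} (hroot : w ^ 3 + a * w ^ 2 + b * w + c = 0) : 3 ∣ a := by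
  obtain ⟨z, ha, -, -⟩ := mk_coeff_cubic_of_inertia_eq_top hdeg hP hw hroot
  have h3' : (3 : 𝓞 L ⧸ P) = 0 := by
    rwa [← Ideal.Quotient.eq_zero_iff_mem, map_ofNat] at h3
  have : CharP (𝓞 L ⧸ P) 3 := (CharP.charP_iff_prime_eq_zero Nat.prime_three).mpr h3'
  rw [h3', neg_zero, zero_mul] at ha
  exact (CharP.intCast_eq_zero_iff (𝓞 L ⧸ P) 3 a).mp ha

theorem inertia_eq_bot_of_kishiMiyakeCongruences [CharZero L]
    (hdeg : Module.finrank K L = 3) {η : L} (hη : η ∉ (algebraMap K L).range)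
    {u v : ℤ} (huv : IsCoprime u v) (hroot : η ^ 3 + v * η ^ 2 - u = 0)
    (hnr : ∀ n : ℤ, n ^ 3 + v * n ^ 2 - u ≠ 0)
    (hKM4 : KishiMiyakeCongruences u v) (P : Ideal (𝓞 L)) [P.IsPrime] :
    P.inertia Gal(L/K) = ⊥ := by
  have : FiniteDimensional K L := Module.finite_of_finrank_pos (by omega)
  have : Fact (Nat.card Gal(L/K)).Prime :=
    ⟨(IsGalois.card_aut_eq_finrank K L).trans hdeg ▸ Nat.prime_three⟩
  refine (Subgroup.eq_bot_or_eq_top_of_prime_card _).resolve_right fun hP ↦ ?_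
  obtain ⟨w, hw, a, b, c, ha, hw_root⟩ := exists_cubic_not_three_dvd hη hroot hnr hKM4
  exact ha (three_dvd_of_inertia_eq_top hdeg hP
    (three_mem_of_inertia_eq_top hdeg hP hη huv hroot) hw hw_root)

end Ramification

end KishiMiyake

section CyclicCubic

section Factorization

variable {L : Type*} [Field L] [NeZero (2 : L)]

lemma X_pow_three_sub_eq_prod_X_sub_C {a b θ γ : L} (hθ : θ ^ 3 - a * θ - b = 0)
    (hγ : γ ^ 2 = 4 * a - 3 * θ ^ 2) :
    X ^ 3 - C a * X - C b = (X - C θ) * (X - C ((-θ + γ) / 2)) * (X - C ((-θ - γ) / 2)) := by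
  have h2 : (2 : L) ≠ 0 := NeZero.ne 2
  have hsum : C ((-θ + γ) / 2) + C ((-θ - γ) / 2) = -C θ := by
    rw [← C_add, ← C_neg]
    congr 1
    field
  have hprod : C ((-θ + γ) / 2) * C ((-θ - γ) / 2) = C θ ^ 2 - C a := by
    rw [← C_mul, ← C_pow, ← C_sub]
    congr 1
    field_simp
    linear_combination -hγ
  have hb : C b = C θ ^ 3 - C a * C θ := by
    rw [← C_pow, ← C_mul, ← C_sub]
    congr 1
    linear_combination -hθ
  rw [hb]
  linear_combination (-(X - C θ)) * hprod + X * (X - C θ) * hsum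

end Factorization

variable {K : Type*} [Field K]

lemma natDegree_X_pow_three_sub (a b : K) : (X ^ 3 - C a * X - C b).natDegree = 3 := by
  compute_degree!

lemma pow_three_sub_ne_zero_of_irreducible {a b : K}
    (hirr : Irreducible (X ^ 3 - C a * X - C b)) (x : K) : x ^ 3 - a * x - b ≠ 0 := fun h ↦
  hirr.not_isRoot_of_natDegree_ne_one (by rw [natDegree_X_pow_three_sub]; decide) (x := x)
    (by simpa using h)

lemma irreducible_map_of_natDegree_eq_three {F : Type*} [Field F] [Algebra F K] {f : F[X]}
    (hf : Irreducible f) (hdeg : f.natDegree = 3) (hK : ¬ 3 ∣ Module.finrank F K) :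
    Irreducible (f.map (algebraMap F K)) := by
  have : FiniteDimensional F K :=
    Module.finite_of_finrank_pos (Nat.pos_of_ne_zero fun h ↦ hK (h ▸ dvd_zero 3))
  refine irreducible_of_degree_le_three_of_not_isRoot (by simp [hdeg]) fun x hx ↦ hK ?_
  have hdvd : minpoly F x ∣ f := minpoly.dvd F x (by simpa [IsRoot, eval_map_algebraMap] using hx)
  have hassoc := (minpoly.irreducible (Algebra.IsIntegral.isIntegral x)).associated_of_dvd hf hdvd
  rw [← hdeg, ← natDegree_eq_of_degree_eq (degree_eq_degree_of_associated hassoc)]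
  exact minpoly.degree_dvd (Algebra.IsIntegral.isIntegral x)

variable [CharZero K] {L : Type*} [Field L] [Algebra K L]

theorem isGalois_of_sq_eq_cubic_discr {a b α : K} (hirr : Irreducible (X ^ 3 - C a * X - C b))
    (hα : α ^ 2 = 4 * a ^ 3 - 27 * b ^ 2) {θ : L} (hgen : Algebra.adjoin K {θ} = ⊤)
    (hθ : aeval θ (X ^ 3 - C a * X - C b) = 0) : IsGalois K L := by
  have : CharZero L := charZero_of_injective_algebraMap (algebraMap K L).injective
  have hθ' : θ ^ 3 - algebraMap K L a * θ - algebraMap K L b = 0 := by simpa using hθ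
  have hderiv : 3 * θ ^ 2 - algebraMap K L a ≠ 0 := by
    simpa [map_ofNat, two_add_one_eq_three] using hirr.separable.aeval_derivative_ne_zero hθ
  -- The discriminant of the cubic is `(3θ² - a)²` times that of its quotient by `X - θ`.
  obtain ⟨γ, hγ⟩ : ∃ γ : L, γ ^ 2 = 4 * algebraMap K L a - 3 * θ ^ 2 := by
    refine ⟨algebraMap K L α / (3 * θ ^ 2 - algebraMap K L a), ?_⟩
    have hα' := congrArg (algebraMap K L) hα
    simp only [map_sub, map_mul, map_pow, map_ofNat] at hα'
    rw [div_pow, div_eq_iff (pow_ne_zero 2 hderiv)]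
    linear_combination hα' +
      27 * (θ ^ 3 - algebraMap K L a * θ + algebraMap K L b) * hθ'
  have : IsSplittingField K L (X ^ 3 - C a * X - C b) := by
    refine ⟨?_, ?_⟩
    · simp only [Polynomial.map_sub, Polynomial.map_mul, Polynomial.map_pow, map_X, map_C]
      rw [X_pow_three_sub_eq_prod_X_sub_C hθ' hγ]
      exact ((Splits.X_sub_C _).mul (Splits.X_sub_C _)).mul (Splits.X_sub_C _)
    · rw [eq_top_iff, ← hgen]
      exact Algebra.adjoin_mono (Set.singleton_subset_iff.mpr
        (mem_rootSet.mpr ⟨hirr.ne_zero, hθ⟩))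
  exact IsGalois.of_separable_splitting_field hirr.separable

end CyclicCubic

section ClassNumber

lemma pow_three_sub_sq_add_mul_eq_zero {R : Type*} [CommRing R] {u v x : R}
    (hx : x ^ 3 + v * x ^ 2 - u = 0) :
    (x ^ 2 + v * x) ^ 3 - u * v * (x ^ 2 + v * x) - u ^ 2 = 0 := by
  linear_combination (x ^ 3 + 2 * v * x ^ 2 + v ^ 2 * x + u) * hx

variable {K : Type*} [Field K] {u v : ℤ}

lemma pow_three_add_ne_zero_of_irreducible
    (hirr : Irreducible (X ^ 3 - C ((u : K) * v) * X - C ((u : K) ^ 2))) (x : K) :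
    x ^ 3 + v * x ^ 2 - u ≠ 0 := fun hx ↦
  pow_three_sub_ne_zero_of_irreducible hirr _ (pow_three_sub_sq_add_mul_eq_zero hx)

lemma exists_notMem_range_pow_three_add_eq_zero {L : Type*} [Field L] [Algebra K L]
    (hirr : Irreducible (X ^ 3 - C ((u : K) * v) * X - C ((u : K) ^ 2))) {θ : L}
    (hθ : aeval θ (X ^ 3 - C ((u : K) * v) * X - C ((u : K) ^ 2)) = 0) :
    ∃ η ∉ (algebraMap K L).range, η ^ 3 + v * η ^ 2 - u = 0 := by
  have hθ' : θ ^ 3 - u * v * θ - u ^ 2 = 0 := by simpa using hθ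
  have hu : (u : L) ≠ 0 := fun h ↦ pow_three_sub_ne_zero_of_irreducible hirr 0 (by
    have : (u : K) = 0 := (algebraMap K L).injective (by simpa using h)
    simp [this])
  have hθ0 : θ ≠ 0 := by
    rintro rfl
    simp [hu] at hθ'
  have hη : (u / θ) ^ 3 + v * (u / θ) ^ 2 - u = 0 := by
    field_simp
    linear_combination -u * hθ'
  refine ⟨u / θ, fun ⟨x, hx⟩ ↦ pow_three_add_ne_zero_of_irreducible hirr x ?_, hη⟩
  exact (algebraMap K L).injective (by simpa [hx] using hη)

open NumberField

theorem three_dvd_classNumber_of_adjoin_root_eq_top [NumberField K] {L : Type*} [Field L]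
    [NumberField L] [Algebra K L] (huv : IsCoprime u v) (hKM4 : KishiMiyakeCongruences u v)
    (hirr : Irreducible (X ^ 3 - C ((u : K) * v) * X - C ((u : K) ^ 2)))
    (hsqrt : ∃ α : K, α ^ 2 = u ^ 3 * (4 * v ^ 3 - 27 * u)) {θ : L}
    (hgen : Algebra.adjoin K {θ} = ⊤)
    (hθ : aeval θ (X ^ 3 - C ((u : K) * v) * X - C ((u : K) ^ 2)) = 0)
    (hdeg : Module.finrank K L = 3) : 3 ∣ classNumber K := by
  obtain ⟨α, hα⟩ := hsqrt
  have : IsGalois K L := isGalois_of_sq_eq_cubic_discr hirr (hα.trans (by ring)) hgen hθ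
  have : IsUnramifiedAtInfinitePlaces K L :=
    IsUnramifiedAtInfinitePlaces_of_odd_finrank (hdeg ▸ by decide)
  obtain ⟨η, hη, hη_root⟩ := exists_notMem_range_pow_three_add_eq_zero hirr hθ
  refine prime_dvd_classNumber_of_inertia_eq_bot hdeg fun P hP ↦ ?_
  have := hP.isPrime
  exact inertia_eq_bot_of_kishiMiyakeCongruences hdeg hη huv hη_root
    (fun n hn ↦ pow_three_add_ne_zero_of_irreducible hirr n (by exact_mod_cast hn)) hKM4 P

theorem kishi_miyake_class_number_div_three_general (u v : ℤ) (hgcd : Int.gcd u v = 1)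
    (hKM4 : KishiMiyakeCongruences u v) (K : Type*) [Field K] [NumberField K]
    (hirr : Irreducible (X ^ 3 - C ((u : K) * v) * X - C ((u : K) ^ 2)))
    (hsqrt : ∃ α : K, α ^ 2 = u ^ 3 * (4 * v ^ 3 - 27 * u)) :
    3 ∣ classNumber K := by
  set f : K[X] := X ^ 3 - C ((u : K) * v) * X - C ((u : K) ^ 2)
  have : Fact (Irreducible f) := ⟨hirr⟩
  have : FiniteDimensional K (AdjoinRoot f) := (AdjoinRoot.powerBasis hirr.ne_zero).finite
  have : CharZero (AdjoinRoot f) :=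
    charZero_of_injective_algebraMap (algebraMap K (AdjoinRoot f)).injective
  have : FiniteDimensional ℚ (AdjoinRoot f) := FiniteDimensional.trans ℚ K (AdjoinRoot f)
  have : NumberField (AdjoinRoot f) := ⟨⟩
  have hdeg : Module.finrank K (AdjoinRoot f) = 3 :=
    (AdjoinRoot.powerBasis hirr.ne_zero).finrank.trans (natDegree_X_pow_three_sub _ _)
  exact three_dvd_classNumber_of_adjoin_root_eq_top (Int.isCoprime_iff_gcd_eq_one.mpr hgcd) hKM4
    hirr hsqrt AdjoinRoot.adjoinRoot_eq_top (AdjoinRoot.aeval_eq f ▸ AdjoinRoot.mk_self) hdeg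

end ClassNumber

/-- Kishi–Miyake parametrization: let `u`, `v` be integers, `f_{u,v}(X) = X³ - uvX - u²`
with discriminant `D = u³(4v³ - 27u)`.  If `gcd(u, v) = 1`, `f_{u,v}` is irreducible over
`ℚ`, `D` is not a perfect square, and condition (KM-4) holds, then `3` divides the class
number of `ℚ(√D)`. -/
theorem kishi_miyake_class_number_div_three
    (u v : ℤ) (D : ℤ) (hD : D = u ^ 3 * (4 * v ^ 3 - 27 * u))
    (hgcd : Int.gcd u v = 1)
    (hirr : Irreducible (X ^ 3 - C ((u : ℚ) * (v : ℚ)) * X - C ((u : ℚ) ^ 2)))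
    (hns : ¬ ∃ s : ℤ, D = s ^ 2)
    (hKM4 : ¬ (3 ∣ v) ∨
      (3 ∣ v ∧ ¬ u * v ≡ 3 [ZMOD 9] ∧ (u ≡ v + 1 [ZMOD 9] ∨ u ≡ v - 1 [ZMOD 9])) ∨
      (3 ∣ v ∧ u * v ≡ 3 [ZMOD 9] ∧ (u ≡ v + 1 [ZMOD 27] ∨ u ≡ v - 1 [ZMOD 27])))
    (K : Type*) [Field K] [NumberField K] (hdeg : Module.finrank ℚ K = 2)
    (hsqrt : ∃ α : K, α ^ 2 = (D : K)) :
    3 ∣ NumberField.classNumber K := by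
  have hirrK := irreducible_map_of_natDegree_eq_three (K := K) hirr
    (natDegree_X_pow_three_sub _ _) (by omega)
  exact kishi_miyake_class_number_div_three_general u v hgcd hKM4 K (by simpa using hirrK)
    (by simpa [hD] using hsqrt)
end

section
/- Let a and b be integers such that g(X) = X³ − aX − b is irreducible over ℚ and such that either 3² ∤ a or 3³ ∤ b. Let θ be a root of g and let K = ℚ(θ). Then the prime 3 is totally ramified in K/ℚ (i.e., 3·O_K = 𝔓³ for a prime ideal 𝔓 of O_K) if and only if one of the following holds: (LN-1) 1 ≤ v₃(b) ≤ v₃(a); (LN-2) 3 ∣ a, a ≢ 3 (mod 9), 3 ∤ b, and b² ≢ a + 1 (mod 9); (LN-3) a ≡ 3 (mod 9), 3 ∤ b, and b² ≢ a + 1 (mod 27). -/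
open Polynomial

/-!
Let `n` be the degree. If `p` is totally ramified with prime `P`, an element of `P ^ m` has all its
conjugates divisible by `p ^ (m / n)`, so the `p`-adic Newton polygon of its minimal polynomial lies
above the segment from `(0, m)` to `(n, 0)`. Conversely, if the Newton polygon of `x` *is* that
segment, with `m` prime to `n`, then `n * v(x) = m * v(p)` at every prime `v` above `p`, so `n`
divides the ramification index `v(p)`, which must then be `n`.

For `X ^ 3 - a * X - b` and `p = 3` both directions are applied to a shift `θ - t` of the root.
If `3 ∣ b` take `t = 0`. If `3 ∤ b` take `t = b`, where the constant term of the shifted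
polynomial is `b * (b ^ 2 - a - 1)`; when `27` divides it, `θ - b` is divisible by `3` and a further
shift by a multiple of `3` brings it into `P ^ 4`, which the coefficient `3 * t` of `X ^ 2` forbids.
-/

open Module IsDedekindDomain

/-! ### Newton polygons with a single segment -/

theorem exists_ne_valuation_le_of_sum_eq_zero {ι R Γ₀ : Type*} [Ring R]
    [LinearOrderedCommMonoidWithZero Γ₀] (v : Valuation R Γ₀) {s : Finset ι} {f : ι → R}
    (hsum : ∑ i ∈ s, f i = 0) {j : ι} (hj : j ∈ s) (hpos : 0 < v (f j)) :
    ∃ i ∈ s, i ≠ j ∧ v (f j) ≤ v (f i) := by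
  classical
  by_contra! hlt
  have hv := v.map_sum_eq_of_lt hj fun i hi ↦ by
    rw [Finset.mem_sdiff, Finset.mem_singleton] at hi
    exact hlt i hi.1 hi.2
  rw [hsum, map_zero] at hv
  exact hpos.ne hv

theorem valuation_pow_natDegree_eq_of_isRoot {R Γ₀ : Type*} [CommRing R]
    [LinearOrderedCommGroupWithZero Γ₀] (v : Valuation R Γ₀) {f : R[X]} (hf : f.Monic) {x : R}
    (hx : f.IsRoot x)
    (hslope : ∀ i, v (f.coeff i) ^ f.natDegree ≤ v (f.coeff 0) ^ (f.natDegree - i)) :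
    v x ^ f.natDegree = v (f.coeff 0) := by
  set n := f.natDegree
  set c := v (f.coeff 0)
  let term (i : ℕ) : R := f.coeff i * x ^ i
  have hsum : ∑ i ∈ Finset.range (n + 1), term i = 0 := by rw [← eval_eq_sum_range]; exact hx
  have hterm_zero : v (term 0) = c := by simp [term, c]
  have hterm_n : v (term n) = v x ^ n := by simp [term, n, hf]
  have hterm_pow (i : ℕ) : v (term i) ^ n ≤ c ^ (n - i) * (v x ^ n) ^ i := by
    rw [map_mul, mul_pow, map_pow, pow_right_comm]
    exact mul_le_mul_left (hslope i) _
  rcases lt_trichotomy (v x ^ n) c with hlt | heq | hgt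
  · have hc : 0 < c := zero_le.trans_lt hlt
    obtain ⟨i, hi, hi0, hle⟩ := exists_ne_valuation_le_of_sum_eq_zero v hsum
      (Finset.mem_range.2 n.succ_pos) (hterm_zero ▸ hc)
    refine absurd hle (lt_of_pow_lt_pow_left₀ n zero_le ?_).not_ge
    calc v (term i) ^ n ≤ c ^ (n - i) * (v x ^ n) ^ i := hterm_pow i
      _ < c ^ (n - i) * c ^ i :=
        mul_lt_mul_of_pos_left (pow_lt_pow_left₀ hlt zero_le hi0) (pow_pos hc _)
      _ = v (term 0) ^ n := by
        rw [← pow_add, Nat.sub_add_cancel (Finset.mem_range_succ_iff.1 hi), hterm_zero]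
  · exact heq
  · have hw : 0 < v x ^ n := zero_le.trans_lt hgt
    obtain ⟨i, hi, hin, hle⟩ := exists_ne_valuation_le_of_sum_eq_zero v hsum
      (Finset.self_mem_range_succ n) (hterm_n ▸ hw)
    have hi : i < n := lt_of_le_of_ne (Finset.mem_range_succ_iff.1 hi) hin
    refine absurd hle (lt_of_pow_lt_pow_left₀ n zero_le ?_).not_ge
    calc v (term i) ^ n ≤ c ^ (n - i) * (v x ^ n) ^ i := hterm_pow i
      _ < (v x ^ n) ^ (n - i) * (v x ^ n) ^ i :=
        mul_lt_mul_of_pos_right (pow_lt_pow_left₀ hgt zero_le (Nat.sub_ne_zero_of_lt hi))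
          (pow_pos hw _)
      _ = v (term n) ^ n := by rw [← pow_add, Nat.sub_add_cancel hi.le, hterm_n]

/-- The `p`-adic Newton polygon of the monic polynomial `f` of degree `n` lies on or above the
segment from `(0, m)` to `(n, 0)`, i.e. `m * (n - i) ≤ n * v_p(a_i)` for `i ≤ n`. Truncated
subtraction makes the condition void for `n < i`. -/
def IsAboveSegment (p m : ℕ) (f : ℤ[X]) : Prop :=
  ∀ i, (p : ℤ) ^ (m * (f.natDegree - i)) ∣ f.coeff i ^ f.natDegree

theorem IsAboveSegment.pow_dvd_coeff_zero {p m : ℕ} {f : ℤ[X]} (h : IsAboveSegment p m f)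
    (hf : f.natDegree ≠ 0) : (p : ℤ) ^ m ∣ f.coeff 0 := by
  rw [← Int.pow_dvd_pow_iff hf, ← pow_mul]
  exact h 0

section HeightOneSpectrum

variable {R : Type*} [CommRing R] [IsDedekindDomain R] {v : HeightOneSpectrum R} {p m n : ℕ}

theorem intValuation_intCast_eq_pow (hp : p.Prime) (hv : (p : R) ∈ v.asIdeal) {a : ℤ}
    (hdvd : (p : ℤ) ^ m ∣ a) (hndvd : ¬ (p : ℤ) ^ (m + 1) ∣ a) :
    v.intValuation (a : R) = v.intValuation (p : R) ^ m := by
  obtain ⟨u, rfl⟩ := hdvd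
  have hcop : IsCoprime (p : ℤ) u := by
    rw [(Nat.prime_iff_prime_int.1 hp).irreducible.coprime_iff_not_dvd]
    exact fun hu ↦ hndvd (pow_succ (p : ℤ) m ▸ mul_dvd_mul_left _ hu)
  have hu : v.intValuation (u : R) = 1 := by
    rw [v.intValuation_eq_one_iff_mem_primeCompl]
    intro hmem
    obtain ⟨r, s, hrs⟩ := hcop.map (Int.castRingHom R)
    refine v.isPrime.ne_top ((Ideal.eq_top_iff_one _).2 (hrs ▸ add_mem ?_ ?_))
    · exact Ideal.mul_mem_left _ _ (by simpa using hv)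
    · exact Ideal.mul_mem_left _ _ (by simpa using hmem)
  push_cast
  rw [map_mul, map_pow, hu, mul_one]

theorem IsAboveSegment.intValuation_pow_natDegree {f : ℤ[X]} (h : IsAboveSegment p m f)
    (hp : p.Prime) (hf : f.Monic) (hndvd : ¬ (p : ℤ) ^ (m + 1) ∣ f.coeff 0)
    {x : R} (hx : aeval x f = 0) (hv : (p : R) ∈ v.asIdeal) :
    v.intValuation x ^ f.natDegree = v.intValuation (p : R) ^ m := by
  have hdeg : f.natDegree ≠ 0 := by
    rw [Ne, hf.natDegree_eq_zero]
    rintro rfl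
    simp at hx
  have hval_zero := intValuation_intCast_eq_pow hp hv (h.pow_dvd_coeff_zero hdeg) hndvd
  have hslope (i : ℕ) : v.intValuation (f.coeff i : R) ^ f.natDegree ≤
      v.intValuation (f.coeff 0 : R) ^ (f.natDegree - i) := by
    obtain ⟨q, hq⟩ := h i
    calc v.intValuation (f.coeff i : R) ^ f.natDegree
        = v.intValuation (p : R) ^ (m * (f.natDegree - i)) * v.intValuation (q : R) := by
          rw [← map_pow, ← Int.cast_pow, hq]
          simp
      _ ≤ v.intValuation (p : R) ^ (m * (f.natDegree - i)) :=
          mul_le_of_le_one_right zero_le (v.intValuation_le_one _)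
      _ = v.intValuation (f.coeff 0 : R) ^ (f.natDegree - i) := by rw [hval_zero, pow_mul]
  have hroot := valuation_pow_natDegree_eq_of_isRoot v.intValuation (hf.map (algebraMap ℤ R))
    (x := x) (by rwa [IsRoot, eval_map_algebraMap])
  simp only [hf.natDegree_map, coeff_map, eq_intCast] at hroot
  rw [hroot hslope, hval_zero]

theorem mem_asIdeal_pow_of_intValuation_pow_eq (hcop : n.Coprime m) {x y : R}
    (hy : y ∈ v.asIdeal) (h : v.intValuation x ^ n = v.intValuation y ^ m) :
    y ∈ v.asIdeal ^ n := by
  rcases eq_or_ne y 0 with rfl | hy0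
  · exact zero_mem _
  have hlog := congrArg WithZero.log h
  rw [WithZero.log_pow, WithZero.log_pow, nsmul_eq_mul, nsmul_eq_mul] at hlog
  have hdvd : (n : ℤ) ∣ (v.intValuation y).log :=
    (Nat.isCoprime_iff_coprime.2 hcop).dvd_of_dvd_mul_left (Dvd.intro _ hlog)
  have hneg : (v.intValuation y).log < 0 := by
    rw [WithZero.log_lt_iff_lt_exp (v.intValuation_ne_zero y hy0)]
    exact (v.intValuation_lt_one_iff_mem y).2 hy
  rw [← v.intValuation_le_pow_iff_mem]
  apply WithZero.le_exp_of_log_le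
  have := Int.le_of_dvd (neg_pos.2 hneg) (dvd_neg.2 hdvd)
  omega

end HeightOneSpectrum

/-! ### Coefficients of minimal polynomials -/

theorem isIntegral_coeff_of_forall_mem_roots {R L : Type*} [CommRing R] [CommRing L] [IsDomain L]
    [Algebra R L] {f : L[X]} (hmonic : f.Monic) (hsplits : f.Splits)
    (hroots : ∀ z ∈ f.roots, IsIntegral R z) (i : ℕ) : IsIntegral R (f.coeff i) := by
  have hlift := hsplits.mem_lift_of_roots_mem_range hmonic (algebraMap (integralClosure R L) L)
    fun z hz ↦ ⟨⟨z, hroots z hz⟩, rfl⟩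
  obtain ⟨y, hy⟩ := (lifts_iff_coeff_lifts f).1 hlift i
  exact hy ▸ y.2

theorem dvd_of_isIntegral_of_mul_algebraMap_eq {R L : Type*} [CommRing R] [IsDomain R]
    [IsIntegrallyClosed R] [Field L] [Algebra R L] [FaithfulSMul R L] {c d : R} {y : L}
    (hc : c ≠ 0) (hy : IsIntegral R y) (h : y * algebraMap R L c = algebraMap R L d) : c ∣ d := by
  let F := FractionRing R
  let : Algebra F L := FractionRing.liftAlgebra _ _
  have hcF : algebraMap R F c ≠ 0 := by simpa using hc
  have hyF : y = algebraMap F L (algebraMap R F d / algebraMap R F c) := by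
    rw [map_div₀, ← IsScalarTower.algebraMap_apply, ← IsScalarTower.algebraMap_apply,
      eq_div_iff (by simpa using hc), h]
  rw [hyF, isIntegral_algebraMap_iff (algebraMap F L).injective,
    IsIntegrallyClosed.isIntegral_iff] at hy
  obtain ⟨q, hq⟩ := hy
  rw [eq_div_iff hcF, ← map_mul] at hq
  exact ⟨q, by rw [mul_comm, FaithfulSMul.algebraMap_injective R F hq]⟩

theorem minpoly_coeff_zero_dvd_norm {R S : Type*} [CommRing R] [IsDomain R] [IsIntegrallyClosed R]
    [CommRing S] [IsDomain S] [Algebra R S] [Module.Free R S] [Module.Finite R S] (x : S) :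
    (minpoly R x).coeff 0 ∣ Algebra.norm R x := by
  have hroot : aeval x (Algebra.lmul R S x).charpoly = 0 := by
    apply Algebra.lmul_injective (R := R)
    rw [← aeval_algHom_apply, LinearMap.aeval_self_charpoly, map_zero]
  obtain ⟨q, hq⟩ := minpoly.isIntegrallyClosed_dvd (Algebra.IsIntegral.isIntegral x) hroot
  rw [Algebra.norm_apply, LinearMap.det_eq_sign_charpoly_coeff, hq, mul_coeff_zero]
  exact (dvd_mul_right _ _).mul_left _

section Minpoly

variable {R S : Type*} [CommRing R] [IsDomain R] [IsIntegrallyClosed R] [CommRing S] [IsDomain S]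
  [Algebra R S] [IsTorsionFree R S]

theorem minpoly_sub_algebraMap {x : S} (hx : IsIntegral R x) (r : R) :
    minpoly R (x - algebraMap R S r) = (minpoly R x).comp (X + C r) := by
  let F := FractionRing R
  let L := FractionRing S
  let : Algebra F L := FractionRing.liftAlgebra _ _
  apply map_injective _ (FaithfulSMul.algebraMap_injective R F)
  rw [← minpoly.isIntegrallyClosed_eq_field_fractions F L (hx.sub isIntegral_algebraMap),
    Polynomial.map_comp, ← minpoly.isIntegrallyClosed_eq_field_fractions F L hx, map_sub,
    ← IsScalarTower.algebraMap_apply, IsScalarTower.algebraMap_apply R F L,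
    minpoly.sub_algebraMap]
  simp

variable [Algebra.IsIntegral R S]

theorem isIntegral_div_of_algebraMap_dvd_pow {L : Type*} [Field L] [IsAlgClosed L] [Algebra R L]
    [FaithfulSMul R L] {x : S} {c : R} {n : ℕ} (hc : c ≠ 0) (hn : n ≠ 0)
    (hdvd : algebraMap R S c ∣ x ^ n) {ϖ z : L} (hϖ : ϖ ^ n = algebraMap R L c)
    (hz : aeval z (minpoly R x) = 0) : IsIntegral R (z / ϖ) := by
  obtain ⟨y, hy⟩ := hdvd
  let F := FractionRing R
  let E := FractionRing S
  let : Algebra F E := FractionRing.liftAlgebra _ _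
  let : Algebra F L := FractionRing.liftAlgebra _ _
  have hx : IsIntegral R x := Algebra.IsIntegral.isIntegral x
  have hzF : aeval z (minpoly F (algebraMap S E x)) = 0 := by
    rwa [minpoly.isIntegrallyClosed_eq_field_fractions F E hx, aeval_map_algebraMap]
  obtain ⟨σ, hσ⟩ := IntermediateField.exists_algHom_of_splits_of_aeval
    (fun s ↦ ⟨Algebra.IsIntegral.isIntegral s, IsAlgClosed.splits _⟩) hzF
  have hcL : algebraMap R L c ≠ 0 := by simpa using hc
  have hpow : (z / ϖ) ^ n = σ (algebraMap S E y) := by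
    rw [div_pow, hϖ, div_eq_iff hcL, ← hσ, ← map_pow, ← map_pow, hy, map_mul, map_mul,
      ← IsScalarTower.algebraMap_apply, mul_comm, IsScalarTower.algebraMap_apply R F E, σ.commutes,
      ← IsScalarTower.algebraMap_apply]
  refine IsIntegral.of_pow hn.bot_lt (hpow ▸ ?_)
  exact (Algebra.IsIntegral.isIntegral (R := R) y).algebraMap.map (σ.restrictScalars R)

theorem pow_dvd_minpoly_coeff_pow {x : S} {c : R} {n : ℕ} (hc : c ≠ 0)
    (hn : n ≠ 0) (hdvd : algebraMap R S c ∣ x ^ n) (i : ℕ) :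
    c ^ ((minpoly R x).natDegree - i) ∣ (minpoly R x).coeff i ^ n := by
  let F := FractionRing R
  let L := AlgebraicClosure F
  set f := minpoly R x
  have : FaithfulSMul R L := .trans R F L
  have hf : f.Monic := minpoly.monic (Algebra.IsIntegral.isIntegral x)
  obtain ⟨ϖ, hϖ⟩ := IsAlgClosed.exists_pow_nat_eq (algebraMap R L c) hn.bot_lt
  have hϖ0 : ϖ ≠ 0 := by
    rintro rfl
    rw [zero_pow hn, eq_comm, FaithfulSMul.algebraMap_eq_zero_iff] at hϖ
    exact hc hϖ
  let g := (f.map (algebraMap R L)).scaleRoots ϖ⁻¹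
  have hg : g.Monic := (monic_scaleRoots_iff _).2 (hf.map _)
  have hroots (z : L) (hz : z ∈ g.roots) : IsIntegral R z := by
    rw [roots_scaleRoots _ (isUnit_iff_ne_zero.2 (inv_ne_zero hϖ0)), Multiset.mem_map] at hz
    obtain ⟨w, hw, rfl⟩ := hz
    rw [mul_comm, ← div_eq_mul_inv]
    exact isIntegral_div_of_algebraMap_dvd_pow hc hn hdvd hϖ
      (by simpa [aeval_def, eval_map] using isRoot_of_mem_roots hw)
  have hcoeff : IsIntegral R (g.coeff i) :=
    isIntegral_coeff_of_forall_mem_roots hg (IsAlgClosed.splits g) hroots i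
  have hpow : g.coeff i ^ n * algebraMap R L (c ^ (f.natDegree - i)) =
      algebraMap R L (f.coeff i ^ n) := by
    rw [coeff_scaleRoots, coeff_map, hf.natDegree_map, mul_pow, ← pow_mul, mul_comm _ n, pow_mul,
      inv_pow, hϖ, map_pow, map_pow, mul_assoc, ← mul_pow, inv_mul_cancel₀ (by simpa using hc),
      one_pow, mul_one]
  exact dvd_of_isIntegral_of_mul_algebraMap_eq (pow_ne_zero _ hc) (hcoeff.pow n) hpow

end Minpoly

/-! ### Totally ramified primes -/

/-- `P` is a prime of `S` with `p S = P ^ n`, where `n` is the rank of `S` over `ℤ`; for `S` the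
ring of integers of a number field, this says that `p` is totally ramified, with `P` above it. -/
structure IsTotallyRamifiedPrime {S : Type*} [CommRing S] (p : ℕ) (P : Ideal S) : Prop where
  isPrime : P.IsPrime
  span_eq_pow : Ideal.span {(p : S)} = P ^ finrank ℤ S

theorem exists_sub_intCast_mem_of_prime_absNorm {S : Type*} [CommRing S] [IsDedekindDomain S]
    [Module.Free ℤ S] {P : Ideal S} (hP : P.absNorm.Prime) (x : S) : ∃ t : ℤ, x - t ∈ P := by
  have : Fact P.absNorm.Prime := ⟨hP⟩
  have hcard : Nat.card (S ⧸ P) = P.absNorm := by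
    rw [Ideal.absNorm_apply, Submodule.cardQuot_apply]
  have : Nontrivial (S ⧸ P) := Ideal.Quotient.nontrivial_iff.2 fun htop ↦
    hP.ne_one (Ideal.absNorm_eq_one_iff.2 htop)
  obtain ⟨t, ht⟩ := mem_zmultiples_of_prime_card hcard (g' := Ideal.Quotient.mk P x) one_ne_zero
  exact ⟨t, Ideal.Quotient.eq.1 (by simp [← ht])⟩

section TotallyRamified

variable {S : Type*} [CommRing S] [IsDedekindDomain S] [Module.Free ℤ S] [Module.Finite ℤ S]
  {p m : ℕ} {P : Ideal S}

theorem isTotallyRamifiedPrime_of_mem_pow (hp : p.Prime) (hP : P.IsPrime)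
    (hmem : (p : S) ∈ P ^ finrank ℤ S) : IsTotallyRamifiedPrime p P := by
  have hn : finrank ℤ S ≠ 0 := finrank_pos.ne'
  obtain ⟨J, hJ⟩ := Ideal.dvd_span_singleton.2 hmem
  have hnorm : P.absNorm ^ finrank ℤ S * J.absNorm = p ^ finrank ℤ S := by
    rw [← map_pow, ← map_mul, ← hJ, Ideal.absNorm_span_natCast]
  have hdvd : P.absNorm ∣ p :=
    (Nat.pow_dvd_pow_iff hn).1 (Dvd.intro _ hnorm)
  have hPnorm : P.absNorm = p :=
    ((Nat.dvd_prime hp).1 hdvd).resolve_left (mt Ideal.absNorm_eq_one_iff.1 hP.ne_top)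
  have hJtop : J = ⊤ := by
    rw [← Ideal.absNorm_eq_one_iff]
    rw [hPnorm] at hnorm
    exact (Nat.mul_eq_left (pow_ne_zero _ hp.ne_zero)).1 hnorm
  exact ⟨hP, by rw [hJ, hJtop, Ideal.mul_top]⟩

namespace IsTotallyRamifiedPrime

theorem absNorm_eq (h : IsTotallyRamifiedPrime p P) : P.absNorm = p := by
  refine Nat.pow_left_injective (finrank_pos (R := ℤ) (M := S)).ne' ?_
  simp only [← map_pow, ← h.span_eq_pow, Ideal.absNorm_span_natCast]

theorem eq_of_isPrime_of_mem (h : IsTotallyRamifiedPrime p P) (hp : p ≠ 0) {Q : Ideal S}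
    (hQ : Q.IsPrime) (hpQ : (p : S) ∈ Q) : Q = P := by
  have hbot : P ≠ ⊥ := by
    rw [← Ideal.absNorm_eq_zero_iff.ne, h.absNorm_eq]
    exact hp
  have hle : P ≤ Q := by
    apply hQ.le_of_pow_le
    rw [← h.span_eq_pow]
    exact (Ideal.span_singleton_le_iff_mem Q).2 hpQ
  exact ((h.isPrime.isMaximal hbot).eq_of_le hQ.ne_top hle).symm

theorem pow_dvd_of_pow_dvd_absNorm (h : IsTotallyRamifiedPrime p P) (hp : p.Prime) {I : Ideal S}
    (hI : p ^ m ∣ I.absNorm) : P ^ m ∣ I := by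
  induction m generalizing I with
  | zero => simp
  | succ m ih =>
    obtain ⟨Q, hQ, hQp, J, rfl⟩ := Ideal.exists_isMaximal_dvd_of_dvd_absNorm' hp I
      ((dvd_pow_self p m.succ_ne_zero).trans hI)
    have hpQ : (p : S) ∈ Q := by
      have : (p : ℤ) ∈ Q.under ℤ := hQp ▸ Ideal.mem_span_singleton_self _
      simpa using this
    obtain rfl := h.eq_of_isPrime_of_mem hp.ne_zero hQ.isPrime hpQ
    rw [map_mul, h.absNorm_eq, pow_succ'] at hI
    rw [pow_succ']
    exact mul_dvd_mul_left _ (ih (Nat.dvd_of_mul_dvd_mul_left hp.pos hI))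

theorem mem_pow_of_pow_dvd_minpoly_coeff_zero (h : IsTotallyRamifiedPrime p P) (hp : p.Prime)
    {x : S} (hx : (p : ℤ) ^ m ∣ (minpoly ℤ x).coeff 0) : x ∈ P ^ m := by
  rw [← Ideal.dvd_span_singleton]
  apply h.pow_dvd_of_pow_dvd_absNorm hp
  rw [Ideal.absNorm_span_singleton, ← Int.natCast_dvd, Nat.cast_pow]
  exact hx.trans (minpoly_coeff_zero_dvd_norm x)

theorem isAboveSegment_minpoly (h : IsTotallyRamifiedPrime p P) (hp : p ≠ 0) {x : S}
    (hx : x ∈ P ^ m) (hdeg : (minpoly ℤ x).natDegree = finrank ℤ S) :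
    IsAboveSegment p m (minpoly ℤ x) := by
  have hdvd : algebraMap ℤ S ((p : ℤ) ^ m) ∣ x ^ finrank ℤ S := by
    rw [map_pow, map_natCast, ← Ideal.mem_span_singleton, ← Ideal.span_singleton_pow,
      h.span_eq_pow, pow_right_comm]
    exact Ideal.pow_mem_pow hx _
  have hn : finrank ℤ S ≠ 0 := finrank_pos.ne'
  rw [← hdeg] at hdvd hn
  intro i
  rw [pow_mul]
  exact pow_dvd_minpoly_coeff_pow (pow_ne_zero m (Nat.cast_ne_zero.2 hp)) hn hdvd i

end IsTotallyRamifiedPrime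

theorem exists_heightOneSpectrum_natCast_mem (hp : p.Prime) :
    ∃ v : HeightOneSpectrum S, (p : S) ∈ v.asIdeal := by
  have hdvd : p ∣ (Ideal.span {(p : S)}).absNorm := by
    rw [Ideal.absNorm_span_natCast]
    exact dvd_pow_self p finrank_pos.ne'
  obtain ⟨P, hmax, -, hP⟩ := Ideal.exists_isMaximal_dvd_of_dvd_absNorm' hp _ hdvd
  have hmem : (p : S) ∈ P := Ideal.dvd_span_singleton.1 hP
  have : CharZero S := charZero_of_injective_algebraMap (FaithfulSMul.algebraMap_injective ℤ S)
  exact ⟨⟨P, hmax.isPrime, fun hbot ↦ hp.ne_zero (by simpa [hbot] using hmem)⟩, hmem⟩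

theorem exists_isTotallyRamifiedPrime_of_isAboveSegment (hp : p.Prime) {f : ℤ[X]} (hf : f.Monic)
    (hdeg : f.natDegree = finrank ℤ S) {x : S} (hx : aeval x f = 0) (hm : f.natDegree.Coprime m)
    (hseg : IsAboveSegment p m f) (hndvd : ¬ (p : ℤ) ^ (m + 1) ∣ f.coeff 0) :
    ∃ P : Ideal S, IsTotallyRamifiedPrime p P := by
  obtain ⟨v, hv⟩ := exists_heightOneSpectrum_natCast_mem (S := S) hp
  refine ⟨v.asIdeal, isTotallyRamifiedPrime_of_mem_pow hp v.isPrime (hdeg ▸ ?_)⟩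
  exact mem_asIdeal_pow_of_intValuation_pow_eq hm hv
    (hseg.intValuation_pow_natDegree hp hf hndvd hx hv)

end TotallyRamified

/-! ### Shifts of `X ^ 3 - a * X - b` -/

theorem pow_succ_dvd_of_pow_dvd_pow {M : Type*} [CommMonoidWithZero M] [IsCancelMulZero M]
    {p x : M} (hp : Prime p) {j k n : ℕ} (hjk : n * j < k) (h : p ^ k ∣ x ^ n) :
    p ^ (j + 1) ∣ x := by
  by_contra hx
  rw [pow_dvd_iff_le_emultiplicity, not_le] at hx
  rw [pow_dvd_iff_le_emultiplicity, emultiplicity_pow hp] at h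
  obtain ⟨e, he⟩ := ENat.ne_top_iff_exists.1 hx.ne_top
  rw [← he] at h hx
  norm_cast at h hx
  exact (h.trans (Nat.mul_le_mul_left n (Nat.le_of_lt_succ hx))).not_gt hjk

theorem isTotallyRamifiedPrime_three_iff {S : Type*} [CommRing S] (hrank : finrank ℤ S = 3)
    {P : Ideal S} :
    IsTotallyRamifiedPrime 3 P ↔ P.IsPrime ∧ Ideal.span {(3 : S)} = P ^ 3 := by
  refine ⟨fun h ↦ ⟨h.isPrime, ?_⟩, fun h ↦ ⟨h.1, ?_⟩⟩
  · simpa [hrank] using h.span_eq_pow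
  · simpa [hrank] using h.2

section Cubic

/-- The cubic `(X + t) ^ 3 - a * (X + t) - b`, whose roots are those of `X ^ 3 - a * X - b` shifted
by `-t`. -/
def shiftedCubic (a b t : ℤ) : Cubic ℤ := ⟨1, 3 * t, 3 * t ^ 2 - a, t ^ 3 - a * t - b⟩

theorem comp_X_add_C_eq_shiftedCubic (a b t : ℤ) :
    (X ^ 3 - C a * X - C b).comp (X + C t) = (shiftedCubic a b t).toPoly := by
  simp only [shiftedCubic, Cubic.toPoly, sub_comp, mul_comp, pow_comp, X_comp, C_comp, map_one,
    map_mul, map_sub, map_pow, map_ofNat]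
  ring

theorem isAboveSegment_toPoly_iff {p m : ℕ} {P : Cubic ℤ} (ha : P.a = 1) :
    IsAboveSegment p m P.toPoly ↔
      (p : ℤ) ^ m ∣ P.d ∧ (p : ℤ) ^ (m * 2) ∣ P.c ^ 3 ∧ (p : ℤ) ^ m ∣ P.b ^ 3 := by
  have hdeg : P.toPoly.natDegree = 3 := Cubic.natDegree_of_a_ne_zero (by simp [ha])
  rw [IsAboveSegment, hdeg]
  constructor
  · intro h
    refine ⟨?_, by simpa using h 1, by simpa using h 2⟩
    rw [← Int.pow_dvd_pow_iff three_ne_zero, ← pow_mul]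
    simpa using h 0
  · rintro ⟨hd, hc, hb⟩ (_ | _ | _ | i)
    · simpa [pow_mul] using pow_dvd_pow_of_dvd hd 3
    · simpa using hc
    · simpa using hb
    · simp

variable {a b : ℤ}

theorem one_le_emultiplicity_three_and_le_iff (hval : ¬ 9 ∣ a ∨ ¬ 27 ∣ b) :
    1 ≤ emultiplicity 3 b ∧ emultiplicity 3 b ≤ emultiplicity 3 a ↔
      3 ∣ b ∧ 3 ∣ a ∧ (9 ∣ b → 9 ∣ a) := by
  rw [← Nat.cast_one, ← pow_dvd_iff_le_emultiplicity, pow_one, emultiplicity_le_emultiplicity_iff]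
  refine and_congr_right fun hb ↦ ⟨fun h ↦ ⟨h 1 hb, h 2⟩, fun ⟨ha, h9⟩ k hk ↦ ?_⟩
  match k with
  | 0 => simp
  | 1 => exact ha
  | 2 => exact h9 hk
  | k + 3 =>
    have h27 : 27 ∣ b := (pow_dvd_pow 3 (Nat.le_add_left 3 k)).trans hk
    omega

theorem three_pow_dvd_iff_sq_modEq (hb : ¬ 3 ∣ b) (k : ℕ) :
    3 ^ k ∣ b ^ 3 - a * b - b ↔ b ^ 2 ≡ a + 1 [ZMOD 3 ^ k] := by
  have hcop : IsCoprime ((3 : ℤ) ^ k) b :=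
    (Int.prime_three.irreducible.coprime_iff_not_dvd.2 hb).pow_left
  have hfactor : b ^ 3 - a * b - b = b * (b ^ 2 - (a + 1)) := by ring
  rw [hfactor, Int.modEq_comm, Int.modEq_iff_dvd]
  exact ⟨hcop.dvd_of_dvd_mul_left, (Dvd.dvd.mul_left · b)⟩

theorem sq_modEq_one_of_not_three_dvd (hb : ¬ 3 ∣ b) : b ^ 2 ≡ 1 [ZMOD 3] :=
  Int.ModEq.pow_card_sub_one_eq_one Nat.prime_three
    (Int.prime_three.irreducible.coprime_iff_not_dvd.2 hb).symm

variable {S : Type*} [CommRing S] [IsDedekindDomain S] [Module.Free ℤ S] [Module.Finite ℤ S]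
  {α : S} {P : Ideal S}

theorem minpoly_sub_intCast_eq_shiftedCubic (hα : minpoly ℤ α = X ^ 3 - C a * X - C b) (t : ℤ) :
    minpoly ℤ (α - t) = (shiftedCubic a b t).toPoly := by
  rw [← eq_intCast (algebraMap ℤ S), minpoly_sub_algebraMap (Algebra.IsIntegral.isIntegral α), hα,
    comp_X_add_C_eq_shiftedCubic]

theorem IsTotallyRamifiedPrime.pow_dvd_of_sub_mem_pow {p m : ℕ} (h : IsTotallyRamifiedPrime p P)
    (hp : p ≠ 0) (hrank : finrank ℤ S = 3) (hα : minpoly ℤ α = X ^ 3 - C a * X - C b) {t : ℤ}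
    (ht : α - t ∈ P ^ m) :
    (p : ℤ) ^ (m * 2) ∣ (3 * t ^ 2 - a) ^ 3 ∧ (p : ℤ) ^ m ∣ (3 * t) ^ 3 := by
  have hmin := minpoly_sub_intCast_eq_shiftedCubic hα t
  have hdeg : (minpoly ℤ (α - t)).natDegree = finrank ℤ S := by
    rw [hmin, hrank]
    exact Cubic.natDegree_of_a_ne_zero one_ne_zero
  have hseg := h.isAboveSegment_minpoly hp ht hdeg
  rw [hmin, isAboveSegment_toPoly_iff rfl] at hseg
  exact hseg.2

theorem IsTotallyRamifiedPrime.three_dvd_linearCoeff (h : IsTotallyRamifiedPrime 3 P)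
    (hrank : finrank ℤ S = 3) (hα : minpoly ℤ α = X ^ 3 - C a * X - C b) : 3 ∣ a := by
  obtain ⟨t, ht⟩ := exists_sub_intCast_mem_of_prime_absNorm (h.absNorm_eq ▸ Nat.prime_three) α
  have hdvd : 3 ∣ (3 * t ^ 2 - a) ^ 3 :=
    (dvd_pow_self 3 two_ne_zero).trans
      (h.pow_dvd_of_sub_mem_pow three_ne_zero hrank hα (m := 1) (by simpa)).1
  exact (dvd_sub_right (dvd_mul_right 3 _)).1 (Int.prime_three.dvd_of_dvd_pow hdvd)

theorem IsTotallyRamifiedPrime.sub_mem_pow_of_pow_dvd {p m : ℕ} (h : IsTotallyRamifiedPrime p P)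
    (hp : p.Prime) (hα : minpoly ℤ α = X ^ 3 - C a * X - C b) {t : ℤ}
    (ht : (p : ℤ) ^ m ∣ t ^ 3 - a * t - b) : α - t ∈ P ^ m := by
  apply h.mem_pow_of_pow_dvd_minpoly_coeff_zero hp
  rw [minpoly_sub_intCast_eq_shiftedCubic hα, Cubic.coeff_eq_d]
  exact ht

theorem IsTotallyRamifiedPrime.nine_dvd_three_mul_sq_sub (h : IsTotallyRamifiedPrime 3 P)
    (hrank : finrank ℤ S = 3) (hα : minpoly ℤ α = X ^ 3 - C a * X - C b) {t : ℤ}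
    (ht : 9 ∣ t ^ 3 - a * t - b) : 9 ∣ 3 * t ^ 2 - a :=
  pow_succ_dvd_of_pow_dvd_pow Int.prime_three (j := 1) (by decide)
    (h.pow_dvd_of_sub_mem_pow three_ne_zero hrank hα
      (h.sub_mem_pow_of_pow_dvd Nat.prime_three hα (m := 2) ht)).1

theorem IsTotallyRamifiedPrime.three_dvd_of_sub_mem_pow_four (h : IsTotallyRamifiedPrime 3 P)
    (hrank : finrank ℤ S = 3) (hα : minpoly ℤ α = X ^ 3 - C a * X - C b) {t : ℤ}
    (ht : α - t ∈ P ^ 4) : 3 ∣ t := by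
  have h9 : (3 : ℤ) ^ 2 ∣ 3 * t := pow_succ_dvd_of_pow_dvd_pow Int.prime_three (j := 1) (by decide)
    (h.pow_dvd_of_sub_mem_pow three_ne_zero hrank hα ht).2
  omega

theorem IsTotallyRamifiedPrime.three_dvd_of_twentySeven_dvd (h : IsTotallyRamifiedPrime 3 P)
    (hrank : finrank ℤ S = 3) (hα : minpoly ℤ α = X ^ 3 - C a * X - C b) {t : ℤ}
    (ht : 27 ∣ t ^ 3 - a * t - b) : 3 ∣ t := by
  have hspan := ((isTotallyRamifiedPrime_three_iff hrank).1 h).2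
  have hmem : α - t ∈ Ideal.span {(3 : S)} :=
    hspan ▸ h.sub_mem_pow_of_pow_dvd Nat.prime_three hα (m := 3) ht
  obtain ⟨γ, hγ⟩ := Ideal.mem_span_singleton.1 hmem
  obtain ⟨s, hs⟩ := exists_sub_intCast_mem_of_prime_absNorm (h.absNorm_eq ▸ Nat.prime_three) γ
  have hmem_four : α - ((t + 3 * s : ℤ) : S) ∈ P ^ 4 := by
    have : α - ((t + 3 * s : ℤ) : S) = 3 * (γ - s) := by
      push_cast
      linear_combination hγ
    rw [this, pow_succ]
    exact Ideal.mul_mem_mul (hspan ▸ Ideal.mem_span_singleton_self 3) hs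
  have := h.three_dvd_of_sub_mem_pow_four hrank hα hmem_four
  omega

theorem exists_isTotallyRamifiedPrime_three (hrank : finrank ℤ S = 3)
    (hα : minpoly ℤ α = X ^ 3 - C a * X - C b) {t : ℤ} {m : ℕ} (hcop : Nat.Coprime 3 m) (hm : m ≤ 3)
    (hc : 3 ^ m ∣ 3 * t ^ 2 - a) (hd : 3 ^ m ∣ t ^ 3 - a * t - b)
    (hd' : ¬ 3 ^ (m + 1) ∣ t ^ 3 - a * t - b) : ∃ P : Ideal S, IsTotallyRamifiedPrime 3 P := by
  have hdeg : (shiftedCubic a b t).toPoly.natDegree = 3 := Cubic.natDegree_of_a_ne_zero one_ne_zero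
  have hroot : aeval (α - t) (shiftedCubic a b t).toPoly = 0 := by
    rw [← minpoly_sub_intCast_eq_shiftedCubic hα, minpoly.aeval]
  have hseg : IsAboveSegment 3 m (shiftedCubic a b t).toPoly := by
    refine (isAboveSegment_toPoly_iff rfl).2 ⟨hd, ?_, ?_⟩
    · rw [pow_mul]
      exact (pow_dvd_pow _ (by decide)).trans (pow_dvd_pow_of_dvd hc 3)
    · exact (pow_dvd_pow 3 hm).trans (pow_dvd_pow_of_dvd (dvd_mul_right 3 t) 3)
  refine exists_isTotallyRamifiedPrime_of_isAboveSegment Nat.prime_three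
    (Cubic.monic_of_a_eq_one rfl) (hdeg.trans hrank.symm) hroot (by rwa [hdeg]) hseg ?_
  rwa [Cubic.coeff_eq_d]

/-- The disjunction of the conditions (LN-1), (LN-2), (LN-3). -/
def LlorenteNartCondition (a b : ℤ) : Prop :=
  (1 ≤ emultiplicity (3 : ℤ) b ∧ emultiplicity (3 : ℤ) b ≤ emultiplicity (3 : ℤ) a) ∨
  (3 ∣ a ∧ ¬ a ≡ 3 [ZMOD 9] ∧ ¬ (3 ∣ b) ∧ ¬ b ^ 2 ≡ a + 1 [ZMOD 9]) ∨
  (a ≡ 3 [ZMOD 9] ∧ ¬ (3 ∣ b) ∧ ¬ b ^ 2 ≡ a + 1 [ZMOD 27])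

theorem IsTotallyRamifiedPrime.llorenteNartCondition (h : IsTotallyRamifiedPrime 3 P)
    (hval : ¬ 9 ∣ a ∨ ¬ 27 ∣ b) (hrank : finrank ℤ S = 3)
    (hα : minpoly ℤ α = X ^ 3 - C a * X - C b) : LlorenteNartCondition a b := by
  have ha := h.three_dvd_linearCoeff hrank hα
  by_cases hb : 3 ∣ b
  · refine .inl ((one_le_emultiplicity_three_and_le_iff hval).2 ⟨hb, ha, fun h9 ↦ ?_⟩)
    simpa using h.nine_dvd_three_mul_sq_sub hrank hα (t := 0) (by simpa using h9)
  · by_cases ha3 : a ≡ 3 [ZMOD 9]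
    · refine .inr (.inr ⟨ha3, hb, fun hmod ↦ hb ?_⟩)
      exact h.three_dvd_of_twentySeven_dvd hrank hα ((three_pow_dvd_iff_sq_modEq hb 3).2 hmod)
    · refine .inr (.inl ⟨ha, ha3, hb, fun hmod ↦ ha3 ?_⟩)
      have h9 := h.nine_dvd_three_mul_sq_sub hrank hα ((three_pow_dvd_iff_sq_modEq hb 2).2 hmod)
      have hsq := sq_modEq_one_of_not_three_dvd hb
      unfold Int.ModEq at hsq ⊢
      omega

theorem exists_isTotallyRamifiedPrime_three_of_not_sq_modEq_nine (hrank : finrank ℤ S = 3)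
    (hα : minpoly ℤ α = X ^ 3 - C a * X - C b) (ha : 3 ∣ a) (hb : ¬ 3 ∣ b)
    (h9 : ¬ b ^ 2 ≡ a + 1 [ZMOD 9]) : ∃ P : Ideal S, IsTotallyRamifiedPrime 3 P := by
  have hmod : b ^ 2 ≡ a + 1 [ZMOD 3] := by
    have := sq_modEq_one_of_not_three_dvd hb
    unfold Int.ModEq at this ⊢
    omega
  exact exists_isTotallyRamifiedPrime_three hrank hα (t := b) (m := 1) (by decide) (by decide)
    (dvd_sub (dvd_mul_right 3 _) ha) ((three_pow_dvd_iff_sq_modEq hb 1).2 hmod)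
    (mt (three_pow_dvd_iff_sq_modEq hb 2).1 h9)

theorem LlorenteNartCondition.exists_isTotallyRamifiedPrime (h : LlorenteNartCondition a b)
    (hval : ¬ 9 ∣ a ∨ ¬ 27 ∣ b) (hrank : finrank ℤ S = 3)
    (hα : minpoly ℤ α = X ^ 3 - C a * X - C b) : ∃ P : Ideal S, IsTotallyRamifiedPrime 3 P := by
  rcases h with hLN1 | ⟨ha, -, hb, h9⟩ | ⟨ha, hb, h27⟩
  · obtain ⟨hb, ha, hba⟩ := (one_le_emultiplicity_three_and_le_iff hval).1 hLN1
    by_cases h9 : 9 ∣ b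
    · have h27 : ¬ 27 ∣ b := hval.resolve_left (not_not.2 (hba h9))
      exact exists_isTotallyRamifiedPrime_three hrank hα (t := 0) (m := 2) (by decide) (by decide)
        (by simpa using hba h9) (by simpa using h9) (by simpa using h27)
    · exact exists_isTotallyRamifiedPrime_three hrank hα (t := 0) (m := 1) (by decide) (by decide)
        (by simpa using ha) (by simpa using hb) (by simpa using h9)
  · exact exists_isTotallyRamifiedPrime_three_of_not_sq_modEq_nine hrank hα ha hb h9
  · unfold Int.ModEq at ha
    by_cases h9 : b ^ 2 ≡ a + 1 [ZMOD 9]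
    · have hc : 9 ∣ 3 * b ^ 2 - a := by
        have := sq_modEq_one_of_not_three_dvd hb
        unfold Int.ModEq at this
        omega
      exact exists_isTotallyRamifiedPrime_three hrank hα (m := 2) (by decide) (by decide) hc
        ((three_pow_dvd_iff_sq_modEq hb 2).2 h9) (mt (three_pow_dvd_iff_sq_modEq hb 3).1 h27)
    · exact exists_isTotallyRamifiedPrime_three_of_not_sq_modEq_nine hrank hα (by omega) hb h9

end Cubic

open NumberField in
theorem exists_ringOfIntegers_minpoly_eq {K : Type*} [Field K] [NumberField K] {f : ℤ[X]}
    (hf : f.Monic) (hirr : Irreducible (f.map (algebraMap ℤ ℚ))) {θ : K} (hθ : aeval θ f = 0) :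
    ∃ α : 𝓞 K, minpoly ℤ α = f := by
  have hint : IsIntegral ℤ θ := ⟨f, hf, hθ⟩
  let α : 𝓞 K := ⟨θ, hint⟩
  refine ⟨α, map_injective (algebraMap ℤ ℚ) Int.cast_injective ?_⟩
  rw [← minpoly.isIntegrallyClosed_eq_field_fractions ℚ K (Algebra.IsIntegral.isIntegral α)]
  exact (minpoly.eq_of_irreducible_of_monic hirr (by rwa [aeval_map_algebraMap]) (hf.map _)).symm

/-- Llorente–Nart criterion: let `g(X) = X³ - aX - b ∈ ℤ[X]` be irreducible over `ℚ` with
`3² ∤ a` or `3³ ∤ b`, let `θ` be a root of `g` and `K = ℚ(θ)`.  Then `3` is totally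
ramified in `K/ℚ` if and only if one of (LN-1), (LN-2), (LN-3) holds. -/
theorem three_totally_ramified_iff_llorente_nart
    (a b : ℤ) (hirr : Irreducible (X ^ 3 - C (a : ℚ) * X - C (b : ℚ)))
    (hval : ¬ ((9 : ℤ) ∣ a) ∨ ¬ ((27 : ℤ) ∣ b))
    (K : Type*) [Field K] [NumberField K] (hdeg : Module.finrank ℚ K = 3)
    (θ : K) (hθ : θ ^ 3 - (a : K) * θ - (b : K) = 0) :
    (∃ P : Ideal (NumberField.RingOfIntegers K), P.IsPrime ∧
        Ideal.span {(3 : NumberField.RingOfIntegers K)} = P ^ 3) ↔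
      (1 ≤ emultiplicity (3 : ℤ) b ∧ emultiplicity (3 : ℤ) b ≤ emultiplicity (3 : ℤ) a) ∨
      (3 ∣ a ∧ ¬ a ≡ 3 [ZMOD 9] ∧ ¬ (3 ∣ b) ∧ ¬ b ^ 2 ≡ a + 1 [ZMOD 9]) ∨
      (a ≡ 3 [ZMOD 9] ∧ ¬ (3 ∣ b) ∧ ¬ b ^ 2 ≡ a + 1 [ZMOD 27]) := by
  let f : ℤ[X] := X ^ 3 - C a * X - C b
  have hf : f.Monic := by unfold f; monicity!
  have hfmap : f.map (algebraMap ℤ ℚ) = X ^ 3 - C (a : ℚ) * X - C (b : ℚ) := by simp [f]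
  obtain ⟨α, hα⟩ := exists_ringOfIntegers_minpoly_eq hf (hfmap ▸ hirr) (θ := θ) (by simpa [f])
  have hrank : Module.finrank ℤ (NumberField.RingOfIntegers K) = 3 :=
    (NumberField.RingOfIntegers.rank K).trans hdeg
  simp only [← isTotallyRamifiedPrime_three_iff hrank]
  exact ⟨fun ⟨P, hP⟩ ↦ hP.llorenteNartCondition hval hrank hα,
    fun h ↦ LlorenteNartCondition.exists_isTotallyRamifiedPrime h hval hrank hα⟩
end
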